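/- arXiv:1401.6252 — 3 statements merged into one kernel-verified Lean document; each statement's English description precedes it below -/
import Mathlib

section
/- Let k be a positive integer and let C be a self-dual Z4-code of length 24k+16 with minimum Lee weight 8k+8. Let D be a binary self-dual code containing the residue code C^(1). If D is singly even, then D is an s-extremal self-dual code with minimum Hamming weight 4k+4. If D is doubly even, then D is extremal, i.e., its minimum Hamming weight is 4k+4 = 4⌊(24k+16)/24⌋ + 4. -/
open Finset

namespace Z4Note

variable {ι : Type*} [Fintype ι]

/-- Hamming weight of a binary vector. -/
def hWt (x : ι → ZMod 2) : ℕ := (Finset.univ.filter fun i => x i ≠ 0).card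

/-- Lee value of an element of `ZMod 4`:  0 ↦ 0, 1 ↦ 1, 2 ↦ 2, 3 ↦ 1. -/
def leeVal (a : ZMod 4) : ℕ := min a.val (4 - a.val)

/-- Lee weight `n₁(x) + 2 n₂(x) + n₃(x)`. -/
def leeWt (x : ι → ZMod 4) : ℕ := ∑ i, leeVal (x i)

/-- Euclidean weight `n₁(x) + 4 n₂(x) + n₃(x)`. -/
def eucWt (x : ι → ZMod 4) : ℕ := ∑ i, (leeVal (x i)) ^ 2

/-- Number of coordinates of `x` equal to `a`. -/
def nCount (a : ZMod 4) (x : ι → ZMod 4) : ℕ := (Finset.univ.filter fun i => x i = a).card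

/-- Dual of a `ZMod 4`-code (as a set), w.r.t. the standard inner product. -/
def dualZ4 (C : Set (ι → ZMod 4)) : Set (ι → ZMod 4) :=
  {x | ∀ y ∈ C, ∑ i, x i * y i = 0}

/-- Dual of a binary code (as a set), w.r.t. the standard inner product. -/
def dual2 (C : Set (ι → ZMod 2)) : Set (ι → ZMod 2) :=
  {x | ∀ y ∈ C, ∑ i, x i * y i = 0}

/-- A `ZMod 4`-code is self-dual if it equals its dual. -/
def SelfDualZ4 (C : Submodule (ZMod 4) (ι → ZMod 4)) : Prop :=
  (C : Set (ι → ZMod 4)) = dualZ4 (C : Set (ι → ZMod 4))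

/-- A binary code is self-dual if it equals its dual. -/
def SelfDual2 (D : Submodule (ZMod 2) (ι → ZMod 2)) : Prop :=
  (D : Set (ι → ZMod 2)) = dual2 (D : Set (ι → ZMod 2))

/-- Coordinatewise reduction modulo 2. -/
def res2 (x : ι → ZMod 4) : ι → ZMod 2 :=
  fun i => ZMod.castHom (by norm_num : (2:ℕ) ∣ 4) (ZMod 2) (x i)

/-- The residue code `C⁽¹⁾ = {c mod 2 : c ∈ C}`. -/
def residue (C : Set (ι → ZMod 4)) : Set (ι → ZMod 2) := res2 '' C

/-- Minimum Lee weight among nonzero codewords. -/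
noncomputable def minLee (C : Set (ι → ZMod 4)) : ℕ := sInf {d | ∃ x ∈ C, x ≠ 0 ∧ leeWt x = d}

/-- Minimum Euclidean weight among nonzero codewords. -/
noncomputable def minEuc (C : Set (ι → ZMod 4)) : ℕ := sInf {d | ∃ x ∈ C, x ≠ 0 ∧ eucWt x = d}

/-- Minimum Hamming weight among nonzero codewords of a binary code. -/
noncomputable def minHam (C : Set (ι → ZMod 2)) : ℕ := sInf {d | ∃ x ∈ C, x ≠ 0 ∧ hWt x = d}

/-- A binary code is doubly even if all weights are divisible by 4. -/
def DoublyEven (C : Set (ι → ZMod 2)) : Prop := ∀ x ∈ C, 4 ∣ hWt x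

/-- A binary code is singly even if some codeword has weight not divisible by 4. -/
def SinglyEven (C : Set (ι → ZMod 2)) : Prop := ∃ x ∈ C, ¬ 4 ∣ hWt x

/-- A self-dual `ZMod 4`-code is Type II if all Euclidean weights are divisible by 8. -/
def TypeII (C : Set (ι → ZMod 4)) : Prop := ∀ x ∈ C, 8 ∣ eucWt x

/-- The doubly even subcode of a binary code. -/
def evenSubcode (D : Set (ι → ZMod 2)) : Set (ι → ZMod 2) := {x ∈ D | 4 ∣ hWt x}

/-- The shadow `S = D₀^⊥ \ D` of a binary code. -/
def shadow (D : Set (ι → ZMod 2)) : Set (ι → ZMod 2) := dual2 (evenSubcode D) \ D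

/-- A binary singly even self-dual code is s-extremal if equality holds in the
Bachoc–Gaborit bound relating the minimum weight of the code and of its shadow. -/
def SExtremal (D : Submodule (ZMod 2) (ι → ZMod 2)) : Prop :=
  SelfDual2 D ∧ SinglyEven (D : Set (ι → ZMod 2)) ∧
  ((¬ (Fintype.card ι % 24 = 22 ∧
        minHam (D : Set (ι → ZMod 2)) = 4 * (Fintype.card ι / 24) + 6)) →
      minHam (shadow (D : Set (ι → ZMod 2))) + 2 * minHam (D : Set (ι → ZMod 2)) =
        Fintype.card ι / 2 + 4) ∧
  ((Fintype.card ι % 24 = 22 ∧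
        minHam (D : Set (ι → ZMod 2)) = 4 * (Fintype.card ι / 24) + 6) →
      minHam (shadow (D : Set (ι → ZMod 2))) + 2 * minHam (D : Set (ι → ZMod 2)) =
        Fintype.card ι / 2 + 8)

/-- Equivalence of `ZMod 4`-codes: coordinate permutation together with sign changes. -/
def Z4Equiv (C C' : Set (ι → ZMod 4)) : Prop :=
  ∃ σ : Equiv.Perm ι, ∃ ε : ι → ZMod 4, (∀ i, ε i = 1 ∨ ε i = -1) ∧
    C' = (fun x => fun i => ε i * x (σ i)) '' C

/-- Covering radius of a binary code. -/
noncomputable def covRad (C : Set (ι → ZMod 2)) : ℕ :=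
  sInf {R | ∀ v : ι → ZMod 2, ∃ c ∈ C, hWt (v - c) ≤ R}

/-- Entry `(i,j)` of the circulant matrix with first row `r`. -/
def circEntry {m : ℕ} (r : Fin m → ZMod 4) (i j : Fin m) : ZMod 4 := r (j - i)

/-- Entry `(i,j)` of the negacirculant matrix with first row `r`. -/
def negaEntry {m : ℕ} (r : Fin m → ZMod 4) (i j : Fin m) : ZMod 4 :=
  if i.val ≤ j.val then r (j - i) else - r (j - i)

/-- The bordered part `B` of the generator matrix of a bordered double circulant code. -/
def bdcB {m : ℕ} (α β γ : ZMod 4) (r : Fin m → ZMod 4) :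
    Fin (m+1) → Fin (m+1) → ZMod 4 :=
  Fin.cases (Fin.cases α fun _ => β) (fun i' => Fin.cases γ fun j' => circEntry r i' j')

/-- Row `i` of the generator matrix `(I | B)` of a bordered double circulant code. -/
def bdcRow {m : ℕ} (α β γ : ZMod 4) (r : Fin m → ZMod 4) (i : Fin (m+1)) :
    (Fin (m+1) ⊕ Fin (m+1)) → ZMod 4 :=
  Sum.elim (fun j => if j = i then 1 else 0) (bdcB α β γ r i)

/-- The bordered double circulant code of length `2(m+1)`. -/
def bdcCode {m : ℕ} (α β γ : ZMod 4) (r : Fin m → ZMod 4) :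
    Submodule (ZMod 4) ((Fin (m+1) ⊕ Fin (m+1)) → ZMod 4) :=
  Submodule.span (ZMod 4) (Set.range (bdcRow α β γ r))

/-- The block matrix `[[A, B], [-Bᵀ, Aᵀ]]` built from negacirculant `A`, `B`. -/
def fourNegaM {n : ℕ} (a b : Fin n → ZMod 4) :
    (Fin n ⊕ Fin n) → (Fin n ⊕ Fin n) → ZMod 4
  | Sum.inl i, Sum.inl j => negaEntry a i j
  | Sum.inl i, Sum.inr j => negaEntry b i j
  | Sum.inr i, Sum.inl j => - negaEntry b j i
  | Sum.inr i, Sum.inr j => negaEntry a j i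

/-- Row `i` of the generator matrix `(I | M)` of a four-negacirculant code. -/
def fourNegaRow {n : ℕ} (a b : Fin n → ZMod 4) (i : Fin n ⊕ Fin n) :
    ((Fin n ⊕ Fin n) ⊕ (Fin n ⊕ Fin n)) → ZMod 4 :=
  Sum.elim (fun j => if j = i then 1 else 0) (fourNegaM a b i)

/-- The four-negacirculant code of length `4n`. -/
def fourNegaCode {n : ℕ} (a b : Fin n → ZMod 4) :
    Submodule (ZMod 4) (((Fin n ⊕ Fin n) ⊕ (Fin n ⊕ Fin n)) → ZMod 4) :=
  Submodule.span (ZMod 4) (Set.range (fourNegaRow a b))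

end Z4Note
namespace Z4Aux
open Polynomial

/-- The MacWilliams substitution on polynomials of degree at most `n`. -/
noncomputable def T (n : ℕ) : ℂ[X] →ₗ[ℂ] ℂ[X] :=
  ∑ i ∈ Finset.range (n + 1),
    (Polynomial.lcoeff ℂ i).smulRight ((1 - X) ^ i * (1 + X) ^ (n - i) : ℂ[X])

lemma T_apply (n : ℕ) (p : ℂ[X]) :
    T n p = ∑ i ∈ Finset.range (n + 1), p.coeff i • ((1 - X) ^ i * (1 + X) ^ (n - i) : ℂ[X]) := by
  simp [T, LinearMap.sum_apply]

lemma T_X_pow {n i : ℕ} (h : i ≤ n) : T n (X ^ i) = (1 - X) ^ i * (1 + X) ^ (n - i) := by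
  rw [T_apply, Finset.sum_eq_single i]
  · simp
  · intro b _ hb
    simp [coeff_X_pow, hb]
  · intro hi
    simp at hi
    omega

lemma T_one (n : ℕ) : T n 1 = (1 + X) ^ n := by
  simpa using T_X_pow (Nat.zero_le n)

lemma T_mul {a b : ℕ} {p q : ℂ[X]} (hp : p.natDegree ≤ a) (hq : q.natDegree ≤ b) :
    T (a + b) (p * q) = T a p * T b q := by
  have hp' := as_sum_range_C_mul_X_pow' (n := a + 1) (p := p) (by omega)
  have hq' := as_sum_range_C_mul_X_pow' (n := b + 1) (p := q) (by omega)
  conv_lhs => rw [hp', hq']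
  rw [Finset.sum_mul_sum, map_sum, T_apply a p, T_apply b q, Finset.sum_mul_sum]
  refine Finset.sum_congr rfl fun i hi => ?_
  rw [map_sum]
  refine Finset.sum_congr rfl fun j hj => ?_
  simp only [Finset.mem_range] at hi hj
  have : (C (p.coeff i) * X ^ i * (C (q.coeff j) * X ^ j) : ℂ[X])
      = (p.coeff i * q.coeff j) • X ^ (i + j) := by
    rw [smul_eq_C_mul, C_mul]; ring
  rw [this, map_smul, T_X_pow (by omega), show a + b - (i + j) = (a - i) + (b - j) by omega]
  simp only [smul_eq_C_mul, C_mul]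
  ring

lemma T_pow {a : ℕ} {p : ℂ[X]} (hp : p.natDegree ≤ a) (m : ℕ) :
    T (a * m) (p ^ m) = T a p ^ m := by
  induction m with
  | zero => simp [T_one]
  | succ m ih =>
    rw [pow_succ, mul_add, mul_one, T_mul _ hp, ih, pow_succ]
    calc (p ^ m).natDegree ≤ m * p.natDegree := natDegree_pow_le
      _ ≤ a * m := by rw [mul_comm]; exact Nat.mul_le_mul_right _ hp

lemma T_T {n : ℕ} {p : ℂ[X]} (hp : p.natDegree ≤ n) : T n (T n p) = (2 ^ n : ℂ) • p := by
  rw [T_apply n p, map_sum]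
  conv_rhs => rw [as_sum_range_C_mul_X_pow' (n := n + 1) (p := p) (by omega), Finset.smul_sum]
  refine Finset.sum_congr rfl fun i hi => ?_
  simp only [Finset.mem_range] at hi
  have h1 : (1 - X : ℂ[X]).natDegree ≤ 1 := by compute_degree
  have h2 : (1 + X : ℂ[X]).natDegree ≤ 1 := by compute_degree
  have e1 : T 1 (1 - X) = C 2 * X := by
    rw [map_sub, T_one]
    have := T_X_pow (le_refl 1)
    rw [pow_one] at this
    rw [this]; simp only [map_ofNat]; ring
  have e2 : T 1 (1 + X) = C 2 := by
    rw [map_add, T_one]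
    have := T_X_pow (le_refl 1)
    rw [pow_one] at this
    rw [this]; simp only [map_ofNat]; ring
  have key : T n ((1 - X) ^ i * (1 + X) ^ (n - i)) = (C 2 * X) ^ i * (C 2) ^ (n - i) := by
    obtain ⟨m, rfl⟩ : ∃ m, n = i + m := ⟨n - i, by omega⟩
    rw [show i + m - i = m by omega, T_mul]
    · have a1 := T_pow h1 i
      have a2 := T_pow h2 m
      rw [one_mul] at a1 a2
      rw [a1, a2, e1, e2]
    · exact natDegree_pow_le.trans (by nlinarith)
    · exact natDegree_pow_le.trans (by nlinarith)
  rw [map_smul, key]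
  simp only [smul_eq_C_mul]
  have : (C (2 ^ n) : ℂ[X]) = C 2 ^ i * C 2 ^ (n - i) := by
    rw [← pow_add, show i + (n - i) = n by omega, C_pow]
  rw [this]; ring

/-- Invariance of a polynomial, seen as a binary form of degree `2 m`. -/
structure Inv (m : ℕ) (p : ℂ[X]) : Prop where
  deg : p.natDegree ≤ 2 * m
  refl : reflect (2 * m) p = p
  mac : T (2 * m) p = (2 ^ m : ℂ) • p

lemma Inv.sub {m : ℕ} {p q : ℂ[X]} (hp : Inv m p) (hq : Inv m q) : Inv m (p - q) where
  deg := (natDegree_sub_le _ _).trans (max_le hp.deg hq.deg)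
  refl := by
    have := reflect_sub p q (2 * m)
    rw [this, hp.refl, hq.refl]
  mac := by rw [map_sub, hp.mac, hq.mac, smul_sub]

lemma Inv.C_mul {m : ℕ} {p : ℂ[X]} (hp : Inv m p) (a : ℂ) : Inv m (C a * p) where
  deg := (natDegree_C_mul_le _ _).trans hp.deg
  refl := by rw [reflect_C_mul, hp.refl]
  mac := by rw [← smul_eq_C_mul, map_smul, hp.mac, smul_comm]

lemma Inv.mul {m l : ℕ} {p q : ℂ[X]} (hp : Inv m p) (hq : Inv l q) : Inv (m + l) (p * q) where
  deg := natDegree_mul_le.trans (by have := hp.deg; have := hq.deg; omega)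
  refl := by rw [mul_add, reflect_mul _ _ hp.deg hq.deg, hp.refl, hq.refl]
  mac := by
    rw [mul_add, T_mul hp.deg hq.deg, hp.mac, hq.mac]
    simp only [smul_eq_C_mul, pow_add, map_mul]; ring

lemma Inv.one : Inv 0 1 where
  deg := by simp
  refl := by rw [← C_1, mul_zero, reflect_C]; simp
  mac := by simp [T_one]

lemma Inv.pow {m : ℕ} {p : ℂ[X]} (hp : Inv m p) (l : ℕ) : Inv (m * l) (p ^ l) := by
  induction l with
  | zero => simpa using Inv.one
  | succ l ih => rw [pow_succ, mul_add, mul_one]; exact ih.mul hp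

lemma Inv.cancel {m l : ℕ} {p q : ℂ[X]} (hp : Inv m p) (hp0 : p ≠ 0) (hq : q.natDegree ≤ 2 * l)
    (h : Inv (m + l) (p * q)) : Inv l q where
  deg := hq
  refl := by
    have := h.refl
    rw [mul_add, reflect_mul _ _ hp.deg hq, hp.refl] at this
    exact mul_left_cancel₀ hp0 this
  mac := by
    have := h.mac
    rw [mul_add, T_mul hp.deg hq, hp.mac] at this
    apply mul_left_cancel₀ (show C (2 ^ m : ℂ) * p ≠ 0 from mul_ne_zero (by simp) hp0)
    rw [← smul_eq_C_mul, this]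
    simp only [smul_eq_C_mul, pow_add, map_mul]; ring

/-- If an invariant form is divisible by `X^s`, then it is divisible by `(1 - X)^s`. -/
lemma T_dvd {n s : ℕ} {p : ℂ[X]} (hp : p.natDegree ≤ n) (hs : X ^ s ∣ p) (hsn : s ≤ n) :
    (1 - X) ^ s ∣ T n p := by
  obtain ⟨q, rfl⟩ := hs
  by_cases hq : q = 0
  · simp [hq]
  have : q.natDegree ≤ n - s := by
    rw [natDegree_mul (by simp) hq, natDegree_X_pow] at hp; omega
  have h := T_mul (a := s) (b := n - s) (p := (X ^ s : ℂ[X])) (q := q) (by simp) this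
  rw [show s + (n - s) = n by omega] at h
  rw [h, T_X_pow le_rfl]
  simp

lemma Inv.dvd {m s : ℕ} {p : ℂ[X]} (hp : Inv m p) (hs : X ^ s ∣ p) (hsn : s ≤ 2 * m) :
    (1 - X) ^ s ∣ p := by
  have := T_dvd hp.deg hs hsn
  rw [hp.mac, smul_eq_C_mul] at this
  exact (IsUnit.dvd_mul_left (isUnit_C.2 (by simp))).1 this

lemma Inv.deg_le {m s : ℕ} {p : ℂ[X]} (hp : Inv m p) (hs : X ^ s ∣ p) (hsn : s ≤ 2 * m) :
    p.natDegree ≤ 2 * m - s := by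
  rw [natDegree_le_iff_coeff_eq_zero]
  intro N hN
  by_cases h : N ≤ 2 * m
  · rw [← hp.refl, coeff_reflect, revAt_le h]
    rw [X_pow_dvd_iff] at hs
    exact hs _ (by omega)
  · exact coeff_eq_zero_of_natDegree_lt (hp.deg.trans_lt (by omega))

/-- Gleason-type induction. -/
lemma gleason_induction (P : ℕ → ℂ[X] → Prop) (f g : ℂ[X]) (e : ℕ) (he : 0 < e)
    (hf0 : f.coeff 0 = 1)
    (hsub : ∀ m p a, P m p → P m (p - C a * f ^ m))
    (hdiv : ∀ m p, P m p → p.coeff 0 = 0 → p = 0 ∨ (e ≤ m ∧ ∃ q, P (m - e) q ∧ p = g * q)) :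
    ∀ m p, P m p → ∃ a : ℕ → ℂ,
      p = ∑ j ∈ Finset.range (m / e + 1), C (a j) * f ^ (m - e * j) * g ^ j := by
  intro m
  induction m using Nat.strong_induction_on with
  | _ m ih =>
  intro p hp
  have h1 := hsub m p (p.coeff 0) hp
  have h2 : (p - C (p.coeff 0) * f ^ m).coeff 0 = 0 := by
    rw [coeff_sub, coeff_C_mul, coeff_zero_eq_eval_zero (f ^ m), eval_pow,
      ← coeff_zero_eq_eval_zero, hf0]
    simp
  rcases hdiv m _ h1 h2 with h | ⟨hem, q, hq, hpq⟩
  · refine ⟨fun j => if j = 0 then p.coeff 0 else 0, ?_⟩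
    rw [Finset.sum_eq_single 0]
    · simpa using sub_eq_zero.1 h
    · intro j _ hj
      simp [hj]
    · simp
  · obtain ⟨b, hb⟩ := ih (m - e) (by omega) q hq
    refine ⟨fun j => if j = 0 then p.coeff 0 else b (j - 1), ?_⟩
    have hme : m / e = (m - e) / e + 1 := by
      rw [Nat.div_eq_sub_div he hem]
    rw [Finset.sum_range_succ', hme]
    simp only [Nat.add_eq_zero_iff, one_ne_zero, and_false, if_false, if_true, Nat.add_sub_cancel,
      mul_zero, pow_zero, mul_one, Nat.sub_zero]
    rw [sub_eq_iff_eq_add] at hpq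
    refine hpq.trans ?_
    congr 1
    rw [hb, Finset.mul_sum]
    refine Finset.sum_congr rfl fun j _ => ?_
    rw [show m - e * (j + 1) = m - e - e * j by rw [mul_add, mul_one]; omega]
    ring

end Z4Aux

namespace Z4Aux
open Polynomial

lemma inv_f1 : Inv 1 (1 + X ^ 2 : ℂ[X]) where
  deg := by compute_degree
  refl := by
    rw [← pow_zero (X : ℂ[X]), reflect_add, reflect_monomial, reflect_monomial]
    simp [revAt_le]; ring
  mac := by
    rw [map_add, T_one, T_X_pow (by norm_num), smul_eq_C_mul]
    simp only [pow_one, map_ofNat]; ring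

lemma reflect_smul' (N : ℕ) (a : ℂ) (p : ℂ[X]) : reflect N (a • p) = a • reflect N p := by
  simp [smul_eq_C_mul]

lemma reflect_X_pow' {N n m : ℕ} (h : n + m = N) : reflect N (X ^ n : ℂ[X]) = X ^ m := by
  rw [reflect_monomial, revAt_le (by omega)]; congr 1; omega

lemma inv_g1 : Inv 4 (X ^ 2 * (1 - X ^ 2) ^ 2 : ℂ[X]) := by
  have e : (X ^ 2 * (1 - X ^ 2) ^ 2 : ℂ[X]) = X ^ 2 + (-2 : ℂ) • X ^ 4 + X ^ 6 := by
    simp only [smul_eq_C_mul, map_neg, map_ofNat]; ring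
  refine ⟨?_, ?_, ?_⟩
  · compute_degree!
  · rw [e, reflect_add, reflect_add, reflect_smul', reflect_X_pow' (m := 6) rfl,
      reflect_X_pow' (m := 4) rfl, reflect_X_pow' (m := 2) rfl]
    ring
  · rw [e]
    simp only [map_add, map_smul]
    rw [T_X_pow (by norm_num), T_X_pow (by norm_num), T_X_pow (by norm_num)]
    simp only [smul_eq_C_mul, map_neg, map_ofNat, map_pow]
    norm_num
    ring

lemma inv_f2 : Inv 4 (1 + 14 * X ^ 4 + X ^ 8 : ℂ[X]) := by
  have e : (1 + 14 * X ^ 4 + X ^ 8 : ℂ[X]) = X ^ 0 + (14 : ℂ) • X ^ 4 + X ^ 8 := by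
    simp only [smul_eq_C_mul, map_neg, map_ofNat]; ring
  refine ⟨?_, ?_, ?_⟩
  · rw [e]; compute_degree
  · rw [e, reflect_add, reflect_add, reflect_smul', reflect_X_pow' (m := 8) rfl,
      reflect_X_pow' (m := 4) rfl, reflect_X_pow' (m := 0) rfl]
    ring
  · rw [e]
    simp only [map_add, map_smul]
    rw [T_X_pow (by norm_num), T_X_pow (by norm_num), T_X_pow (by norm_num)]
    simp only [smul_eq_C_mul, map_neg, map_ofNat, map_pow]
    norm_num
    ring

lemma inv_g2 : Inv 12 (X ^ 4 * (1 - X ^ 4) ^ 4 : ℂ[X]) := by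
  have e : (X ^ 4 * (1 - X ^ 4) ^ 4 : ℂ[X]) = X ^ 4 + (-4 : ℂ) • X ^ 8 + (6 : ℂ) • X ^ 12
      + (-4 : ℂ) • X ^ 16 + X ^ 20 := by
    simp only [smul_eq_C_mul, map_neg, map_ofNat]; ring
  refine ⟨?_, ?_, ?_⟩
  · compute_degree!
  · rw [e, reflect_add, reflect_add, reflect_add, reflect_add, reflect_smul', reflect_smul',
      reflect_smul', reflect_X_pow' (m := 20) rfl,
      reflect_X_pow' (m := 16) rfl, reflect_X_pow' (m := 12) rfl, reflect_X_pow' (m := 8) rfl,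
      reflect_X_pow' (m := 4) rfl]
    ring
  · rw [e]
    simp only [map_add, map_smul]
    rw [T_X_pow (by norm_num), T_X_pow (by norm_num), T_X_pow (by norm_num),
      T_X_pow (by norm_num), T_X_pow (by norm_num)]
    simp only [smul_eq_C_mul, map_neg, map_ofNat, map_pow]
    norm_num
    ring

lemma coeff_comp_C_mul_X (a : ℂ) (p : ℂ[X]) (i : ℕ) :
    (p.comp (C a * X)).coeff i = p.coeff i * a ^ i := by
  exact comp_C_mul_X_coeff

lemma neg_X_eq : (-X : ℂ[X]) = C (-1) * X := by simp

lemma coprime_lin {a b : ℂ} (h : a ≠ b) : IsCoprime (1 - C a * X) (1 - C b * X) := by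
  have h' : b - a ≠ 0 := sub_ne_zero.2 h.symm
  refine ⟨C (b / (b - a)), C (- a / (b - a)), ?_⟩
  have e1 : b / (b - a) + - a / (b - a) = 1 := by field_simp; ring
  have e2 : b / (b - a) * a + - a / (b - a) * b = 0 := by field_simp; ring
  calc _ = C (b / (b - a) + - a / (b - a)) - C (b / (b - a) * a + - a / (b - a) * b) * X := by
        simp only [map_add, map_mul]; ring
    _ = 1 := by rw [e1, e2]; simp

lemma coprime_X (a : ℂ) : IsCoprime (X : ℂ[X]) (1 - C a * X) :=
  ⟨C a, 1, by ring⟩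

lemma gleason1 {m : ℕ} {p : ℂ[X]} (hp : Inv m p) (hev : p.comp (-X) = p) :
    ∃ a : ℕ → ℂ, p = ∑ j ∈ Finset.range (m / 4 + 1),
      C (a j) * (1 + X ^ 2) ^ (m - 4 * j) * (X ^ 2 * (1 - X ^ 2) ^ 2) ^ j := by
  refine gleason_induction (fun m p => Inv m p ∧ p.comp (-X) = p) (1 + X ^ 2)
    (X ^ 2 * (1 - X ^ 2) ^ 2) 4 (by norm_num) (by simp) ?_ ?_ m p ⟨hp, hev⟩
  · rintro m p a ⟨h1, h2⟩
    refine ⟨h1.sub (Inv.C_mul (by simpa using inv_f1.pow m) a), ?_⟩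
    simp [h2]
  · rintro m p ⟨h1, h2⟩ h0
    by_cases hp0 : p = 0
    · exact Or.inl hp0
    right
    have hX : X ^ 2 ∣ p := by
      rw [X_pow_dvd_iff]
      intro d hd
      interval_cases d
      · exact h0
      · have := congrArg (fun q => q.coeff 1) h2
        simp only [neg_X_eq, coeff_comp_C_mul_X] at this
        linear_combination (-1/2 : ℂ) * this
    have hm : 1 ≤ m := by
      by_contra hm
      have hd := h1.deg
      rw [eq_C_of_natDegree_eq_zero (p := p) (by omega), h0] at hp0
      simp at hp0
    have hdeg := h1.deg_le hX (by omega)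
    have d1 := h1.dvd hX (by omega)
    have d2 : (1 + X) ^ 2 ∣ p := by
      obtain ⟨q, hq⟩ := d1
      refine ⟨q.comp (-X), ?_⟩
      conv_lhs => rw [← h2, hq]
      simp
    have c1 : IsCoprime (1 - X : ℂ[X]) (1 + X) := by
      simpa using coprime_lin (a := 1) (b := -1) (by norm_num)
    have c2 : IsCoprime (X : ℂ[X]) (1 - X) := by simpa using coprime_X 1
    have c3 : IsCoprime (X : ℂ[X]) (1 + X) := by simpa using coprime_X (-1)
    have d3 := (c1.pow (m := 2) (n := 2)).mul_dvd d1 d2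
    have d4 := (IsCoprime.mul_right (c2.pow (m := 2) (n := 2)) (c3.pow (m := 2) (n := 2))).mul_dvd
      hX d3
    obtain ⟨q, hq⟩ := d4
    have hq' : p = (X ^ 2 * (1 - X ^ 2) ^ 2) * q := by rw [hq]; ring
    have hg0 : (X ^ 2 * (1 - X ^ 2) ^ 2 : ℂ[X]) ≠ 0 := by
      intro h; rw [h] at hq'; simp at hq'; exact hp0 hq'
    have hq0 : q ≠ 0 := by
      rintro rfl; simp at hq'; exact hp0 hq'
    have hgd : (X ^ 2 * (1 - X ^ 2) ^ 2 : ℂ[X]).natDegree = 6 := by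
      compute_degree!
    have hd := hdeg
    rw [hq', natDegree_mul hg0 hq0, hgd] at hd
    refine ⟨by omega, q, ⟨?_, ?_⟩, hq'⟩
    · refine inv_g1.cancel hg0 (by omega) ?_
      rw [show 4 + (m - 4) = m by omega, ← hq']; exact h1
    · rw [hq'] at h2
      simp only [mul_comp, pow_comp, sub_comp, one_comp, X_comp, even_two, Even.neg_pow] at h2
      exact mul_left_cancel₀ hg0 h2

lemma gleason2 {m : ℕ} {p : ℂ[X]} (hp : Inv (4 * m) p) (hev : p.comp (C Complex.I * X) = p) :
    ∃ a : ℕ → ℂ, p = ∑ j ∈ Finset.range (m / 3 + 1),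
      C (a j) * (1 + 14 * X ^ 4 + X ^ 8) ^ (m - 3 * j) * (X ^ 4 * (1 - X ^ 4) ^ 4) ^ j := by
  have I4 : (C Complex.I ^ 4 : ℂ[X]) = 1 := by rw [← C_pow, Complex.I_pow_four]; simp
  have I2 : (C Complex.I ^ 2 : ℂ[X]) = -1 := by rw [← C_pow, Complex.I_sq]; simp
  have I8 : (C Complex.I ^ 8 : ℂ[X]) = 1 := by
    rw [show 8 = 4 * 2 from rfl, pow_mul, I4]; simp
  refine gleason_induction (fun m p => Inv (4 * m) p ∧ p.comp (C Complex.I * X) = p)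
    (1 + 14 * X ^ 4 + X ^ 8)
    (X ^ 4 * (1 - X ^ 4) ^ 4) 3 (by norm_num) (by simp) ?_ ?_ m p ⟨hp, hev⟩
  · rintro m p a ⟨h1, h2⟩
    refine ⟨h1.sub (Inv.C_mul (inv_f2.pow m) a), ?_⟩
    simp [h2, mul_pow, I4, I8]
  · rintro m p ⟨h1, h2⟩ h0
    by_cases hp0 : p = 0
    · exact Or.inl hp0
    right
    have hX : X ^ 4 ∣ p := by
      rw [X_pow_dvd_iff]
      intro d hd
      by_cases hd0 : d = 0
      · rw [hd0]; exact h0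
      have := congrArg (fun q => q.coeff d) h2
      simp only [coeff_comp_C_mul_X] at this
      have h3 : p.coeff d * (Complex.I ^ d - 1) = 0 := by linear_combination this
      rcases mul_eq_zero.1 h3 with h | h
      · exact h
      · exfalso
        rw [sub_eq_zero] at h
        have hI2 := Complex.I_sq
        interval_cases d
        · omega
        · simp [Complex.ext_iff] at h
        · rw [hI2] at h; norm_num at h
        · rw [pow_succ, hI2] at h; simp [Complex.ext_iff] at h
    have hm : 1 ≤ m := by
      by_contra hm
      have hd := h1.deg
      rw [eq_C_of_natDegree_eq_zero (p := p) (by omega), h0] at hp0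
      simp at hp0
    have hdeg := h1.deg_le hX (by omega)
    have d1 := h1.dvd hX (by omega)
    have rot : ∀ r : ℂ[X], r ∣ p → r.comp (C Complex.I * X) ∣ p := by
      rintro r ⟨q, hq⟩
      refine ⟨q.comp (C Complex.I * X), ?_⟩
      conv_lhs => rw [← h2, hq]
      simp
    have d2 := rot _ d1
    have d3 := rot _ d2
    have d4 := rot _ d3
    have e2 : (((1 - X) ^ 4 : ℂ[X]).comp (C Complex.I * X)) = (1 - C Complex.I * X) ^ 4 := by simp
    have e3 : (((1 - C Complex.I * X) ^ 4 : ℂ[X]).comp (C Complex.I * X)) = (1 - C (-1) * X) ^ 4 := by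
      have : (1 - C Complex.I * (C Complex.I * X) : ℂ[X]) = 1 - C (-1) * X := by
        rw [← mul_assoc, ← sq, I2]; simp
      simp only [pow_comp, sub_comp, mul_comp, one_comp, C_comp, X_comp, this]
    have e4 : (((1 - C (-1) * X) ^ 4 : ℂ[X]).comp (C Complex.I * X))
        = (1 - C (-Complex.I) * X) ^ 4 := by simp
    rw [e2, e3, e4] at d4
    rw [e2, e3] at d3
    rw [e2] at d2
    have d1' : (1 - C 1 * X) ^ 4 ∣ p := by simpa using d1
    have iA : (1 : ℂ) ≠ Complex.I := by simp [Complex.ext_iff]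
    have iB : (1 : ℂ) ≠ -1 := by norm_num
    have iC : (1 : ℂ) ≠ -Complex.I := by simp [Complex.ext_iff]
    have iD : Complex.I ≠ -1 := by simp [Complex.ext_iff]
    have iE : Complex.I ≠ -Complex.I := by
      simp [Complex.ext_iff]; norm_num
    have iF : (-1 : ℂ) ≠ -Complex.I := by simp [Complex.ext_iff]
    have cc : ∀ {a b : ℂ}, a ≠ b → IsCoprime ((1 - C a * X) ^ 4) ((1 - C b * X) ^ 4) :=
      fun h => (coprime_lin h).pow
    have cX : ∀ a : ℂ, IsCoprime (X ^ 4 : ℂ[X]) ((1 - C a * X) ^ 4) := fun a => (coprime_X a).pow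
    have f3 := (cc iF).mul_dvd d3 d4
    have f2 := (IsCoprime.mul_right (cc iD) (cc iE)).mul_dvd d2 f3
    have f1 := (IsCoprime.mul_right (cc iA) (IsCoprime.mul_right (cc iB) (cc iC))).mul_dvd d1' f2
    have f0 := (IsCoprime.mul_right (cX 1) (IsCoprime.mul_right (cX Complex.I)
      (IsCoprime.mul_right (cX (-1)) (cX (-Complex.I))))).mul_dvd hX f1
    obtain ⟨q, hq⟩ := f0
    have hq' : p = (X ^ 4 * (1 - X ^ 4) ^ 4) * q := by
      have : (1 - X ^ 4 : ℂ[X]) = (1 - C 1 * X) * (1 - C Complex.I * X) * (1 - C (-1) * X)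
        * (1 - C (-Complex.I) * X) := by
        simp only [map_neg, map_one]
        linear_combination (X ^ 2 - X ^ 4) * I2
      rw [hq, this]; ring
    have hg0 : (X ^ 4 * (1 - X ^ 4) ^ 4 : ℂ[X]) ≠ 0 := by
      intro h; rw [h] at hq'; simp at hq'; exact hp0 hq'
    have hq0 : q ≠ 0 := by
      rintro rfl; simp at hq'; exact hp0 hq'
    have hgd : (X ^ 4 * (1 - X ^ 4) ^ 4 : ℂ[X]).natDegree = 20 := by
      compute_degree!
    have hd := hdeg
    rw [hq', natDegree_mul hg0 hq0, hgd] at hd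
    refine ⟨by omega, q, ⟨?_, ?_⟩, hq'⟩
    · refine inv_g2.cancel hg0 (by omega) ?_
      rw [show 12 + 4 * (m - 3) = 4 * m by omega, ← hq']; exact h1
    · rw [hq'] at h2
      simp only [mul_comp, pow_comp, sub_comp, one_comp, X_comp, mul_pow, C_comp, I4, one_mul] at h2
      exact mul_left_cancel₀ hg0 h2

end Z4Aux

namespace Z4Aux
open PowerSeries

lemma lagrange_term (H : ℂ⟦X⟧) (m : ℕ) (hm : 0 < m) :
    coeff m (H ^ m - X * (H ^ (m - 1) * d⁄dX ℂ H)) = 0 := by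
  have h1 : d⁄dX ℂ (H ^ m) = (m : ℂ⟦X⟧) * (H ^ (m - 1) * d⁄dX ℂ H) := by
    rw [Derivation.leibniz_pow]; simp
  obtain ⟨l, rfl⟩ : ∃ l, m = l + 1 := ⟨m - 1, by omega⟩
  have h2 := congrArg (coeff l) h1
  rw [coeff_derivative] at h2
  have h3 : coeff l (((l + 1 : ℕ) : ℂ⟦X⟧) * (H ^ (l + 1 - 1) * d⁄dX ℂ H))
      = ((l + 1 : ℕ) : ℂ) * coeff l (H ^ (l + 1 - 1) * d⁄dX ℂ H) := by
    rw [← map_natCast (C (R := ℂ)), coeff_C_mul]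
  rw [h3] at h2
  rw [map_sub, coeff_succ_X_mul]
  have h4 : ((l + 1 : ℕ) : ℂ) ≠ 0 := by exact_mod_cast Nat.succ_ne_zero l
  apply mul_left_cancel₀ h4
  push_cast at *
  linear_combination h2

lemma lagrange {G H h : ℂ⟦X⟧} (hGH : G * H = 1) {N : ℕ} (a : ℕ → ℂ) {r : ℂ⟦X⟧}
    (hN : 0 < N)
    (hh : h = ∑ j ∈ Finset.range N, C (a j) * (X * G) ^ j + X ^ (N + 1) * r) :
    coeff (N - 1) (d⁄dX ℂ h * H ^ N) = 0 := by
  have hD : d⁄dX ℂ (X * G) * H ^ 2 = H - X * d⁄dX ℂ H := by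
    have h0 : G * d⁄dX ℂ H + H * d⁄dX ℂ G = 0 := by
      have := congrArg (d⁄dX ℂ) hGH
      simpa using this
    have h1 : d⁄dX ℂ (X * G) = X * d⁄dX ℂ G + G := by
      simp [derivative_X]
    rw [h1]
    linear_combination H * hGH + X * H * h0 - X * (d⁄dX ℂ H) * hGH
  rw [hh, map_add, add_mul, map_add]
  have hr : coeff (N - 1) (d⁄dX ℂ (X ^ (N + 1) * r) * H ^ N) = 0 := by
    have : X ^ N ∣ d⁄dX ℂ (X ^ (N + 1) * r) * H ^ N := by
      apply Dvd.dvd.mul_right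
      rw [Derivation.leibniz, Derivation.leibniz_pow]
      simp only [smul_eq_mul, Nat.add_sub_cancel, nsmul_eq_mul]
      apply dvd_add
      · exact Dvd.dvd.mul_right (pow_dvd_pow _ (Nat.le_succ N)) _
      · exact Dvd.dvd.mul_left (Dvd.dvd.mul_left (Dvd.dvd.mul_right dvd_rfl _) _) _
    exact X_pow_dvd_iff.1 this _ (by omega)
  rw [hr, add_zero, map_sum, Finset.sum_mul, map_sum]
  refine Finset.sum_eq_zero fun j hj => ?_
  rw [Finset.mem_range] at hj
  rcases Nat.eq_zero_or_pos j with rfl | hj0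
  · simp
  obtain ⟨m, rfl⟩ : ∃ m, N = j + m := ⟨N - j, by omega⟩
  obtain ⟨i, rfl⟩ : ∃ i, j = i + 1 := ⟨j - 1, by omega⟩
  obtain ⟨l, rfl⟩ : ∃ l, m = l + 1 := ⟨m - 1, by omega⟩
  have hpow : G ^ i * H ^ i = 1 := by rw [← mul_pow, hGH, one_pow]
  have e : d⁄dX ℂ (C (a (i + 1)) * (X * G) ^ (i + 1)) * H ^ (i + 1 + (l + 1))
      = C (a (i + 1) * ((i + 1 : ℕ) : ℂ)) *
        (X ^ i * (H ^ (l + 1) - X * (H ^ l * d⁄dX ℂ H))) := by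
    rw [← smul_eq_C_mul, Derivation.map_smul, Derivation.leibniz_pow]
    simp only [nsmul_eq_mul, smul_eq_mul, Nat.add_sub_cancel, smul_eq_C_mul, map_mul, map_natCast]
    have : (H ^ (i + 1 + (l + 1)) : ℂ⟦X⟧) = H ^ i * H ^ 2 * H ^ l := by ring
    rw [this, mul_pow]
    linear_combination (C (a (i + 1)) * ((i + 1 : ℕ) : ℂ⟦X⟧) * X ^ i * H ^ l) *
      ((d⁄dX ℂ (X * G) * H ^ 2) * hpow + hD)
  rw [e, coeff_C_mul, show i + 1 + (l + 1) - 1 = (l + 1) + i by omega, coeff_X_pow_mul]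
  have := lagrange_term H (l + 1) (by omega)
  rw [Nat.add_sub_cancel] at this
  rw [this, mul_zero]

/-- Lagrange in the form used: `w` is a combination of `f^(m-ej) (X g)^j`. -/
lemma lagrange' {f fi g gi w r : ℂ⟦X⟧} (hf : f * fi = 1) (hg : g * gi = 1) {N m e J : ℕ}
    (a : ℕ → ℂ) (hN : 0 < N) (hm : 0 < m) (hJ : ∀ j ∈ Finset.range (J + 1), e * j ≤ m)
    (ha : ∀ j, j ≤ J → N ≤ j → a j = 0)
    (hw : w = ∑ j ∈ Finset.range (J + 1), C (a j) * f ^ (m - e * j) * (X * g) ^ j)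
    (hw1 : w = 1 + X ^ (N + 1) * r) :
    coeff (N - 1) (d⁄dX ℂ f * fi ^ (m + 1) * (f ^ e * gi) ^ N) = 0 := by
  have hGH : (g * fi ^ e) * (f ^ e * gi) = 1 := by
    calc _ = (f * fi) ^ e * (g * gi) := by ring
      _ = 1 := by rw [hf, hg]; simp
  have hfp : ∀ i, f ^ i * fi ^ i = 1 := fun i => by rw [← mul_pow, hf, one_pow]
  have key : fi ^ m = ∑ j ∈ Finset.range N, C (if j ≤ J then a j else 0) * (X * (g * fi ^ e)) ^ j
      + X ^ (N + 1) * (- r * fi ^ m) := by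
    have h1 : w * fi ^ m = ∑ j ∈ Finset.range (J + 1), C (a j) * (X * (g * fi ^ e)) ^ j := by
      rw [hw, Finset.sum_mul]
      refine Finset.sum_congr rfl fun j hj => ?_
      have := hJ j hj
      obtain ⟨t, rfl⟩ : ∃ t, m = e * j + t := ⟨m - e * j, by omega⟩
      rw [show e * j + t - e * j = t by omega, pow_add, mul_pow, mul_pow, mul_pow, ← pow_mul]
      linear_combination (C (a j) * X ^ j * g ^ j * fi ^ (e * j)) * hfp t
    have h2 : ∑ j ∈ Finset.range (J + 1), C (a j) * (X * (g * fi ^ e)) ^ j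
        = ∑ j ∈ Finset.range N, C (if j ≤ J then a j else 0) * (X * (g * fi ^ e)) ^ j := by
      have e1 : ∑ j ∈ Finset.range (J + 1), C (a j) * (X * (g * fi ^ e)) ^ j
        = ∑ j ∈ Finset.range (J + 1), C (if j ≤ J then a j else 0) * (X * (g * fi ^ e)) ^ j := by
        refine Finset.sum_congr rfl fun j hj => ?_
        rw [Finset.mem_range] at hj
        rw [if_pos (by omega)]
      rw [e1]
      rcases le_total N (J + 1) with h | h
      · symm
        apply Finset.sum_subset (by simpa using h)
        intro j hj hj'
        simp only [Finset.mem_range, not_lt] at hj hj'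
        rw [if_pos (by omega), ha j (by omega) hj']; simp
      · apply Finset.sum_subset (by simpa using h)
        intro j hj hj'
        simp only [Finset.mem_range, not_lt] at hj hj'
        rw [if_neg (by omega)]; simp
    rw [← h2, ← h1, hw1]; ring
  have L := lagrange hGH _ hN key
  have hder : d⁄dX ℂ (fi ^ m) = - C (m : ℂ) * (d⁄dX ℂ f * fi ^ (m + 1)) := by
    have h0 : f * d⁄dX ℂ fi + fi * d⁄dX ℂ f = 0 := by
      have := congrArg (d⁄dX ℂ) hf
      simpa using this
    rw [Derivation.leibniz_pow]
    simp only [nsmul_eq_mul, smul_eq_mul, map_natCast]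
    obtain ⟨t, rfl⟩ : ∃ t, m = t + 1 := ⟨m - 1, by omega⟩
    rw [Nat.add_sub_cancel]
    linear_combination ((t + 1 : ℕ) : ℂ⟦X⟧) * fi ^ (t + 1) * h0
      - ((t + 1 : ℕ) : ℂ⟦X⟧) * fi ^ t * (d⁄dX ℂ fi) * hf
  rw [hder, mul_assoc, ← map_neg, coeff_C_mul] at L
  rcases mul_eq_zero.1 L with h | h
  · exfalso
    simp at h; omega
  · exact h

end Z4Aux

namespace Z4Aux
open Polynomial

lemma kill {f g : ℂ[X]} (hfg : IsCoprime f g) (hf : ¬ IsUnit f) (hf0 : f ≠ 0) {e J s : ℕ}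
    (he : 0 < e) (a : ℕ → ℂ)
    (h : f ^ s ∣ ∑ j ∈ Finset.range (J + 1), C (a j) * f ^ (e * J - e * j) * g ^ j) :
    ∀ i, i ≤ J → e * i < s → a (J - i) = 0 := by
  intro i
  induction i using Nat.strong_induction_on with
  | _ i ih =>
  intro hi his
  have h1 : f ^ (e * i + 1) ∣ _ := (pow_dvd_pow f (show e * i + 1 ≤ s by omega)).trans h
  rw [← Finset.add_sum_erase _ _ (show J - i ∈ Finset.range (J + 1) by
    simp only [Finset.mem_range]; omega)] at h1
  have h2 : f ^ (e * i + 1) ∣ ∑ j ∈ (Finset.range (J + 1)).erase (J - i),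
      C (a j) * f ^ (e * J - e * j) * g ^ j := by
    refine Finset.dvd_sum fun j hj => ?_
    simp only [Finset.mem_erase, Finset.mem_range] at hj
    rcases lt_or_gt_of_ne hj.1 with h | h
    · refine Dvd.dvd.mul_right (Dvd.dvd.mul_left (pow_dvd_pow _ ?_) _) _
      rw [← Nat.mul_sub]
      calc e * i + 1 ≤ e * (i + 1) := by rw [mul_add]; omega
        _ ≤ e * (J - j) := Nat.mul_le_mul_left _ (by omega)
    · have := ih (J - j) (by omega) (by omega)
        (lt_of_le_of_lt (Nat.mul_le_mul_left _ (by omega)) his)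
      rw [show J - (J - j) = j by omega] at this
      rw [this]; simp
  have h3 := (dvd_add_left h2).1 h1
  rw [← Nat.mul_sub, show J - (J - i) = i by omega, pow_succ] at h3
  have h4 : f ^ (e * i) * f ∣ f ^ (e * i) * (C (a (J - i)) * g ^ (J - i)) := by
    convert h3 using 1; ring
  have h5 := (mul_dvd_mul_iff_left (pow_ne_zero _ hf0)).1 h4
  by_contra hne
  have h6 : f ∣ g ^ (J - i) := (IsUnit.dvd_mul_left (isUnit_C.2 (by simpa using hne))).1 h5
  exact hf ((hfg.pow_right (n := J - i)).isUnit_of_dvd' dvd_rfl h6)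

/-- the geometric series -/
def SN : PowerSeries ℕ := PowerSeries.mk fun _ => 1
/-- the even geometric series -/
def EN : PowerSeries ℕ := PowerSeries.mk fun n => if Even n then 1 else 0

noncomputable def SC : PowerSeries ℂ := PowerSeries.map (Nat.castRingHom ℂ) SN
noncomputable def EC : PowerSeries ℂ := PowerSeries.map (Nat.castRingHom ℂ) EN

lemma SN_zero : PowerSeries.constantCoeff SN = 1 := by
  rw [← PowerSeries.coeff_zero_eq_constantCoeff_apply]; simp [SN]
lemma EN_zero : PowerSeries.constantCoeff EN = 1 := by
  rw [← PowerSeries.coeff_zero_eq_constantCoeff_apply]; simp [EN]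

lemma coeff_mul_SN (A : PowerSeries ℕ) (n : ℕ) (h : PowerSeries.constantCoeff A ≠ 0) :
    PowerSeries.coeff n (A * SN) ≠ 0 := by
  have : PowerSeries.constantCoeff A ≤ PowerSeries.coeff n (A * SN) := by
    rw [PowerSeries.coeff_mul]
    have := Finset.single_le_sum (f := fun x : ℕ × ℕ => PowerSeries.coeff x.1 A *
      PowerSeries.coeff x.2 SN) (s := Finset.HasAntidiagonal.antidiagonal n) (fun _ _ => Nat.zero_le _)
      (show (0, n) ∈ Finset.HasAntidiagonal.antidiagonal n by simp)
    simpa [SN] using this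
  omega

lemma SC_mul : (1 - PowerSeries.X : PowerSeries ℂ) * SC = 1 := by
  have : SC = PowerSeries.mk 1 := by
    ext n; simp [SC, SN]
  rw [this, mul_comm]; exact PowerSeries.mk_one_mul_one_sub_eq_one ℂ

lemma EC_mul : (1 - PowerSeries.X ^ 2 : PowerSeries ℂ) * EC = 1 := by
  ext n
  rw [sub_mul, one_mul, map_sub, PowerSeries.coeff_X_pow_mul', PowerSeries.coeff_one]
  simp only [EC, EN, PowerSeries.coeff_map, PowerSeries.coeff_mk]
  rcases n with _ | _ | n
  · simp
  · simp
  · simp [Nat.even_add, parity_simps]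

lemma EC_rescale : PowerSeries.rescale (-1 : ℂ) EC = EC := by
  ext n
  rw [PowerSeries.coeff_rescale]
  simp only [EC, EN, PowerSeries.coeff_map, PowerSeries.coeff_mk]
  by_cases h : Even n
  · simp [h.neg_one_pow]
  · simp [h]

/-- the coercion from polynomials to power series as a ring homomorphism -/
noncomputable abbrev phi : ℂ[X] →+* PowerSeries ℂ := Polynomial.coeToPowerSeries.ringHom

lemma phi_X : phi X = PowerSeries.X := by simp [phi]

lemma phi_C (a : ℂ) : phi (C a) = PowerSeries.C a := by simp [phi]

lemma cast_zero {n : ℕ} (h : Nat.castRingHom ℂ n = 0) : n = 0 := by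
  simpa using h

lemma series_of_coeff {w : ℂ[X]} {N : ℕ} (h0 : w.coeff 0 = 1)
    (h : ∀ i, 0 < i → i ≤ N → w.coeff i = 0) :
    ∃ r : PowerSeries ℂ, (w : PowerSeries ℂ) = 1 + PowerSeries.X ^ (N + 1) * r := by
  have : PowerSeries.X ^ (N + 1) ∣ ((w : PowerSeries ℂ) - 1) := by
    rw [PowerSeries.X_pow_dvd_iff]
    intro i hi
    rw [map_sub, Polynomial.coeff_coe, PowerSeries.coeff_one]
    split_ifs with h'
    · rw [h', h0, sub_self]
    · rw [h i (by omega) (by omega), sub_zero]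
  obtain ⟨r, hr⟩ := this
  exact ⟨r, by rw [← hr]; ring⟩

lemma no_doubly (k : ℕ) (p : ℂ[X]) (hp : Inv (12 * k + 8) p)
    (hev : p.comp (C Complex.I * X) = p) (h0 : p.coeff 0 = 1)
    (h : ∀ i, 0 < i → i ≤ 4 * k + 4 → p.coeff i = 0) : False := by
  obtain ⟨a, ha⟩ := gleason2 (m := 3 * k + 2) (p := p)
    (by rw [show 4 * (3 * k + 2) = 12 * k + 8 by ring]; exact hp) hev
  rw [show (3 * k + 2) / 3 = k by omega] at ha
  set w : ℂ[X] := ∑ j ∈ Finset.range (k + 1),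
    C (a j) * (1 + 14 * X + X ^ 2) ^ (3 * k + 2 - 3 * j) * (X * (1 - X) ^ 4) ^ j with hw
  have hpw : p = expand ℂ 4 w := by
    rw [ha, hw, map_sum]
    refine Finset.sum_congr rfl fun j _ => ?_
    simp only [map_mul, map_pow, expand_C, map_add, map_sub, map_one, expand_X, map_ofNat]
    simp only [← pow_mul, Nat.reduceMul]
  have hc : ∀ i, w.coeff i = p.coeff (i * 4) := fun i => by
    rw [hpw, coeff_expand_mul (by norm_num)]
  obtain ⟨r, hr⟩ := series_of_coeff (w := w) (N := k + 1) (by rw [hc]; simpa using h0)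
    (fun i hi hi' => by rw [hc]; exact h _ (by omega) (by omega))
  have hw' : (w : PowerSeries ℂ) = ∑ j ∈ Finset.range (k + 1), PowerSeries.C (a j) *
      (1 + 14 * PowerSeries.X + PowerSeries.X ^ 2) ^ (3 * k + 2 - 3 * j) *
      (PowerSeries.X * (1 - PowerSeries.X) ^ 4) ^ j := by
    change phi w = _
    rw [hw, map_sum]
    simp only [map_mul, map_pow, map_add, map_sub, map_one, map_ofNat, phi_X, phi_C]
  have hf : (1 + 14 * PowerSeries.X + PowerSeries.X ^ 2 : PowerSeries ℂ) *
      (1 + 14 * PowerSeries.X + PowerSeries.X ^ 2)⁻¹ = 1 :=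
    PowerSeries.mul_inv_cancel _ (by simp)
  have hg : ((1 - PowerSeries.X) ^ 4 : PowerSeries ℂ) * SC ^ 4 = 1 := by
    rw [← mul_pow, SC_mul, one_pow]
  have L := lagrange' hf hg a (N := k + 1) (m := 3 * k + 2) (e := 3) (J := k) (by omega) (by omega)
    (fun j hj => by rw [Finset.mem_range] at hj; omega) (fun j h1 h2 => by omega) hw' hr
  set f := (1 + 14 * PowerSeries.X + PowerSeries.X ^ 2 : PowerSeries ℂ)
  have hder : PowerSeries.derivative ℂ f = 14 + 2 * PowerSeries.X := by
    have h1 : f = phi (1 + C 14 * X + X ^ 2) := by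
      simp only [map_mul, map_pow, map_add, map_one, phi_X, phi_C]
      simp only [f, map_ofNat]
    have h2 : Polynomial.derivative (1 + C 14 * X + X ^ 2 : ℂ[X]) = C 14 + C 2 * X := by
      simp only [derivative_add, derivative_C_mul, derivative_one, derivative_X, derivative_X_pow]
      simp
    have h3 : PowerSeries.derivative ℂ (phi (1 + C 14 * X + X ^ 2)) =
        phi (Polynomial.derivative (1 + C 14 * X + X ^ 2 : ℂ[X])) :=
      PowerSeries.derivative_coe _
    rw [h1, h3, h2]
    simp only [map_mul, map_add, phi_X, phi_C]
    simp only [map_ofNat]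
  have hfin : PowerSeries.derivative ℂ f * f⁻¹ ^ (3 * k + 2 + 1) * (f ^ 3 * SC ^ 4) ^ (k + 1)
      = PowerSeries.map (Nat.castRingHom ℂ) ((14 + 2 * PowerSeries.X) * SN ^ (4 * k + 3) * SN) := by
    have e1 : f⁻¹ ^ (3 * k + 2 + 1) * (f ^ 3) ^ (k + 1) = 1 := by
      rw [← pow_mul, show 3 * (k + 1) = 3 * k + 2 + 1 by ring, ← mul_pow, mul_comm, hf, one_pow]
    simp only [map_mul, map_pow, map_add, map_ofNat, PowerSeries.map_X]
    rw [hder, mul_pow]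
    change _ = (14 + 2 * PowerSeries.X) * SC ^ (4 * k + 3) * SC
    linear_combination (14 + 2 * PowerSeries.X) * (SC ^ 4) ^ (k + 1) * e1
  rw [hfin, PowerSeries.coeff_map] at L
  refine coeff_mul_SN _ _ ?_ (cast_zero L)
  have h14 : PowerSeries.constantCoeff (14 : PowerSeries ℕ) = 14 := map_ofNat _ 14
  simp [SN_zero, h14]

lemma singly_aux (k s N : ℕ) (p : ℂ[X]) (hp : Inv (12 * k + 8) p)
    (hev : p.comp (- X) = p) (h0 : p.coeff 0 = 1) (hN : 0 < N)
    (h : ∀ i, 0 < i → i ≤ 2 * N → p.coeff i = 0) (hs : (1 + X ^ 2) ^ s ∣ p)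
    (hsN : 4 * (3 * k + 2) < s + 4 * N) :
    PowerSeries.coeff (N - 1) ((1 + PowerSeries.X : PowerSeries ℂ)⁻¹ ^ (12 * k + 9)
      * ((1 + PowerSeries.X) ^ 4 * SC ^ 2) ^ N) = 0 := by
  obtain ⟨a, ha⟩ := gleason1 hp hev
  rw [show (12 * k + 8) / 4 = 3 * k + 2 by omega] at ha
  have hcop : IsCoprime (1 + X ^ 2 : ℂ[X]) (X ^ 2 * (1 - X ^ 2) ^ 2) := by
    have c1 : IsCoprime (1 + X ^ 2 : ℂ[X]) (X ^ 2) := ⟨1, -1, by ring⟩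
    have c2 : IsCoprime (1 + X ^ 2 : ℂ[X]) (1 - X ^ 2) := by
      refine ⟨C (1 / 2), C (1 / 2), ?_⟩
      have : (C (1 / 2) + C (1 / 2) : ℂ[X]) = 1 := by rw [← C_add]; norm_num
      linear_combination this
    exact c1.mul_right c2.pow_right
  have hdeg : (1 + X ^ 2 : ℂ[X]).natDegree = 2 := by compute_degree!
  have hz : ∀ j, j ≤ 3 * k + 2 → N ≤ j → a j = 0 := by
    intro j h1 h2
    have := kill hcop (fun hu => by
        have := natDegree_eq_zero_of_isUnit hu; omega)
      (fun hh => by rw [hh] at hdeg; simp at hdeg) (e := 4) (J := 3 * k + 2) (by norm_num) a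
      (s := s) (by rw [show 4 * (3 * k + 2) = 12 * k + 8 by ring, ← ha]; exact hs)
      (3 * k + 2 - j) (by omega) (by omega)
    rwa [show 3 * k + 2 - (3 * k + 2 - j) = j by omega] at this
  set w : ℂ[X] := ∑ j ∈ Finset.range (3 * k + 2 + 1),
    C (a j) * (1 + X) ^ (12 * k + 8 - 4 * j) * (X * (1 - X) ^ 2) ^ j with hw
  have hpw : p = expand ℂ 2 w := by
    rw [ha, hw, map_sum]
    refine Finset.sum_congr rfl fun j _ => ?_
    simp only [map_mul, map_pow, expand_C, map_add, map_sub, map_one, expand_X]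
  have hc : ∀ i, w.coeff i = p.coeff (i * 2) := fun i => by
    rw [hpw, coeff_expand_mul (by norm_num)]
  obtain ⟨r, hr⟩ := series_of_coeff (w := w) (N := N) (by rw [hc]; simpa using h0)
    (fun i hi hi' => by rw [hc]; exact h _ (by omega) (by omega))
  have hw' : (w : PowerSeries ℂ) = ∑ j ∈ Finset.range (3 * k + 2 + 1), PowerSeries.C (a j) *
      (1 + PowerSeries.X) ^ (12 * k + 8 - 4 * j) *
      (PowerSeries.X * (1 - PowerSeries.X) ^ 2) ^ j := by
    change phi w = _
    rw [hw, map_sum]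
    simp only [map_mul, map_pow, map_add, map_sub, map_one, map_ofNat, phi_X, phi_C]
  have hf : (1 + PowerSeries.X : PowerSeries ℂ) * (1 + PowerSeries.X)⁻¹ = 1 :=
    PowerSeries.mul_inv_cancel _ (by simp)
  have hg : ((1 - PowerSeries.X) ^ 2 : PowerSeries ℂ) * SC ^ 2 = 1 := by
    rw [← mul_pow, SC_mul, one_pow]
  have L := lagrange' hf hg a (N := N) (m := 12 * k + 8) (e := 4) (J := 3 * k + 2) hN (by omega)
    (fun j hj => by rw [Finset.mem_range] at hj; omega) hz hw' hr
  simpa [PowerSeries.derivative_X] using L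

lemma EC_eq : (1 + PowerSeries.X : PowerSeries ℂ)⁻¹ * SC = EC := by
  have hf : (1 + PowerSeries.X : PowerSeries ℂ) * (1 + PowerSeries.X)⁻¹ = 1 :=
    PowerSeries.mul_inv_cancel _ (by simp)
  linear_combination (-(1 + PowerSeries.X : PowerSeries ℂ)⁻¹ * SC) * EC_mul + 
    EC * (1 - PowerSeries.X) * SC * hf + EC * SC_mul

lemma no_singly_code (k : ℕ) (p : ℂ[X]) (hp : Inv (12 * k + 8) p)
    (hev : p.comp (- X) = p) (h0 : p.coeff 0 = 1)
    (h : ∀ i, 0 < i → i ≤ 4 * k + 4 → p.coeff i = 0)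
    (hs : (1 + X ^ 2) ^ (4 * k + 4) ∣ p) : False := by
  have L := singly_aux k (4 * k + 4) (2 * k + 2) p hp hev h0 (by omega)
    (fun i hi hi' => h i hi (by omega)) hs (by omega)
  have hf : (1 + PowerSeries.X : PowerSeries ℂ)⁻¹ * (1 + PowerSeries.X) = 1 :=
    PowerSeries.inv_mul_cancel _ (by simp)
  have hfin : (1 + PowerSeries.X : PowerSeries ℂ)⁻¹ ^ (12 * k + 9)
      * ((1 + PowerSeries.X) ^ 4 * SC ^ 2) ^ (2 * k + 2) = 
      PowerSeries.map (Nat.castRingHom ℂ) ((EN ^ (4 * k + 1) * SN ^ 2) * SN) := by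
    have e1 : (1 + PowerSeries.X : PowerSeries ℂ)⁻¹ ^ (8 * k + 8) * (1 + PowerSeries.X) ^ (8 * k + 8)
      = 1 := by rw [← mul_pow, hf, one_pow]
    simp only [map_mul, map_pow]
    change _ = EC ^ (4 * k + 1) * SC ^ 2 * SC
    rw [← EC_eq, show 12 * k + 9 = (4 * k + 1) + (8 * k + 8) by ring, mul_pow, ← pow_mul, ← pow_mul,
      show 4 * (2 * k + 2) = 8 * k + 8 by ring, show 2 * (2 * k + 2) = 4 * k + 4 by ring]
    set fi := (1 + PowerSeries.X : PowerSeries ℂ)⁻¹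
    linear_combination fi ^ (4 * k + 1) * SC ^ (4 * k + 4) * e1
  rw [hfin, PowerSeries.coeff_map] at L
  refine coeff_mul_SN _ _ ?_ (cast_zero L)
  simp [SN_zero, EN_zero]

lemma coeff_EN_pow (M : ℕ) (k : ℕ) : PowerSeries.coeff (2 * k) (EN ^ (M + 1)) ≠ 0 := by
  induction M with
  | zero => simp [EN]
  | succ M ih =>
    rw [pow_succ, PowerSeries.coeff_mul]
    have := Finset.single_le_sum (f := fun x : ℕ × ℕ => PowerSeries.coeff x.1 (EN ^ (M + 1)) *
      PowerSeries.coeff x.2 EN) (s := Finset.HasAntidiagonal.antidiagonal (2 * k)) (fun _ _ => Nat.zero_le _)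
      (show (2 * k, 0) ∈ Finset.HasAntidiagonal.antidiagonal (2 * k) by simp)
    have h2 : PowerSeries.coeff 0 EN = 1 := by simp [EN]
    simp only [h2, mul_one] at this
    omega

lemma no_singly_shadow (k : ℕ) (p : ℂ[X]) (hp : Inv (12 * k + 8) p)
    (hev : p.comp (- X) = p) (h0 : p.coeff 0 = 1)
    (h : ∀ i, 0 < i → i < 4 * k + 4 → p.coeff i = 0)
    (hs : (1 + X ^ 2) ^ (4 * k + 5) ∣ p) : False := by
  have L := singly_aux k (4 * k + 5) (2 * k + 1) p hp hev h0 (by omega)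
    (fun i hi hi' => h i hi (by omega)) hs (by omega)
  have hf : (1 + PowerSeries.X : PowerSeries ℂ)⁻¹ * (1 + PowerSeries.X) = 1 :=
    PowerSeries.inv_mul_cancel _ (by simp)
  have hfin : (1 + PowerSeries.X : PowerSeries ℂ)⁻¹ ^ (12 * k + 9)
      * ((1 + PowerSeries.X) ^ 4 * SC ^ 2) ^ (2 * k + 1) = 
      PowerSeries.map (Nat.castRingHom ℂ)
        (EN ^ (4 * k + 5) + 3 * (PowerSeries.X ^ 2 * EN ^ (4 * k + 5))) -
      (PowerSeries.X * (3 + PowerSeries.X ^ 2)) * EC ^ (4 * k + 5) := by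
    have e1 : (1 + PowerSeries.X : PowerSeries ℂ)⁻¹ ^ (8 * k + 4) * (1 + PowerSeries.X) ^ (8 * k + 4)
      = 1 := by rw [← mul_pow, hf, one_pow]
    have e2 : (1 - PowerSeries.X : PowerSeries ℂ) ^ 3 * SC ^ 3 = 1 := by
      rw [← mul_pow, SC_mul, one_pow]
    simp only [map_mul, map_pow, map_add, map_ofNat, PowerSeries.map_X]
    change _ = EC ^ (4 * k + 5) + 3 * (PowerSeries.X ^ 2 * EC ^ (4 * k + 5)) - _
    rw [← EC_eq, show 12 * k + 9 = (4 * k + 5) + (8 * k + 4) by ring, mul_pow, ← pow_mul, ← pow_mul,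
      show 4 * (2 * k + 1) = 8 * k + 4 by ring, show 2 * (2 * k + 1) = 4 * k + 2 by ring]
    set fi := (1 + PowerSeries.X : PowerSeries ℂ)⁻¹
    linear_combination fi ^ (4 * k + 5) * SC ^ (4 * k + 2) * e1
      - fi ^ (4 * k + 5) * SC ^ (4 * k + 2) * e2
  have hodd : PowerSeries.coeff (2 * k)
      ((PowerSeries.X * (3 + PowerSeries.X ^ 2)) * EC ^ (4 * k + 5)) = 0 := by
    set B : PowerSeries ℂ := (PowerSeries.X * (3 + PowerSeries.X ^ 2)) * EC ^ (4 * k + 5) with hB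
    have h1 : PowerSeries.rescale (-1 : ℂ) B = - B := by
      rw [hB]
      simp only [map_mul, map_pow, EC_rescale, map_add, map_ofNat, PowerSeries.rescale_X, map_neg,
        map_one]
      ring
    have h2 := congrArg (PowerSeries.coeff (2 * k)) h1
    rw [PowerSeries.coeff_rescale, map_neg, pow_mul] at h2
    norm_num at h2
    linear_combination (1 / 2 : ℂ) * h2
  rw [hfin, map_sub, Nat.add_sub_cancel, hodd, sub_zero, PowerSeries.coeff_map] at L
  have L' : PowerSeries.coeff (2 * k)
    (EN ^ (4 * k + 5) + 3 * (PowerSeries.X ^ 2 * EN ^ (4 * k + 5))) = 0 :=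
    cast_zero L
  rw [map_add, Nat.add_eq_zero_iff] at L'
  exact coeff_EN_pow _ _ L'.1

end Z4Aux

namespace Z4Aux
open Polynomial Z4Note

/-- the additive character of `ZMod 2` -/
noncomputable def chi (a : ZMod 2) : ℂ := if a = 0 then 1 else -1

lemma zmod2_cases (a : ZMod 2) : a = 0 ∨ a = 1 := by
  revert a; decide

lemma chi_add (a b : ZMod 2) : chi (a + b) = chi a * chi b := by
  rcases zmod2_cases a with rfl | rfl <;> rcases zmod2_cases b with rfl | rfl <;>
    simp [chi, show (1 : ZMod 2) + 1 = 0 by decide]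

lemma chi_sum {n : ℕ} (z : Fin n → ZMod 2) : chi (∑ i, z i) = ∏ i, chi (z i) := by
  have : ∀ s : Finset (Fin n), chi (∑ i ∈ s, z i) = ∏ i ∈ s, chi (z i) := by
    intro s
    induction s using Finset.induction_on with
    | empty => simp [chi]
    | insert a s ha ih => rw [Finset.sum_insert ha, Finset.prod_insert ha, chi_add, ih]
  exact this _

lemma hWt_eq {n : ℕ} (x : Fin n → ZMod 2) : hWt x = ∑ i, if x i ≠ 0 then 1 else 0 := by
  rw [hWt, Finset.card_filter]

lemma hWt_le {n : ℕ} (x : Fin n → ZMod 2) : hWt x ≤ n := by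
  rw [hWt]
  exact (Finset.card_le_univ _).trans (by simp)

lemma hWt_eq_zero {n : ℕ} {x : Fin n → ZMod 2} (h : hWt x = 0) : x = 0 := by
  rw [hWt, Finset.card_eq_zero, Finset.filter_eq_empty_iff] at h
  funext i
  simpa using h (Finset.mem_univ i)

lemma hWt_zero {n : ℕ} : hWt (0 : Fin n → ZMod 2) = 0 := by
  simp [hWt]

lemma expansion {n : ℕ} (c : Fin n → ZMod 2) :
    ((1 - X) ^ (hWt c) * (1 + X) ^ (n - hWt c) : ℂ[X]) =
      ∑ v : Fin n → ZMod 2, C (chi (∑ i, c i * v i)) * X ^ (hWt v) := by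
  have h1 : ∀ v : Fin n → ZMod 2, (C (chi (∑ i, c i * v i)) * X ^ (hWt v) : ℂ[X]) =
      ∏ i, (C (chi (c i * v i)) * X ^ (if v i ≠ 0 then 1 else 0)) := by
    intro v
    rw [chi_sum, hWt_eq, Finset.prod_mul_distrib, Finset.prod_pow_eq_pow_sum, map_prod]
  simp only [h1]
  have h2 := Finset.prod_univ_sum (fun _ : Fin n => (Finset.univ : Finset (ZMod 2)))
    (fun i a => (C (chi (c i * a)) * X ^ (if a ≠ 0 then 1 else 0) : ℂ[X]))
  rw [Fintype.piFinset_univ] at h2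
  rw [← h2]
  have h3 : ∀ i, (∑ a : ZMod 2, (C (chi (c i * a)) * X ^ (if a ≠ 0 then 1 else 0) : ℂ[X])) =
      if c i ≠ 0 then 1 - X else 1 + X := by
    intro i
    have : (Finset.univ : Finset (ZMod 2)) = {0, 1} := by decide
    rw [this, Finset.sum_pair (by decide)]
    rcases zmod2_cases (c i) with h | h <;> simp [h, chi] <;> ring
  simp only [h3]
  rw [Finset.prod_ite, Finset.prod_const, Finset.prod_const]
  congr 2
  have := Finset.card_filter_add_card_filter_not (s := (Finset.univ : Finset (Fin n))) (fun i => c i ≠ 0)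
  rw [Finset.card_univ, Fintype.card_fin] at this
  rw [hWt]; omega

section code
variable {n : ℕ} (D : Submodule (ZMod 2) (Fin n → ZMod 2))

open Classical in
/-- the finite set of codewords -/
noncomputable def words : Finset (Fin n → ZMod 2) := Finset.univ.filter (· ∈ D)

lemma mem_words {c : Fin n → ZMod 2} : c ∈ words D ↔ c ∈ D := by
  simp [words]

/-- the weight enumerator -/
noncomputable def enum : ℂ[X] := ∑ c ∈ words D, X ^ (hWt c)

lemma char_sum (g : (Fin n → ZMod 2) → ℂ) (hg : ∀ a ∈ D, ∀ b ∈ D, g (a + b) = g a * g b)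
    (hne : ∃ c ∈ D, g c ≠ 1) : ∑ c ∈ words D, g c = 0 := by
  obtain ⟨c, hc, hc1⟩ := hne
  have : ∑ x ∈ words D, g x = g c * ∑ x ∈ words D, g x := by
    rw [Finset.mul_sum]
    refine Finset.sum_bij' (fun x _ => x - c) (fun x _ => c + x) ?_ ?_ ?_ ?_ ?_
    · intro x hx; rw [mem_words] at *; exact D.sub_mem hx hc
    · intro x hx; rw [mem_words] at *; exact D.add_mem hc hx
    · intro x _; simp
    · intro x _; simp
    · intro x hx
      rw [mem_words] at hx
      rw [← hg c hc _ (D.sub_mem hx hc)]; simp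
  have h2 : (g c - 1) * ∑ x ∈ words D, g x = 0 := by linear_combination -this
  exact (mul_eq_zero.1 h2).resolve_left (sub_ne_zero.2 hc1)

open Classical in
lemma macw (e : (Fin n → ZMod 2) → ℂ) (he : ∀ a ∈ D, ∀ b ∈ D, e (a + b) = e a * e b) :
    ∑ c ∈ words D, C (e c) * ((1 - X) ^ (hWt c) * (1 + X) ^ (n - hWt c) : ℂ[X]) =
      C ((words D).card : ℂ) * ∑ v ∈ Finset.univ.filter (fun v : Fin n → ZMod 2 =>
        ∀ c ∈ D, e c * chi (∑ i, c i * v i) = 1), X ^ (hWt v) := by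
  simp only [expansion, Finset.mul_sum]
  rw [Finset.sum_comm, Finset.sum_filter]
  refine Finset.sum_congr rfl fun v _ => ?_
  simp only [← mul_assoc, ← C_mul]
  rw [← Finset.sum_mul, ← map_sum]
  split_ifs with h
  · congr 2
    rw [Finset.sum_congr rfl (fun c hc => h c ((mem_words D).1 hc))]
    simp
  · push Not at h
    rw [char_sum D _ ?_ h]
    · simp
    · intro a ha b hb
      simp only [Pi.add_apply, add_mul, Finset.sum_add_distrib, chi_add, he a ha b hb]
      ring

lemma enum_deg : (enum D).natDegree ≤ n := by
  refine natDegree_sum_le_of_forall_le _ _ fun c _ => ?_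
  simpa using hWt_le c

lemma enum_comp (a : ℂ) : (enum D).comp (C a * X) = ∑ c ∈ words D, C (a ^ hWt c) * X ^ (hWt c) := by
  rw [enum, ← coe_compRingHom_apply, map_sum]
  refine Finset.sum_congr rfl fun c _ => ?_
  simp [mul_pow]

lemma T_enum_comp (a : ℂ) : T n ((enum D).comp (C a * X)) =
    ∑ c ∈ words D, C (a ^ hWt c) * ((1 - X) ^ (hWt c) * (1 + X) ^ (n - hWt c) : ℂ[X]) := by
  rw [enum_comp, map_sum]
  refine Finset.sum_congr rfl fun c _ => ?_
  rw [← smul_eq_C_mul, map_smul, T_X_pow (hWt_le c), smul_eq_C_mul]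

lemma enum_coeff_zero : (enum D).coeff 0 = 1 := by
  rw [enum, finsetSum_coeff, Finset.sum_eq_single 0]
  · simp [hWt_zero]
  · intro c _ hc
    rw [coeff_X_pow, if_neg]
    intro h; exact hc (hWt_eq_zero h.symm)
  · intro h; exact absurd ((mem_words D).2 D.zero_mem) h

lemma enum_coeff_eq_zero {i : ℕ} (h : ∀ c ∈ D, hWt c ≠ i) : (enum D).coeff i = 0 := by
  rw [enum, finsetSum_coeff]
  refine Finset.sum_eq_zero fun c hc => ?_
  rw [coeff_X_pow, if_neg]
  exact fun hh => h c ((mem_words D).1 hc) hh.symm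

end code

lemma mem_iff {n : ℕ} {D : Submodule (ZMod 2) (Fin n → ZMod 2)} (hD : SelfDual2 D)
    {x : Fin n → ZMod 2} : x ∈ D ↔ ∀ y ∈ D, ∑ i, x i * y i = 0 := by
  have : x ∈ (D : Set (Fin n → ZMod 2)) ↔ x ∈ dual2 (D : Set (Fin n → ZMod 2)) := by rw [← hD]
  exact this

lemma chi_eq_one {a : ZMod 2} : chi a = 1 ↔ a = 0 := by
  rcases zmod2_cases a with rfl | rfl
  · simp [chi]
  · simp [chi]; norm_num

lemma T_enum {n : ℕ} {D : Submodule (ZMod 2) (Fin n → ZMod 2)} (hD : SelfDual2 D) :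
    T n (enum D) = C ((words D).card : ℂ) * enum D := by
  classical
  have h1 := T_enum_comp D 1
  have h2 := macw D (fun c => 1 ^ hWt c) (fun _ _ _ _ => by simp)
  rw [h2] at h1
  rw [show (C (1 : ℂ) * X : ℂ[X]) = X by simp, comp_X] at h1
  rw [h1, enum]
  congr 2
  ext v
  rw [mem_words, mem_iff hD]
  simp only [Finset.mem_filter, Finset.mem_univ, true_and, one_pow, one_mul, chi_eq_one]
  simp only [mul_comm]

lemma hWt_cast {n : ℕ} (x : Fin n → ZMod 2) : (hWt x : ZMod 2) = ∑ i, x i := by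
  rw [hWt_eq, Nat.cast_sum]
  refine Finset.sum_congr rfl fun i _ => ?_
  rcases zmod2_cases (x i) with h | h <;> simp [h]

lemma hWt_add {n : ℕ} (x y : Fin n → ZMod 2) :
    hWt (x + y) + 2 * hWt (x * y) = hWt x + hWt y := by
  simp only [hWt_eq]
  rw [Finset.mul_sum, ← Finset.sum_add_distrib, ← Finset.sum_add_distrib]
  refine Finset.sum_congr rfl fun i _ => ?_
  rcases zmod2_cases (x i) with h | h <;> rcases zmod2_cases (y i) with h' | h' <;>
    simp [h, h', show (1 : ZMod 2) + 1 = 0 by decide]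

lemma even_mul {n : ℕ} {D : Submodule (ZMod 2) (Fin n → ZMod 2)} (hD : SelfDual2 D)
    {x y : Fin n → ZMod 2} (hx : x ∈ D) (hy : y ∈ D) : 2 ∣ hWt (x * y) := by
  rw [← ZMod.natCast_eq_zero_iff, hWt_cast]
  exact (mem_iff hD).1 hx y hy

lemma even_wt {n : ℕ} {D : Submodule (ZMod 2) (Fin n → ZMod 2)} (hD : SelfDual2 D)
    {x : Fin n → ZMod 2} (hx : x ∈ D) : 2 ∣ hWt x := by
  have := even_mul hD hx hx
  have h : x * x = x := by
    funext i; rcases zmod2_cases (x i) with h | h <;> simp [h]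
  rwa [h] at this

lemma one_mem {n : ℕ} {D : Submodule (ZMod 2) (Fin n → ZMod 2)} (hD : SelfDual2 D) :
    (1 : Fin n → ZMod 2) ∈ D := by
  rw [mem_iff hD]
  intro y hy
  simp only [Pi.one_apply, one_mul]
  rw [← hWt_cast, ZMod.natCast_eq_zero_iff]
  exact even_wt hD hy

lemma hWt_add_one {n : ℕ} (x : Fin n → ZMod 2) : hWt (x + 1) = n - hWt x := by
  have h := hWt_add x 1
  have h1 : hWt (1 : Fin n → ZMod 2) = n := by simp [hWt]
  rw [mul_one, h1] at h
  have := hWt_le x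
  omega

lemma inv_enum {m : ℕ} {D : Submodule (ZMod 2) (Fin (2 * m) → ZMod 2)} (hD : SelfDual2 D) :
    Inv m (enum D) where
  deg := enum_deg D
  refl := by
    have h1 : ∀ s : Finset (Fin (2 * m) → ZMod 2), reflect (2 * m) (∑ c ∈ s, X ^ hWt c : ℂ[X]) =
        ∑ c ∈ s, X ^ (2 * m - hWt c) := by
      intro s
      induction s using Finset.induction_on with
      | empty => simp
      | insert a s ha ih =>
        rw [Finset.sum_insert ha, Finset.sum_insert ha, reflect_add, ih]
        congr 1
        have := reflect_monomial (R := ℂ) (2 * m) (hWt a)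
        rw [this, revAt_le (hWt_le a)]
    rw [enum, h1]
    refine Finset.sum_bij' (fun x _ => x + 1) (fun x _ => x - 1) ?_ ?_ ?_ ?_ ?_
    · intro x hx; rw [mem_words] at *; exact D.add_mem hx (one_mem hD)
    · intro x hx; rw [mem_words] at *; exact D.sub_mem hx (one_mem hD)
    · intro x _; simp
    · intro x _; simp
    · intro x hx
      rw [hWt_add_one]
  mac := by
    have h1 := T_T (enum_deg D)
    have h0 := enum_coeff_zero D
    rw [T_enum hD, ← smul_eq_C_mul, map_smul, T_enum hD, ← smul_eq_C_mul] at h1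
    have h2 := congrArg (fun q => coeff q 0) h1
    simp only [coeff_smul, smul_eq_mul, h0, mul_one] at h2
    have h3 : (words D).card ^ 2 = (2 ^ m) ^ 2 := by
      rw [← pow_mul, mul_comm m 2, sq]; exact_mod_cast h2
    have h4 := Nat.pow_left_injective (show 2 ≠ 0 by norm_num) h3
    rw [T_enum hD, h4, smul_eq_C_mul]
    push_cast
    rfl

lemma enum_even {n : ℕ} {D : Submodule (ZMod 2) (Fin n → ZMod 2)} (hD : SelfDual2 D) :
    (enum D).comp (-X) = enum D := by
  rw [neg_X_eq, enum_comp, enum]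
  refine Finset.sum_congr rfl fun c hc => ?_
  obtain ⟨t, ht⟩ := even_wt hD ((mem_words D).1 hc)
  rw [show (-1 : ℂ) ^ hWt c = 1 by rw [ht, pow_mul]; norm_num]
  simp

lemma enum_doubly {n : ℕ} {D : Submodule (ZMod 2) (Fin n → ZMod 2)}
    (hD : DoublyEven (D : Set (Fin n → ZMod 2))) :
    (enum D).comp (C Complex.I * X) = enum D := by
  rw [enum_comp, enum]
  refine Finset.sum_congr rfl fun c hc => ?_
  obtain ⟨t, ht⟩ := hD c ((mem_words D).1 hc)
  rw [show Complex.I ^ hWt c = 1 by rw [ht, pow_mul, Complex.I_pow_four, one_pow]]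
  simp

lemma enum_shadow {n s : ℕ} {D : Submodule (ZMod 2) (Fin n → ZMod 2)} (hD : SelfDual2 D)
    (hS : SinglyEven (D : Set (Fin n → ZMod 2))) (hsn : s ≤ n)
    (h : ∀ v ∈ shadow (D : Set (Fin n → ZMod 2)), s ≤ hWt v) :
    (1 + X ^ 2) ^ s ∣ enum D := by
  classical
  have hmul : ∀ a ∈ D, ∀ b ∈ D, Complex.I ^ hWt (a + b) = Complex.I ^ hWt a * Complex.I ^ hWt b := by
    intro a ha b hb
    obtain ⟨t, ht⟩ := even_mul hD ha hb
    rw [← pow_add, ← hWt_add a b, ht, pow_add, ← mul_assoc, pow_mul]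
    norm_num [Complex.I_pow_four]
  have h1 := T_enum_comp D Complex.I
  rw [macw D (fun c => Complex.I ^ hWt c) hmul] at h1
  have h2 : X ^ s ∣ T n ((enum D).comp (C Complex.I * X)) := by
    rw [h1]
    refine Dvd.dvd.mul_left (Finset.dvd_sum fun v hv => pow_dvd_pow _ (h v ?_)) _
    simp only [Finset.mem_filter, Finset.mem_univ, true_and] at hv
    constructor
    · intro y hy
      obtain ⟨t, ht⟩ := hy.2
      have := hv y hy.1
      rw [ht, pow_mul, Complex.I_pow_four, one_pow, one_mul, chi_eq_one] at this
      simpa only [mul_comm] using this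
    · intro hvD
      obtain ⟨c, hc, hc4⟩ := hS
      have := hv c hc
      rw [chi_eq_one.2 ((mem_iff hD).1 hc v hvD), mul_one] at this
      obtain ⟨t, ht⟩ := even_wt hD hc
      rw [ht, pow_mul, Complex.I_sq] at this
      have ht2 : ¬ Even t := by
        rintro ⟨r, hr⟩; apply hc4; exact ⟨r, by omega⟩
      rw [(Nat.not_even_iff_odd.1 ht2).neg_one_pow] at this
      norm_num at this
  have hdeg : ((enum D).comp (C Complex.I * X)).natDegree ≤ n := by
    rw [enum_comp]
    refine natDegree_sum_le_of_forall_le _ _ fun c _ => ?_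
    exact (natDegree_C_mul_X_pow_le _ _).trans (hWt_le c)
  have hdeg2 : (T n ((enum D).comp (C Complex.I * X))).natDegree ≤ n := by
    rw [h1]
    refine (natDegree_C_mul_le _ _).trans ?_
    refine natDegree_sum_le_of_forall_le _ _ fun c _ => ?_
    simpa using hWt_le c
  have h3 := T_dvd hdeg2 h2 hsn
  rw [T_T hdeg, smul_eq_C_mul] at h3
  have h4 := (IsUnit.dvd_mul_left (isUnit_C.2 (by simp))).1 h3
  obtain ⟨q, hq⟩ := h4
  have hII : (C (-Complex.I) * C Complex.I : ℂ[X]) = 1 := by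
    rw [← C_mul]; simp
  have hII' : (C (Complex.I) * C Complex.I : ℂ[X]) = -1 := by
    rw [← C_mul]; simp
  have h5 : (1 - C (-Complex.I) * X) ^ s ∣ enum D := by
    have := congrArg (fun r => r.comp (C (-Complex.I) * X)) hq
    simp only [comp_assoc, mul_comp, pow_comp, sub_comp, one_comp, X_comp, C_comp] at this
    rw [← mul_assoc, mul_comm (C Complex.I), hII, one_mul, comp_X] at this
    exact ⟨_, this⟩
  have h6 : (1 - C (Complex.I) * X) ^ s ∣ enum D := by
    obtain ⟨q, hq⟩ := h5
    have := congrArg (fun r => r.comp (-X)) hq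
    simp only [mul_comp, pow_comp, sub_comp, one_comp, X_comp, C_comp, enum_even hD] at this
    rw [show (C (-Complex.I) * -X : ℂ[X]) = C Complex.I * X by rw [C_neg]; ring] at this
    exact ⟨_, this⟩
  have hcop : IsCoprime (1 - C (-Complex.I) * X) (1 - C (Complex.I) * X) := by
    refine coprime_lin ?_
    intro hh
    have := congrArg Complex.im hh
    norm_num at this
  have h7 := (hcop.pow (m := s) (n := s)).mul_dvd h5 h6
  rw [← mul_pow] at h7
  convert h7 using 2
  rw [C_neg]
  linear_combination X ^ 2 * hII'

/-- the additive embedding of `ZMod 2` into `ZMod 4` -/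
def dbl : ZMod 2 →+ ZMod 4 where
  toFun a := if a = 0 then 0 else 2
  map_zero' := by decide
  map_add' := by decide

lemma dbl_mul : ∀ (a : ZMod 2) (b : ZMod 4), dbl a * b =
    dbl (a * ZMod.castHom (by norm_num : (2:ℕ) ∣ 4) (ZMod 2) b) := by decide

lemma dbl_lee : ∀ a : ZMod 2, leeVal (dbl a) = 2 * if a ≠ 0 then 1 else 0 := by decide

lemma dbl_inj : ∀ a : ZMod 2, dbl a = 0 → a = 0 := by decide

lemma sq_res : ∀ b : ZMod 4, b * b =
    if ZMod.castHom (by norm_num : (2:ℕ) ∣ 4) (ZMod 2) b ≠ 0 then 1 else 0 := by decide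

lemma wt_ge {n d : ℕ} {C : Submodule (ZMod 4) (Fin n → ZMod 4)} (hsd : SelfDualZ4 C)
    (hlee : minLee (C : Set (Fin n → ZMod 4)) = 2 * d) {x : Fin n → ZMod 2}
    (hx : x ∈ dual2 (residue (C : Set (Fin n → ZMod 4)))) (hx0 : x ≠ 0) : d ≤ hWt x := by
  have hy : (fun i => dbl (x i)) ∈ (C : Set (Fin n → ZMod 4)) := by
    rw [hsd]
    intro c hc
    have := hx (res2 c) ⟨c, hc, rfl⟩
    simp only [dbl_mul]
    rw [← map_sum]
    have h2 : ∑ i, x i * ZMod.castHom (by norm_num : (2:ℕ) ∣ 4) (ZMod 2) (c i) = 0 := this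
    rw [h2, map_zero]
  have h1 : leeWt (fun i => dbl (x i)) = 2 * hWt x := by
    simp only [leeWt, dbl_lee]
    rw [← Finset.mul_sum, hWt_eq]
  have h2 : minLee (C : Set (Fin n → ZMod 4)) ≤ leeWt (fun i => dbl (x i)) := by
    refine Nat.sInf_le ⟨_, hy, ?_, rfl⟩
    intro h
    exact hx0 (funext fun i => dbl_inj _ (congrFun h i))
  omega

lemma res_even {n : ℕ} {C : Submodule (ZMod 4) (Fin n → ZMod 4)} (hsd : SelfDualZ4 C)
    {c : Fin n → ZMod 4} (hc : c ∈ (C : Set (Fin n → ZMod 4))) : 4 ∣ hWt (res2 c) := by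
  have h1 : c ∈ dualZ4 (C : Set (Fin n → ZMod 4)) := by rw [← hsd]; exact hc
  have h2 := h1 c hc
  rw [← ZMod.natCast_eq_zero_iff, hWt_eq, Nat.cast_sum, ← h2]
  refine Finset.sum_congr rfl fun i _ => ?_
  rw [sq_res]
  rw [Nat.cast_ite, Nat.cast_one, Nat.cast_zero]
  rfl

lemma minHam_eq {n d : ℕ} {S : Set (Fin n → ZMod 2)} (h1 : ∀ x ∈ S, x ≠ 0 → d ≤ hWt x)
    (h2 : ∃ x ∈ S, x ≠ 0 ∧ hWt x = d) : minHam S = d := by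
  refine le_antisymm (Nat.sInf_le h2) ?_
  refine le_csInf ⟨d, h2⟩ ?_
  rintro _ ⟨x, hx, hx0, rfl⟩
  exact h1 x hx hx0

lemma main_aux (k m : ℕ) (hm : m = 12 * k + 8)
    (C : Submodule (ZMod 4) (Fin (2 * m) → ZMod 4))
    (hsd : SelfDualZ4 C)
    (hlee : minLee (C : Set (Fin (2 * m) → ZMod 4)) = 2 * (4 * k + 4))
    (D : Submodule (ZMod 2) (Fin (2 * m) → ZMod 2))
    (hD : SelfDual2 D)
    (hsub : residue (C : Set (Fin (2 * m) → ZMod 4)) ⊆ (D : Set (Fin (2 * m) → ZMod 2))) :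
    (SinglyEven (D : Set (Fin (2 * m) → ZMod 2)) →
      minHam (shadow (D : Set (Fin (2 * m) → ZMod 2))) = 4 * k + 4 ∧
      minHam (D : Set (Fin (2 * m) → ZMod 2)) = 4 * k + 4) ∧
    (DoublyEven (D : Set (Fin (2 * m) → ZMod 2)) →
      minHam (D : Set (Fin (2 * m) → ZMod 2)) = 4 * k + 4) := by
  have hInv := inv_enum hD
  have hDw : ∀ x ∈ (D : Set (Fin (2 * m) → ZMod 2)), x ≠ 0 → 4 * k + 4 ≤ hWt x := by
    intro x hx hx0
    refine wt_ge hsd hlee (fun y hy => ?_) hx0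
    exact (mem_iff hD).1 hx y (hsub hy)
  have hSw0 : ∀ x ∈ shadow (D : Set (Fin (2 * m) → ZMod 2)), x ≠ 0 := by
    rintro x hx rfl
    exact hx.2 D.zero_mem
  have hSw : ∀ x ∈ shadow (D : Set (Fin (2 * m) → ZMod 2)), 4 * k + 4 ≤ hWt x := by
    intro x hx
    refine wt_ge hsd hlee (fun y hy => ?_) (hSw0 x hx)
    refine hx.1 y ⟨hsub hy, ?_⟩
    obtain ⟨c, hc, rfl⟩ := hy
    exact res_even hsd hc
  have hlow : ∀ i, 0 < i → i < 4 * k + 4 → (enum D).coeff i = 0 := by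
    intro i hi hi'
    refine enum_coeff_eq_zero D fun c hc h => ?_
    have hc0 : c ≠ 0 := by
      rintro rfl; rw [hWt_zero] at h; omega
    have := hDw c hc hc0
    omega
  have hlow' : (¬ ∃ x ∈ (D : Set (Fin (2 * m) → ZMod 2)), x ≠ 0 ∧ hWt x = 4 * k + 4) →
      ∀ i, 0 < i → i ≤ 4 * k + 4 → (enum D).coeff i = 0 := by
    intro hne i hi hi'
    rcases hi'.lt_or_eq with h | h
    · exact hlow i hi h
    · refine enum_coeff_eq_zero D fun c hc hh => hne ⟨c, hc, ?_, by omega⟩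
      rintro rfl; rw [hWt_zero] at hh; omega
  constructor
  · intro hS
    constructor
    · refine minHam_eq (fun x hx _ => hSw x hx) ?_
      by_contra hne
      refine no_singly_shadow k (enum D) (hm ▸ hInv) (enum_even hD) (enum_coeff_zero D) hlow
        (enum_shadow hD hS (by omega) fun v hv => ?_)
      have := hSw v hv
      rcases this.lt_or_eq with h | h
      · exact h
      · exact absurd ⟨v, hv, hSw0 v hv, h.symm⟩ hne
    · refine minHam_eq hDw ?_
      by_contra hne
      exact no_singly_code k (enum D) (hm ▸ hInv) (enum_even hD) (enum_coeff_zero D) (hlow' hne)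
        (enum_shadow hD hS (by omega) hSw)
  · intro hDE
    refine minHam_eq hDw ?_
    by_contra hne
    exact no_doubly k (enum D) (hm ▸ hInv) (enum_doubly hDE) (enum_coeff_zero D) (hlow' hne)

lemma main_aux' (k n : ℕ) (hn : n = 24 * k + 16)
    (C : Submodule (ZMod 4) (Fin n → ZMod 4))
    (hsd : SelfDualZ4 C)
    (hlee : minLee (C : Set (Fin n → ZMod 4)) = 8 * k + 8)
    (D : Submodule (ZMod 2) (Fin n → ZMod 2))
    (hD : SelfDual2 D)
    (hsub : residue (C : Set (Fin n → ZMod 4)) ⊆ (D : Set (Fin n → ZMod 2))) :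
    (SinglyEven (D : Set (Fin n → ZMod 2)) →
      minHam (shadow (D : Set (Fin n → ZMod 2))) = 4 * k + 4 ∧
      minHam (D : Set (Fin n → ZMod 2)) = 4 * k + 4) ∧
    (DoublyEven (D : Set (Fin n → ZMod 2)) →
      minHam (D : Set (Fin n → ZMod 2)) = 4 * k + 4) := by
  obtain rfl : n = 2 * (12 * k + 8) := by omega
  exact main_aux k _ rfl C hsd (by omega) D hD hsub

end Z4Aux

open Z4Note in
/-- length `24k+16`, minimum Lee weight `8k+8`: a binary self-dual code
containing the residue code is s-extremal with minimum weight `4k+4` if singly even,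
and extremal (minimum weight `4k+4`) if doubly even. -/
theorem sextremal_or_extremal_of_residue_subset_length24k16
    (k : ℕ) (hk : 0 < k)
    (C : Submodule (ZMod 4) (Fin (24 * k + 16) → ZMod 4))
    (hsd : SelfDualZ4 C)
    (hlee : minLee (C : Set (Fin (24 * k + 16) → ZMod 4)) = 8 * k + 8)
    (D : Submodule (ZMod 2) (Fin (24 * k + 16) → ZMod 2))
    (hD : SelfDual2 D)
    (hsub : residue (C : Set (Fin (24 * k + 16) → ZMod 4)) ⊆
      (D : Set (Fin (24 * k + 16) → ZMod 2))) :
    (SinglyEven (D : Set (Fin (24 * k + 16) → ZMod 2)) →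
      SExtremal D ∧ minHam (D : Set (Fin (24 * k + 16) → ZMod 2)) = 4 * k + 4) ∧
    (DoublyEven (D : Set (Fin (24 * k + 16) → ZMod 2)) →
      minHam (D : Set (Fin (24 * k + 16) → ZMod 2)) = 4 * k + 4) := by
  obtain ⟨h1, h2⟩ := Z4Aux.main_aux' k _ rfl C hsd hlee D hD hsub
  refine ⟨fun hS => ?_, h2⟩
  obtain ⟨ha, hb⟩ := h1 hS
  refine ⟨⟨hD, hS, fun _ => ?_, fun h => ?_⟩, hb⟩
  · rw [ha, hb, Fintype.card_fin]; omega
  · exfalso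
    have := h.1
    rw [Fintype.card_fin] at this
    omega
end

section
/- Let k be a positive integer and let C be a self-dual Z4-code of length 24k+22 with minimum Lee weight 8k+8. Then every binary self-dual code containing the residue code C^(1) is an s-extremal self-dual code with minimum Hamming weight equal to 4k+4 or 4k+6. -/
open Finset

namespace Z4P
open PowerSeries

lemma resid (h H : PowerSeries ℂ) (hH : h * H = 1) (r : ℕ) :
    coeff (r+1) (derivative ℂ (X * h) * H ^ (r+2)) = 0 := by
  have h1 : derivative ℂ (X * h) = h + X * derivative ℂ h := by
    rw [Derivation.leibniz]; simp [smul_eq_mul]; ring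
  have h2 : derivative ℂ h * H + h * derivative ℂ H = 0 := by
    have := congrArg (derivative ℂ) hH
    rw [Derivation.leibniz, derivative_one] at this
    simp only [smul_eq_mul] at this
    linear_combination this
  have h3 : derivative ℂ (X * h) * H ^ (r+2) = H ^ (r+1) - X * (derivative ℂ H * H ^ r) := by
    rw [h1]
    linear_combination (H ^ (r+1) - X * derivative ℂ H * H ^ r) * hH + X * H ^ (r+1) * h2
  have h4 : derivative ℂ (H ^ (r+1)) = C ((r:ℂ)+1) * (derivative ℂ H * H ^ r) := by
    rw [derivative_pow]; simp; ring
  have h5 := congrArg (coeff r) h4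
  rw [coeff_derivative, coeff_C_mul] at h5
  rw [h3, map_sub, coeff_succ_X_mul]
  have h6 : ((r:ℂ)+1) ≠ 0 := by exact_mod_cast Nat.succ_ne_zero r
  have : ((r:ℂ)+1) * (coeff (r+1) (H^(r+1)) - coeff r (derivative ℂ H * H ^ r)) = 0 := by
    linear_combination h5
  exact (mul_eq_zero.mp this).resolve_left h6

lemma kills (h H : PowerSeries ℂ) (hH : h * H = 1) (M m : ℕ) (hm : m ≤ M) :
    coeff (M+1) ((1 + X * h) ^ m * derivative ℂ (1 + X * h) * H ^ (M+2)) = 0 := by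
  rw [map_add, derivative_one, zero_add, add_comm 1 (X * h), add_pow, Finset.sum_mul, Finset.sum_mul, map_sum]
  apply Finset.sum_eq_zero
  intro i hi
  have hi' : i ≤ M := by
    have := Finset.mem_range.mp hi; omega
  obtain ⟨r, rfl⟩ := Nat.exists_eq_add_of_le hi'
  have e1 : (X * h) ^ i * 1 ^ (m - i) * ((m.choose i : ℕ) : PowerSeries ℂ) * derivative ℂ (X * h) * H ^ (i + r + 2)
      = C ((m.choose i : ℕ) : ℂ) * (X ^ i * (derivative ℂ (X * h) * H ^ (r + 2))) := by
    have : (h * H) ^ i = 1 := by rw [hH, one_pow]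
    rw [mul_pow] at this
    simp only [map_natCast, one_pow, mul_pow]
    linear_combination (X ^ i * ((m.choose i : ℕ) : PowerSeries ℂ) * derivative ℂ (X * h) * H ^ (r + 2)) * this
  rw [e1, coeff_C_mul, coeff_X_pow_mul', if_pos (by omega)]
  have : i + r + 1 - i = r + 1 := by omega
  rw [this, resid h H hH, mul_zero]

lemma kill_fs (v w a b e : PowerSeries ℂ) (hv : v = 1 + C Complex.I * X) (hw : w = 1 - C Complex.I * X)
    (hva : v * a = 1) (hwb : w * b = 1) (he : (1 - X^2) * e = 1) (N j m s : ℕ)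
    (hs : s + 4 * j = N + 4 * m) (hm : m ≤ 2 * j) (hsN : s ≤ 2 * N) :
    coeff (2*j+1) (derivative ℂ (v ^ s * w ^ (2 * N - s) * (a * b) ^ N) * ((v * w)^2 * e) ^ (2*j+2)) = 0 := by
  set f := v ^ s * w ^ (2 * N - s) * (a * b) ^ N with hf
  set q := (v * b) ^ 4 with hq
  have hI : (C Complex.I : PowerSeries ℂ) ^ 2 = -1 := by
    rw [← map_pow, Complex.I_sq]; simp
  have hI4 : (C (Complex.I) : PowerSeries ℂ) ^ 4 = 1 := by
    rw [← map_pow, Complex.I_pow_four]; simp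
  have hfq : f * q ^ j = q ^ m := by
    have e1 : f * q ^ j = v ^ (s + 4 * j) * a ^ N * (w ^ (2 * N - s) * b ^ (N + 4 * j)) := by
      rw [hf, hq]; ring
    have e2 : N + 4 * j = (2 * N - s) + 4 * m := by omega
    have e3 : (v * a) ^ N = 1 := by rw [hva, one_pow]
    have e4 : (w * b) ^ (2 * N - s) = 1 := by rw [hwb, one_pow]
    rw [e1, hs, e2]
    have : v ^ (N + 4 * m) * a ^ N * (w ^ (2 * N - s) * b ^ (2 * N - s + 4 * m))
      = (v * a) ^ N * (w * b) ^ (2 * N - s) * q ^ m := by rw [hq]; ring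
    rw [this, e3, e4]; ring
  clear_value f q
  have hd : derivative ℂ f * q ^ (j+1) = C ((m:ℂ) - j) * (q ^ m * derivative ℂ q) := by
    have h1 := congrArg (derivative ℂ) hfq
    rw [Derivation.leibniz, derivative_pow q, derivative_pow q] at h1
    simp only [smul_eq_mul] at h1
    have key : ∀ t : ℕ, (t : PowerSeries ℂ) * q ^ (t - 1) * derivative ℂ q * q = (t : PowerSeries ℂ) * q ^ t * derivative ℂ q := by
      intro t
      cases t with
      | zero => simp
      | succ t => simp only [Nat.add_sub_cancel]; ring
    have k1 := key j
    have k2 := key m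
    simp only [map_sub, map_natCast]
    linear_combination q * h1 - f * k1 + k2 - (j : PowerSeries ℂ) * derivative ℂ q * hfq
  set h := C (8 * Complex.I) * ((1 - X^2) * b ^ 4) with hh
  set H := C (-Complex.I / 8) * (e * w ^ 4) with hH
  have hc : (C (8 * Complex.I) : PowerSeries ℂ) * C (-Complex.I / 8) = 1 := by
    rw [← map_mul]
    have : 8 * Complex.I * (-Complex.I / 8) = 1 := by
      linear_combination -Complex.I_sq
    rw [this, map_one]
  have hhH : h * H = 1 := by
    have : (w * b) ^ 4 = 1 := by rw [hwb, one_pow]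
    calc h * H = (C (8 * Complex.I) * C (-Complex.I / 8)) * ((1 - X^2) * e) * (w * b) ^ 4 := by
            rw [hh, hH]; ring
      _ = 1 := by rw [hc, he, this]; ring
  have hqh : q = 1 + X * h := by
    have : (w * b) ^ 4 = 1 := by rw [hwb, one_pow]
    have e1 : v ^ 4 = w ^ 4 + C (8 * Complex.I) * X * (1 - X^2) := by
      have : (C (8 * Complex.I) : PowerSeries ℂ) = 8 * C Complex.I := by
        rw [map_mul]; rfl
      rw [hv, hw, this]
      linear_combination (8 * C Complex.I * X ^ 3) * hI
    rw [hq, hh, mul_pow, e1]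
    linear_combination this
  have hg : ((v * w)^2 * e) ^ (2*j+2) = C ((8 * Complex.I) ^ (2*j+2)) * (q ^ (j+1) * H ^ (2*j+2)) := by
    have e1 : ((v * w)^2 * e) ^ 2 = q * (C (8 * Complex.I) * H) ^ 2 := by
      have : (w * b) ^ 4 = 1 := by rw [hwb, one_pow]
      have e2 : C (8 * Complex.I) * H = e * w ^ 4 := by
        rw [hH, ← mul_assoc, hc, one_mul]
      rw [e2, hq]
      linear_combination -(v^4 * w^4 * e^2) * this
    have e3 : 2 * j + 2 = 2 * (j+1) := by ring
    rw [e3, pow_mul, e1, map_pow, mul_pow]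
    rw [← pow_mul, mul_pow]; ring
  have : derivative ℂ f * ((v * w)^2 * e) ^ (2*j+2)
      = C ((8 * Complex.I) ^ (2*j+2) * ((m:ℂ) - j)) * (q ^ m * derivative ℂ q * H ^ (2*j+2)) := by
    rw [hg, map_mul C]
    linear_combination (C ((8 * Complex.I) ^ (2*j+2)) * H ^ (2*j+2)) * hd
  rw [this, coeff_C_mul, hqh, kills h H hhH (2*j) m hm, mul_zero]

/-- the combinatorial coefficient vanishes -/
lemma coeff_vanish (e l P : PowerSeries ℂ) (he : (1 - X^2) * e = 1) (hl : (1 + X^2) * l = 1)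
    (N j M : ℕ) (hN : 0 < N) (hNj : N + 1 = 4 * (j + 1) + M)
    {ι : Type*} (S : Finset ι) (wt : ι → ℕ) (c : ℂ) (hc : c ≠ 0)
    (hP : C c * P = ∑ s ∈ S, (1 + C Complex.I * X) ^ wt s * (1 - C Complex.I * X) ^ (2 * N - wt s))
    (hwt : ∀ s ∈ S, ∃ m, wt s + 4 * j = N + 4 * m ∧ m ≤ 2 * j ∧ wt s ≤ 2 * N)
    (hP1 : X ^ (2 * j + 3) ∣ P - 1) :
    coeff (2 * j) (l ^ M * e ^ (2 * j + 2)) = 0 := by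
  obtain ⟨a, hva⟩ : ∃ a : PowerSeries ℂ, (1 + C Complex.I * X) * a = 1 :=
    ⟨_, PowerSeries.mul_inv_cancel _ (by simp)⟩
  obtain ⟨b, hwb⟩ : ∃ b : PowerSeries ℂ, (1 - C Complex.I * X) * b = 1 :=
    ⟨_, PowerSeries.mul_inv_cancel _ (by simp)⟩
  have hI : (C Complex.I : PowerSeries ℂ) ^ 2 = -1 := by
    rw [← map_pow, Complex.I_sq]; simp
  set v : PowerSeries ℂ := 1 + C Complex.I * X with hv
  set w : PowerSeries ℂ := 1 - C Complex.I * X with hw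
  have hvw : v * w = 1 + X^2 := by
    rw [hv, hw]; linear_combination -X^2 * hI
  have hab : a * b = l := by
    have : (1 + X^2) * (a * b) = 1 := by
      rw [← hvw]; linear_combination (w * b) * hva + hwb
    linear_combination l * this - a * b * hl
  -- kill the shadow side
  have hkill : coeff (2*j+1) (derivative ℂ (P * l ^ N) * ((v * w)^2 * e) ^ (2*j+2)) = 0 := by
    have h1 : C c * (derivative ℂ (P * l ^ N) * ((v * w)^2 * e) ^ (2*j+2))
       = ∑ s ∈ S, derivative ℂ (v ^ wt s * w ^ (2 * N - wt s) * (a * b) ^ N) * ((v * w)^2 * e) ^ (2*j+2) := by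
      rw [← Finset.sum_mul, ← map_sum, ← Finset.sum_mul, ← hP, hab, mul_assoc (C c),
        ← PowerSeries.smul_eq_C_mul (P * l ^ N) c, Derivation.map_smul, PowerSeries.smul_eq_C_mul, mul_assoc]
    have h2 := congrArg (coeff (2*j+1)) h1
    rw [coeff_C_mul, map_sum, Finset.sum_eq_zero] at h2
    · exact (mul_eq_zero.mp h2).resolve_left hc
    · intro s hs
      obtain ⟨m, h3, h4, h5⟩ := hwt s hs
      exact kill_fs v w a b e hv hw hva hwb he N j m (wt s) h3 h4 h5
  obtain ⟨R, hR⟩ := hP1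
  have hP2 : P = 1 + X ^ (2*j+3) * R := by linear_combination hR
  have hd1 : derivative ℂ l = - (2 * X) * l ^ 2 := by
    have := congrArg (derivative ℂ) hl
    rw [Derivation.leibniz, derivative_one, map_add, derivative_one, derivative_pow, derivative_X] at this
    simp only [smul_eq_mul] at this
    push_cast at this
    linear_combination l * this - (derivative ℂ l) * hl
  have hd2 : derivative ℂ (l ^ N) = C (-2 * (N:ℂ)) * (X * l ^ (N+1)) := by
    obtain ⟨N1, rfl⟩ : ∃ N1, N = N1 + 1 := ⟨N - 1, by omega⟩
    have : (C (-2 * ((N1 + 1 : ℕ):ℂ)) : PowerSeries ℂ) = -2 * ((N1+1 : ℕ) : PowerSeries ℂ) := by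
      rw [map_mul, map_natCast, map_neg]; rfl
    rw [derivative_pow, hd1, this, Nat.add_sub_cancel]; ring
  have hd3 : ∃ T, derivative ℂ (P * l ^ N) = C (-2 * (N:ℂ)) * (X * l ^ (N+1)) + X ^ (2*j+2) * T := by
    refine ⟨((2*j+3 : ℕ) : PowerSeries ℂ) * (R * l ^ N) + X * derivative ℂ (R * l ^ N), ?_⟩
    rw [hP2, add_mul, one_mul, map_add, hd2, mul_assoc, Derivation.leibniz, derivative_pow, derivative_X]
    simp only [smul_eq_mul]
    have : 2 * j + 3 - 1 = 2 * j + 2 := by omega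
    rw [this]; ring
  obtain ⟨T, hT⟩ := hd3
  rw [hT, hvw] at hkill
  have hfin : (C (-2 * (N:ℂ)) * (X * l ^ (N+1)) + X ^ (2*j+2) * T) * ((1 + X^2)^2 * e) ^ (2*j+2)
     = C (-2 * (N:ℂ)) * (X * (l ^ M * e ^ (2 * j + 2))) + X ^ (2*j+2) * (T * ((1 + X^2)^2 * e) ^ (2*j+2)) := by
    have : ((1 + X^2) * l) ^ (4 * (j+1)) = 1 := by rw [hl, one_pow]
    have h2 : l ^ (N+1) * ((1 + X^2)^2 * e) ^ (2*j+2) = l ^ M * e ^ (2 * j + 2) := by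
      rw [hNj]
      calc l ^ (4 * (j + 1) + M) * ((1 + X^2)^2 * e) ^ (2*j+2)
          = ((1 + X^2) * l) ^ (4 * (j+1)) * (l ^ M * e ^ (2 * j + 2)) := by
            rw [mul_pow ((1 + X^2)^2) e, ← pow_mul, mul_pow, pow_add]
            have : 2 * (2 * j + 2) = 4 * (j+1) := by ring
            rw [this]; ring
        _ = _ := by rw [this, one_mul]
    linear_combination (C (-2 * (N:ℂ)) * X) * h2
  rw [hfin, map_add, coeff_C_mul, coeff_succ_X_mul, coeff_X_pow_mul', if_neg (by omega), add_zero] at hkill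
  refine (mul_eq_zero.mp hkill).resolve_left ?_
  have : (N:ℂ) ≠ 0 := by exact_mod_cast hN.ne'
  simpa using this

lemma coeff_pos_aux (B : PowerSeries ℕ) (hB : coeff 0 B = 1) (K i : ℕ) :
    coeff i ((PowerSeries.mk 1 : PowerSeries ℂ) ^ (K+1) * PowerSeries.map (Nat.castRingHom ℂ) B) ≠ 0 := by
  have h1 : (PowerSeries.mk 1 : PowerSeries ℂ) ^ (K+1) = PowerSeries.map (Nat.castRingHom ℂ) (PowerSeries.mk fun n => (K + n).choose K) := by
    rw [mk_one_pow_eq_mk_choose_add]; ext n; simp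
  rw [h1, ← map_mul, coeff_map]
  have h2 : 0 < coeff i ((PowerSeries.mk fun n => (K + n).choose K : PowerSeries ℕ) * B) := by
    rw [coeff_mul]
    apply Finset.sum_pos'
    · intros; exact Nat.zero_le _
    · refine ⟨(i, 0), by simp, ?_⟩
      simp only [coeff_mk, hB, mul_one]
      exact Nat.choose_pos (by omega)
  simpa using h2.ne'

lemma coeff_ne_aux (e l : PowerSeries ℂ) (he : (1 - X^2) * e = 1) (hl : (1 + X^2) * l = 1)
    (ε : ℂ) (hε : ε ^ 2 = 1) (K i : ℕ) :
    coeff (4 * i) ((l * e) ^ (K+1) * (1 + C ε * X^2) ^ 6) ≠ 0 := by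
  set φ := PowerSeries.expand (R := ℂ) 4 (by norm_num) with hφ
  have h1 : l * e = φ (PowerSeries.mk 1) := by
    have h2 : φ (PowerSeries.mk 1) * (1 - X^4) = 1 := by
      have := congrArg φ (mk_one_mul_one_sub_eq_one ℂ)
      rw [map_mul, map_sub, map_one, hφ, PowerSeries.expand_X] at this
      exact this
    linear_combination (-l * e) * h2 + (1 - X^2) * φ (PowerSeries.mk 1) * e * hl + φ (PowerSeries.mk 1) * he
  have hε' : (C ε : PowerSeries ℂ) ^ 2 = 1 := by rw [← map_pow, hε, map_one]
  set A : PowerSeries ℂ := (PowerSeries.mk 1) ^ (K+1) with hA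
  have hX : φ X = X ^ 4 := PowerSeries.expand_X _ _
  have h3 : (l * e) ^ (K+1) * (1 + C ε * X^2) ^ 6
     = φ (A * PowerSeries.map (Nat.castRingHom ℂ) (1 + 15 * X + 15 * X^2 + X^3))
      + X^2 * (C ε * φ (A * (6 + 20 * X + 6 * X^2))) := by
    rw [h1, ← map_pow, ← hA]
    simp only [map_add, map_mul, map_pow, map_one, hX, map_ofNat, PowerSeries.map_X]
    have : (1 + C ε * X^2) ^ 6 = (1 + 15 * X^4 + 15 * (X^4)^2 + (X^4)^3) + X^2 * C ε * (6 + 20 * X^4 + 6 * (X^4)^2) := by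
      set c : PowerSeries ℂ := C ε
      linear_combination (15 * X^4 + 20 * X^6 * c + 15 * X^8 * (c^2 + 1) + 6 * X^10 * c * (c^2+1) + X^12 * (c^4 + c^2 + 1)) * hε'
    rw [this]; ring
  rw [h3, map_add, hφ, coeff_expand_mul, coeff_X_pow_mul', coeff_C_mul]
  have hz : (if 2 ≤ 4 * i then ε * coeff (4 * i - 2) (expand 4 (by norm_num) (A * (6 + 20 * X + 6 * X^2))) else 0) = 0 := by
    split_ifs with h
    · rw [coeff_expand_of_not_dvd _ _ _ (by omega), mul_zero]
    · rfl
  rw [hz, add_zero]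
  apply coeff_pos_aux
  simp

end Z4P
namespace Z4P
open Z4Note

section
variable {ι : Type*} [Fintype ι]

lemma hWt_eq_sum (x : ι → ZMod 2) : hWt x = ∑ i, (x i).val := by
  unfold hWt
  rw [Finset.card_filter]
  apply Finset.sum_congr rfl
  intro i _
  generalize x i = a
  revert a; decide

lemma cast_val (x : ι → ZMod 2) : ((∑ i, (x i).val : ℕ) : ZMod 2) = ∑ i, x i := by
  push_cast
  apply Finset.sum_congr rfl
  intro i _
  exact ZMod.natCast_zmod_val _

lemma hWt_add (x y : ι → ZMod 2) :
    hWt (x + y) + 2 * ∑ i, (x i * y i).val = hWt x + hWt y := by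
  rw [hWt_eq_sum, hWt_eq_sum, hWt_eq_sum, Finset.mul_sum, ← Finset.sum_add_distrib,
    ← Finset.sum_add_distrib]
  apply Finset.sum_congr rfl
  intro i _
  rw [Pi.add_apply]
  generalize x i = a
  generalize y i = b
  revert a b; decide

lemma hWt_le (x : ι → ZMod 2) : hWt x ≤ Fintype.card ι := by
  unfold hWt; exact Finset.card_le_univ _

lemma hWt_zero : hWt (0 : ι → ZMod 2) = 0 := by simp [hWt]

lemma hWt_pos (x : ι → ZMod 2) (h : x ≠ 0) : hWt x ≠ 0 := by
  intro h0
  apply h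
  unfold hWt at h0
  rw [Finset.card_eq_zero, Finset.filter_eq_empty_iff] at h0
  funext i
  simpa using h0 (Finset.mem_univ i)

lemma hWt_compl (x : ι → ZMod 2) : hWt (x + fun _ => 1) + hWt x = Fintype.card ι := by
  rw [hWt_eq_sum, hWt_eq_sum, ← Finset.sum_add_distrib, Fintype.card_eq_sum_ones]
  apply Finset.sum_congr rfl
  intro i _
  rw [Pi.add_apply]
  generalize x i = a
  revert a; decide

lemma mem_iff {D : Submodule (ZMod 2) (ι → ZMod 2)} (hD : SelfDual2 D) (x : ι → ZMod 2) :
    x ∈ D ↔ ∀ y ∈ D, ∑ i, x i * y i = 0 := by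
  have : x ∈ (D : Set (ι → ZMod 2)) ↔ x ∈ dual2 (D : Set (ι → ZMod 2)) := by
    conv_lhs => rw [hD]
  exact this

lemma even_of_dvd {m : ℕ} (h : (m : ZMod 2) = 0) : m % 2 = 0 := by
  rw [ZMod.natCast_eq_zero_iff] at h; omega

lemma odd_of_one {m : ℕ} (h : (m : ZMod 2) = 1) : m % 2 = 1 := by
  rcases Nat.mod_two_eq_zero_or_one m with h0 | h0
  · have : (m : ZMod 2) = 0 := by rw [ZMod.natCast_eq_zero_iff]; omega
    rw [this] at h; exact absurd h (by decide)
  · exact h0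

lemma sd_even {D : Submodule (ZMod 2) (ι → ZMod 2)} (hD : SelfDual2 D) {x : ι → ZMod 2} (hx : x ∈ D) :
    hWt x % 2 = 0 := by
  apply even_of_dvd
  rw [hWt_eq_sum, cast_val, ← (mem_iff hD x).mp hx x hx]
  apply Finset.sum_congr rfl
  intro i _
  generalize x i = a
  revert a; decide

lemma one_mem {D : Submodule (ZMod 2) (ι → ZMod 2)} (hD : SelfDual2 D) : (fun _ => 1 : ι → ZMod 2) ∈ D := by
  rw [mem_iff hD]
  intro y hy
  simp only [one_mul]
  rw [← cast_val, ← hWt_eq_sum, ZMod.natCast_eq_zero_iff]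
  have := sd_even hD hy
  omega

/-- `s` represents the half-weight functional on `D`. -/
def Good (D : Submodule (ZMod 2) (ι → ZMod 2)) (s : ι → ZMod 2) : Prop :=
  ∀ c ∈ D, ∑ i, s i * c i = ((hWt c / 2 : ℕ) : ZMod 2)

lemma half_add {D : Submodule (ZMod 2) (ι → ZMod 2)} (hD : SelfDual2 D) {x y : ι → ZMod 2}
    (hx : x ∈ D) (hy : y ∈ D) :
    ((hWt (x + y) / 2 : ℕ) : ZMod 2) = ((hWt x / 2 : ℕ) : ZMod 2) + ((hWt y / 2 : ℕ) : ZMod 2) := by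
  have h1 := hWt_add x y
  have h2 := sd_even hD hx
  have h3 := sd_even hD hy
  have h4 : (∑ i, (x i * y i).val) % 2 = 0 := by
    apply even_of_dvd
    rw [cast_val]
    exact (mem_iff hD x).mp hx y hy
  rw [← Nat.cast_add, ZMod.natCast_eq_natCast_iff']
  omega

lemma exists_good {D : Submodule (ZMod 2) (ι → ZMod 2)} (hD : SelfDual2 D) : ∃ s, Good D s := by
  classical
  let φ : D →+ ZMod 2 :=
    { toFun := fun c => ((hWt (c : ι → ZMod 2) / 2 : ℕ) : ZMod 2)
      map_zero' := by simp [hWt_zero]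
      map_add' := fun c d => half_add hD c.2 d.2 }
  obtain ⟨ψ, hψ⟩ := LinearMap.exists_extend (φ.toZModLinearMap 2)
  refine ⟨fun i => ψ (Pi.single i 1), ?_⟩
  intro c hc
  have h1 : ψ c = ((hWt c / 2 : ℕ) : ZMod 2) := by
    have := LinearMap.congr_fun hψ ⟨c, hc⟩
    exact this
  rw [← h1, LinearMap.pi_apply_eq_sum_univ ψ c]
  apply Finset.sum_congr rfl
  intro i _
  rw [smul_eq_mul, mul_comm]
  congr 1
  show ψ (Pi.single i 1) = _
  congr 1
  funext j
  simp [Pi.single_apply, eq_comm]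

lemma good_wt {D : Submodule (ZMod 2) (ι → ZMod 2)} (hD : SelfDual2 D) {s d : ι → ZMod 2}
    (hs : Good D s) (hd : d ∈ D) : hWt (s + d) % 4 = hWt s % 4 := by
  have h1 := hWt_add s d
  have h2 := sd_even hD hd
  have h3 : (∑ i, (s i * d i).val) % 2 = (hWt d / 2) % 2 := by
    have : ((∑ i, (s i * d i).val : ℕ) : ZMod 2) = ((hWt d / 2 : ℕ) : ZMod 2) := by
      rw [cast_val]; exact hs d hd
    rwa [ZMod.natCast_eq_natCast_iff'] at this
  omega

section poisson
variable {R : Type*} [CommRing R]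

/-- sign character -/
def chi (R : Type*) [CommRing R] (a : ZMod 2) : R := if a = 0 then 1 else -1

lemma chi_add (a b : ZMod 2) : chi R (a + b) = chi R a * chi R b := by
  have : ∀ a : ZMod 2, a = 0 ∨ a = 1 := by decide
  have h11 : (1 + 1 : ZMod 2) = 0 := by decide
  rcases this a with rfl | rfl <;> rcases this b with rfl | rfl <;> simp [chi, h11]

lemma chi_sum (x : ι → ZMod 2) : chi R (∑ i, x i) = ∏ i, chi R (x i) := by
  classical
  induction (Finset.univ : Finset ι) using Finset.induction_on with
  | empty => simp [chi]
  | insert a s ha ih => rw [Finset.sum_insert ha, Finset.prod_insert ha, chi_add, ih]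

lemma expand_term [DecidableEq ι] (z : R) (s : ι → ZMod 2) :
    (1 - z) ^ hWt s * (1 + z) ^ (Fintype.card ι - hWt s)
      = ∑ x : ι → ZMod 2, chi R (∑ i, s i * x i) * z ^ hWt x := by
  classical
  have h1 : (1 - z) ^ hWt s * (1 + z) ^ (Fintype.card ι - hWt s)
      = ∏ i, (if s i ≠ 0 then 1 - z else 1 + z) := by
    rw [Finset.prod_ite, Finset.prod_const, Finset.prod_const]
    congr 2
    have := Finset.card_filter_add_card_filter_not (s := (Finset.univ : Finset ι)) (fun i => s i ≠ 0)
    rw [Finset.card_univ] at this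
    unfold hWt
    omega
  have h2 : ∀ i, (if s i ≠ 0 then 1 - z else 1 + z)
      = ∑ a : ZMod 2, chi R (s i * a) * (if a ≠ 0 then z else 1) := by
    intro i
    have hu : (Finset.univ : Finset (ZMod 2)) = {0, 1} := by decide
    have : ∀ a : ZMod 2, a = 0 ∨ a = 1 := by decide
    rw [hu, Finset.sum_pair (by decide)]
    rcases this (s i) with h | h <;> simp [h, chi, sub_eq_add_neg]
  rw [h1, Finset.prod_congr rfl (fun i _ => h2 i), Fintype.prod_sum]
  apply Finset.sum_congr rfl
  intro x _
  rw [Finset.prod_mul_distrib, chi_sum, Finset.prod_ite, Finset.prod_const, Finset.prod_const, one_pow,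
    mul_one]
  rfl

open Classical in
/-- codewords as a finset -/
noncomputable def cw (D : Submodule (ZMod 2) (ι → ZMod 2)) : Finset (ι → ZMod 2) :=
  Finset.univ.filter (· ∈ D)

lemma mem_cw (D : Submodule (ZMod 2) (ι → ZMod 2)) (x : ι → ZMod 2) : x ∈ cw D ↔ x ∈ D := by
  simp [cw]

lemma two_eq (x : ι → ZMod 2) : x + x = 0 := by
  funext i
  simp only [Pi.add_apply, Pi.zero_apply]
  generalize x i = a
  revert a; decide

lemma char_sum_zero {D : Submodule (ZMod 2) (ι → ZMod 2)} (hD : SelfDual2 D) {x : ι → ZMod 2} (hx : x ∉ D) :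
    ∑ d ∈ cw D, chi R (∑ i, d i * x i) = 0 := by
  rw [mem_iff hD] at hx
  push Not at hx
  obtain ⟨y, hy, hxy⟩ := hx
  have hxy' : ∑ i, y i * x i = 1 := by
    have : ∀ a : ZMod 2, a ≠ 0 → a = 1 := by decide
    rw [← this _ hxy]
    exact Finset.sum_congr rfl (fun i _ => mul_comm _ _)
  have hchi : ∀ d : ι → ZMod 2, chi R (∑ i, (d + y) i * x i) = - chi R (∑ i, d i * x i) := by
    intro d
    simp only [Pi.add_apply, add_mul, Finset.sum_add_distrib]
    rw [hxy', chi_add]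
    simp [chi]
  apply Finset.sum_involution (fun d _ => d + y)
  · intro d _
    rw [hchi]; ring
  · intro d _ _ h
    have : y = 0 := by simpa using h
    apply hxy; simp [this]
  · intro d hd
    rw [mem_cw] at *
    exact D.add_mem hd hy
  · intro d _
    rw [add_assoc, two_eq, add_zero]

lemma poisson (I y : R) (hI : I * I = -1) {D : Submodule (ZMod 2) (ι → ZMod 2)} (hD : SelfDual2 D)
    {s : ι → ZMod 2} (hs : Good D s) :
    ((cw D).card : R) * ∑ c ∈ cw D, y ^ hWt c
      = ∑ d ∈ cw D, (1 + I * y) ^ hWt (s + d) * (1 - I * y) ^ (Fintype.card ι - hWt (s + d)) := by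
  classical
  have h1 : ∀ d ∈ cw D, (1 + I * y) ^ hWt (s + d) * (1 - I * y) ^ (Fintype.card ι - hWt (s + d))
     = ∑ x : ι → ZMod 2, chi R (∑ i, d i * x i) * (chi R (∑ i, s i * x i) * (-(I * y)) ^ hWt x) := by
    intro d _
    have := expand_term (-(I * y)) (s + d)
    rw [sub_neg_eq_add, ← sub_eq_add_neg] at this
    rw [this]
    apply Finset.sum_congr rfl
    intro x _
    simp only [Pi.add_apply, add_mul, Finset.sum_add_distrib]
    rw [chi_add]; ring
  rw [Finset.sum_congr rfl h1, Finset.sum_comm, Finset.mul_sum]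
  simp_rw [← Finset.sum_mul]
  refine Eq.trans ?_ (Finset.sum_subset (Finset.subset_univ (cw D)) ?_)
  · apply Finset.sum_congr rfl
    intro x hx
    rw [mem_cw] at hx
    have h2 : ∑ d ∈ cw D, chi R (∑ i, d i * x i) = ((cw D).card : R) := by
      have h1 : ∀ d ∈ cw D, chi R (∑ i, d i * x i) = 1 := by
        intro d hd
        rw [mem_cw] at hd
        rw [(mem_iff hD d).mp hd x hx]; simp [chi]
      rw [Finset.sum_congr rfl h1]; simp
    rw [h2, hs x hx]
    congr 1
    have h3 := sd_even hD hx
    have h4 : hWt x = 2 * (hWt x / 2) := by omega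
    set t := hWt x / 2 with ht
    rw [h4, pow_mul, pow_mul]
    have h5 : (-(I * y)) ^ 2 = -1 * y ^ 2 := by linear_combination y ^ 2 * hI
    rw [h5, mul_pow]
    have h6 : chi R (t : ZMod 2) = (-1) ^ t := by
      rcases Nat.mod_two_eq_zero_or_one t with h | h
      · have : (t : ZMod 2) = 0 := by rw [ZMod.natCast_eq_zero_iff]; omega
        rw [this, Even.neg_one_pow (Nat.even_iff.mpr h)]; simp [chi]
      · have : (t : ZMod 2) = 1 := by
          rw [← Nat.cast_one, ZMod.natCast_eq_natCast_iff']; omega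
        rw [this, Odd.neg_one_pow (Nat.odd_iff.mpr h)]; simp [chi]
    rw [h6, ← mul_assoc, ← mul_pow]; simp
  · intro x _ hx
    rw [mem_cw] at hx
    rw [char_sum_zero hD hx, zero_mul]

end poisson

lemma cw_pos (D : Submodule (ZMod 2) (ι → ZMod 2)) : 0 < (cw D).card :=
  Finset.card_pos.mpr ⟨0, (mem_cw D 0).mpr D.zero_mem⟩

/-- shadow weights -/
lemma good_mod {D : Submodule (ZMod 2) (ι → ZMod 2)} (hD : SelfDual2 D)
    {s : ι → ZMod 2} (hs : Good D s) (k : ℕ) (hn : Fintype.card ι = 24 * k + 22) : hWt s % 4 = 3 := by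
  have h := poisson (R := ℂ) Complex.I 1 Complex.I_mul_I hD hs
  have hterm : ∀ d ∈ cw D, (1 + Complex.I * 1) ^ hWt (s + d) * (1 - Complex.I * 1) ^ (Fintype.card ι - hWt (s + d))
      = (-2 * Complex.I) ^ (12 * k + 11) * Complex.I ^ (hWt s % 4) := by
    intro d hd
    rw [← good_wt hD hs ((mem_cw D d).mp hd), ← Complex.I_pow_eq_pow_mod]
    have e1 : (1 + Complex.I * 1) = Complex.I * (1 - Complex.I) := by
      linear_combination Complex.I_sq
    have e2 : (1 - Complex.I) ^ 2 = -2 * Complex.I := by linear_combination Complex.I_sq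
    have e3 := hWt_le (s + d)
    rw [e1, mul_one, mul_pow, mul_assoc, ← pow_add, Nat.add_sub_cancel' e3, hn,
      show 24 * k + 22 = 2 * (12 * k + 11) by ring, pow_mul, e2, mul_comm]
  rw [Finset.sum_congr rfl hterm] at h
  simp only [one_pow, Finset.sum_const, nsmul_eq_mul, mul_one] at h
  have hc : ((cw D).card : ℂ) ≠ 0 := by exact_mod_cast (cw_pos D).ne'
  have h2 := mul_left_cancel₀ hc h
  have e4 : (-2 * Complex.I) ^ (12 * k + 11) = (2 ^ (12 * k + 11) : ℝ) * Complex.I := by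
    have : Complex.I ^ (12 * k + 11) = - Complex.I := by
      rw [Complex.I_pow_eq_pow_mod, show (12 * k + 11) % 4 = 3 by omega, Complex.I_pow_three]
    rw [mul_pow, this, show (-2 : ℂ) = (-1) * 2 by norm_num, mul_pow,
      Odd.neg_one_pow (by rw [Nat.odd_iff]; omega)]
    push_cast; ring
  rw [e4] at h2
  have hp : (0:ℝ) < 2 ^ (12 * k + 11) := by positivity
  have hlt : hWt s % 4 < 4 := Nat.mod_lt _ (by norm_num)
  have hcr : (0:ℝ) < (cw D).card := by exact_mod_cast cw_pos D
  generalize hWt s % 4 = r at *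
  generalize (2 ^ (12 * k + 11) : ℝ) = A at *
  interval_cases r
  · have := congrArg Complex.re h2
    simp at this
    exact absurd this (Finset.card_pos.mp (cw_pos D)).ne_empty
  · have := congrArg Complex.re h2
    simp at this
    linarith
  · have := congrArg Complex.re h2
    simp [Complex.I_sq] at this
    exact absurd this (Finset.card_pos.mp (cw_pos D)).ne_empty
  · rfl

lemma singly {D : Submodule (ZMod 2) (ι → ZMod 2)} (hD : SelfDual2 D)
    (k : ℕ) (hn : Fintype.card ι = 24 * k + 22) : SinglyEven (D : Set (ι → ZMod 2)) := by
  by_contra h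
  unfold SinglyEven at h
  push Not at h
  have hg : Good D (0 : ι → ZMod 2) := by
    intro c hc
    obtain ⟨t, ht⟩ := h c hc
    have : ((hWt c / 2 : ℕ) : ZMod 2) = 0 := by
      rw [ZMod.natCast_eq_zero_iff]; omega
    rw [this]; simp
  have := good_mod hD hg k hn
  rw [hWt_zero] at this
  omega

lemma shadow_iff {D : Submodule (ZMod 2) (ι → ZMod 2)} (hD : SelfDual2 D)
    {s : ι → ZMod 2} (hs : Good D s) (hS : SinglyEven (D : Set (ι → ZMod 2))) (x : ι → ZMod 2) :
    x ∈ shadow (D : Set (ι → ZMod 2)) ↔ s + x ∈ D := by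
  have two : ∀ a : ZMod 2, a = 0 ∨ a = 1 := by decide
  have hodd : ∀ c ∈ D, ¬ 4 ∣ hWt c → ∑ i, s i * c i = 1 := by
    intro c hc h4
    rw [hs c hc, ← Nat.cast_one, ZMod.natCast_eq_natCast_iff']
    have := sd_even hD hc
    omega
  have hev : ∀ c ∈ D, 4 ∣ hWt c → ∑ i, s i * c i = 0 := by
    intro c hc h4
    rw [hs c hc, ZMod.natCast_eq_zero_iff]
    omega
  have hadd : ∀ c : ι → ZMod 2, ∑ i, (s + x) i * c i = ∑ i, s i * c i + ∑ i, x i * c i := by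
    intro c
    simp only [Pi.add_apply, add_mul, Finset.sum_add_distrib]
  constructor
  · rintro ⟨h1, h2⟩
    have h2' : x ∉ D := h2
    rw [mem_iff hD] at h2'
    push Not at h2'
    obtain ⟨c1, hc1, hx1⟩ := h2'
    rw [mem_iff hD]
    intro c hc
    rw [hadd]
    by_cases h4 : 4 ∣ hWt c
    · rw [hev c hc h4, h1 c ⟨hc, h4⟩, add_zero]
    · rw [hodd c hc h4]
      have h41 : ¬ 4 ∣ hWt c1 := fun h => hx1 (h1 c1 ⟨hc1, h⟩)
      have h5 : ∑ i, s i * (c + c1) i = 0 := by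
        simp only [Pi.add_apply, mul_add, Finset.sum_add_distrib]
        rw [hodd c hc h4, hodd c1 hc1 h41]; decide
      have hcc : c + c1 ∈ D := D.add_mem hc hc1
      have h6 : 4 ∣ hWt (c + c1) := by
        by_contra h
        rw [hodd _ hcc h] at h5
        exact absurd h5 (by decide)
      have h7 := h1 (c + c1) ⟨hcc, h6⟩
      simp only [Pi.add_apply, mul_add, Finset.sum_add_distrib] at h7
      rcases two (∑ i, x i * c1 i) with h | h
      · exact absurd h hx1
      · rw [h] at h7; rw [add_comm]; exact h7
  · intro h
    have h' := (mem_iff hD _).mp h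
    refine ⟨?_, ?_⟩
    · rintro c ⟨hc, h4⟩
      have := h' c hc
      rw [hadd, hev c hc h4, zero_add] at this
      exact this
    · intro hx
      obtain ⟨c, hc, h4⟩ := hS
      have h5 := h' c hc
      rw [hadd, hodd c hc h4, (mem_iff hD x).mp hx c hc] at h5
      exact absurd h5 (by decide)

/-! ### The quaternary code -/

lemma res_wt (x : ι → ZMod 4) (h : ∑ i, x i * x i = 0) : 4 ∣ hWt (res2 x) := by
  rw [← ZMod.natCast_eq_zero_iff, hWt_eq_sum, ← h]
  push_cast
  apply Finset.sum_congr rfl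
  intro i _
  unfold res2
  generalize x i = a
  revert a; decide

/-- twice the lift -/
def dbl (v : ι → ZMod 2) : ι → ZMod 4 := fun i => 2 * ((v i).val : ZMod 4)

lemma leeWt_dbl (v : ι → ZMod 2) : leeWt (dbl v) = 2 * hWt v := by
  rw [hWt_eq_sum, Finset.mul_sum]
  unfold leeWt dbl
  apply Finset.sum_congr rfl
  intro i _
  generalize v i = a
  revert a; decide

lemma dbl_ne (v : ι → ZMod 2) (hv : v ≠ 0) : dbl v ≠ 0 := by
  intro h
  apply hv
  funext i
  have := congrFun h i
  unfold dbl at this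
  simp only [Pi.zero_apply] at *
  revert this
  generalize v i = a
  revert a; decide

lemma dbl_mem {C : Submodule (ZMod 4) (ι → ZMod 4)} (hC : SelfDualZ4 C) (v : ι → ZMod 2)
    (hv : v ∈ dual2 (residue (C : Set (ι → ZMod 4)))) : dbl v ∈ C := by
  have : dbl v ∈ (C : Set (ι → ZMod 4)) := by
    rw [hC]
    intro y hy
    have h1 := hv (res2 y) ⟨y, hy, rfl⟩
    have h2 : ∑ i, dbl v i * y i = 2 * (((∑ i, (v i * res2 y i).val : ℕ)) : ZMod 4) := by
      push_cast
      rw [Finset.mul_sum]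
      apply Finset.sum_congr rfl
      intro i _
      unfold dbl res2
      generalize v i = a
      generalize y i = b
      revert a b; decide
    have h3 : (∑ i, (v i * res2 y i).val) % 2 = 0 := by
      apply even_of_dvd
      rw [cast_val]; exact h1
    rw [h2]
    obtain ⟨t, ht⟩ : ∃ t, ∑ i, (v i * res2 y i).val = 2 * t :=
      ⟨(∑ i, (v i * res2 y i).val) / 2, by omega⟩
    rw [ht]
    push_cast
    have : (2 * 2 : ZMod 4) = 0 := by decide
    rw [← mul_assoc, this, zero_mul]
  exact this

lemma wt_bound {C : Submodule (ZMod 4) (ι → ZMod 4)} (hC : SelfDualZ4 C) {k : ℕ}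
    (hlee : minLee (C : Set (ι → ZMod 4)) = 8 * k + 8) (v : ι → ZMod 2) (hv0 : v ≠ 0)
    (hv : v ∈ dual2 (residue (C : Set (ι → ZMod 4)))) : 4 * k + 4 ≤ hWt v := by
  have h1 : minLee (C : Set (ι → ZMod 4)) ≤ 2 * hWt v := by
    unfold minLee
    apply Nat.sInf_le
    exact ⟨dbl v, dbl_mem hC v hv, dbl_ne v hv0, leeWt_dbl v⟩
  omega

lemma minHam_eq (S : Set (ι → ZMod 2)) (m : ℕ) (x : ι → ZMod 2) (hx : x ∈ S) (hx0 : x ≠ 0) (hm : hWt x = m)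
    (h : ∀ y ∈ S, y ≠ 0 → m ≤ hWt y) : minHam S = m := by
  unfold minHam
  apply le_antisymm
  · exact Nat.sInf_le ⟨x, hx, hx0, hm⟩
  · refine le_csInf (Set.nonempty_of_mem (x := m) ⟨x, hx, hx0, hm⟩) ?_
    rintro d ⟨y, hy, hy0, rfl⟩
    exact h y hy hy0

/-- Combination of the Poisson formula with the residue computation. -/
lemma main_vanish {D : Submodule (ZMod 2) (ι → ZMod 2)} (hD : SelfDual2 D) {s : ι → ZMod 2} (hs : Good D s)
    (N j M : ℕ) (hn : Fintype.card ι = 2 * N) (hN : 0 < N) (hNj : N + 1 = 4 * (j + 1) + M)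
    (e l : PowerSeries ℂ) (he : (1 - PowerSeries.X^2) * e = 1) (hl : (1 + PowerSeries.X^2) * l = 1)
    (hwt : ∀ d ∈ D, ∃ m, hWt (s + d) + 4 * j = N + 4 * m ∧ m ≤ 2 * j)
    (hmin : ∀ c ∈ D, c ≠ 0 → 2 * j + 3 ≤ hWt c) :
    PowerSeries.coeff (2 * j) (l ^ M * e ^ (2 * j + 2)) = 0 := by
  have hI : (PowerSeries.C Complex.I : PowerSeries ℂ) * PowerSeries.C Complex.I = -1 := by
    rw [← map_mul, Complex.I_mul_I]; simp
  have h := poisson (R := PowerSeries ℂ) (PowerSeries.C Complex.I) PowerSeries.X hI hD hs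
  rw [hn, ← map_natCast (PowerSeries.C (R := ℂ))] at h
  refine coeff_vanish e l _ he hl N j M hN hNj (cw D) (fun d => hWt (s + d)) _ ?_ h ?_ ?_
  · exact_mod_cast (cw_pos D).ne'
  · intro d hd
    obtain ⟨m, h1, h2⟩ := hwt d ((mem_cw D d).mp hd)
    exact ⟨m, h1, h2, by have := hWt_le (s + d); omega⟩
  · classical
    rw [← Finset.add_sum_erase (cw D) _ ((mem_cw D 0).mpr D.zero_mem), hWt_zero, pow_zero, add_sub_cancel_left]
    apply Finset.dvd_sum
    intro c hc
    rw [Finset.mem_erase, mem_cw] at hc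
    exact pow_dvd_pow _ (hmin c hc.2 hc.1)

end
end Z4P
set_option maxHeartbeats 2000000 in
open Z4Note in
lemma Z4P.general {ι : Type*} [Fintype ι] (k : ℕ) (hcard : Fintype.card ι = 24 * k + 22)
    (C : Submodule (ZMod 4) (ι → ZMod 4)) (hsd : SelfDualZ4 C)
    (hlee : minLee (C : Set (ι → ZMod 4)) = 8 * k + 8)
    (D : Submodule (ZMod 2) (ι → ZMod 2)) (hD : SelfDual2 D)
    (hres : residue (C : Set (ι → ZMod 4)) ⊆ (D : Set (ι → ZMod 2))) :
    SExtremal D ∧ (minHam (D : Set (ι → ZMod 2)) = 4 * k + 4 ∨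
         minHam (D : Set (ι → ZMod 2)) = 4 * k + 6) := by
  have hS := Z4P.singly hD k hcard
  obtain ⟨s, hs⟩ := Z4P.exists_good hD
  have hsh := Z4P.shadow_iff hD hs hS
  have hmod : ∀ d ∈ D, hWt (s + d) % 4 = 3 := fun d hd => by
    rw [Z4P.good_wt hD hs hd, Z4P.good_mod hD hs k hcard]
  have hres4 : residue (C : Set (ι → ZMod 4)) ⊆ evenSubcode (D : Set _) := by
    rintro _ ⟨x, hx, rfl⟩
    refine ⟨hres ⟨x, hx, rfl⟩, Z4P.res_wt x ?_⟩
    have hx' := hx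
    rw [hsd] at hx'
    exact hx' x hx
  -- lower bounds
  have hDmin : ∀ c ∈ D, c ≠ 0 → 4 * k + 4 ≤ hWt c := by
    intro c hc h0
    refine Z4P.wt_bound hsd hlee c h0 ?_
    intro y hy
    exact (Z4P.mem_iff hD c).mp hc y (hres hy)
  have hsd_ne : ∀ d ∈ D, s + d ≠ 0 := by
    intro d hd h
    have := hmod d hd
    rw [h, Z4P.hWt_zero] at this
    omega
  have hss : ∀ d : ι → ZMod 2, s + (s + d) = d := by
    intro d; rw [← add_assoc, Z4P.two_eq, zero_add]
  have hSmin : ∀ d ∈ D, 4 * k + 7 ≤ hWt (s + d) := by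
    intro d hd
    have h1 : s + d ∈ shadow (D : Set (ι → ZMod 2)) := by
      rw [hsh, hss]; exact hd
    have h2 := Z4P.wt_bound hsd hlee (s + d) (hsd_ne d hd) (fun y hy => h1.1 y (hres4 hy))
    have := hmod d hd
    omega
  have hone := Z4P.one_mem hD
  have hcompl : ∀ d ∈ D, hWt (s + (d + fun _ => 1)) + hWt (s + d) = 24 * k + 22 := by
    intro d _
    rw [← add_assoc, Z4P.hWt_compl, hcard]
  obtain ⟨e, he⟩ : ∃ e : PowerSeries ℂ, (1 - PowerSeries.X ^ 2) * e = 1 :=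
    ⟨_, PowerSeries.mul_inv_cancel _ (by simp)⟩
  obtain ⟨l, hl⟩ : ∃ l : PowerSeries ℂ, (1 + PowerSeries.X ^ 2) * l = 1 :=
    ⟨_, PowerSeries.mul_inv_cancel _ (by simp)⟩
  -- upper bound for the shadow
  have hSup : ∃ d ∈ D, hWt (s + d) = 4 * k + 7 := by
    by_contra hcon
    push Not at hcon
    have hS11 : ∀ d ∈ D, 4 * k + 11 ≤ hWt (s + d) := by
      intro d hd
      have h1 := hSmin d hd
      have h2 := hcon d hd
      have h3 := hmod d hd
      omega
    have hv := Z4P.main_vanish hD hs (12 * k + 11) (2 * k) (4 * k + 8) (by omega) (by omega) (by omega)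
      e l he hl (by
        intro d hd
        have h1 := hS11 d hd
        have h2 := hS11 _ (D.add_mem hd hone)
        have h3 := hcompl d hd
        have h4 := hmod d hd
        exact ⟨(hWt (s + d) + 4 * (2 * k) - (12 * k + 11)) / 4, by omega, by omega⟩)
      (by
        intro c hc h0
        have := hDmin c hc h0
        omega)
    have hne := Z4P.coeff_ne_aux e l he hl (-1) (by norm_num) (4 * k + 7) k
    apply hne
    have heq : l ^ (4 * k + 8) * e ^ (2 * (2 * k) + 2)
        = (l * e) ^ (4 * k + 7 + 1) * (1 + PowerSeries.C (-1) * PowerSeries.X ^ 2) ^ 6 := by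
      have h6 : ((1 - PowerSeries.X ^ 2) * e) ^ 6 = 1 := by rw [he, one_pow]
      have hC : (1 + PowerSeries.C (-1) * PowerSeries.X ^ 2 : PowerSeries ℂ) = 1 - PowerSeries.X ^ 2 := by
        simp [sub_eq_add_neg]
      rw [hC]
      linear_combination -(l ^ (4 * k + 8) * e ^ (4 * k + 2)) * h6
    rw [← heq, ← hv]
    congr 2
    ring
  -- upper bound for the code
  have hDup : ∃ c ∈ D, c ≠ 0 ∧ hWt c ≤ 4 * k + 6 := by
    by_contra hcon
    push Not at hcon
    have hv := Z4P.main_vanish hD hs (12 * k + 11) (2 * k + 2) (4 * k) (by omega) (by omega) (by omega)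
      e l he hl (by
        intro d hd
        have h1 := hSmin d hd
        have h2 := hSmin _ (D.add_mem hd hone)
        have h3 := hcompl d hd
        have h4 := hmod d hd
        exact ⟨(hWt (s + d) + 4 * (2 * k + 2) - (12 * k + 11)) / 4, by omega, by omega⟩)
      (by
        intro c hc h0
        have := hcon c hc h0
        have := Z4P.sd_even hD hc
        omega)
    have hne := Z4P.coeff_ne_aux e l he hl 1 (by norm_num) (4 * k + 5) (k + 1)
    apply hne
    have heq : l ^ (4 * k) * e ^ (2 * (2 * k + 2) + 2)
        = (l * e) ^ (4 * k + 5 + 1) * (1 + PowerSeries.C 1 * PowerSeries.X ^ 2) ^ 6 := by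
      have h6 : ((1 + PowerSeries.X ^ 2) * l) ^ 6 = 1 := by rw [hl, one_pow]
      rw [map_one, one_mul]
      linear_combination -(l ^ (4 * k) * e ^ (4 * k + 6)) * h6
    rw [← heq, ← hv]
    congr 2
    ring
  have hham : minHam (D : Set (ι → ZMod 2)) = 4 * k + 4 ∨
      minHam (D : Set (ι → ZMod 2)) = 4 * k + 6 := by
    by_cases h4 : ∃ c ∈ D, c ≠ 0 ∧ hWt c = 4 * k + 4
    · obtain ⟨c, hc, h0, hw⟩ := h4
      exact Or.inl (Z4P.minHam_eq _ _ c hc h0 hw hDmin)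
    · push Not at h4
      have h6 : ∀ c ∈ D, c ≠ 0 → 4 * k + 6 ≤ hWt c := by
        intro c hc h0
        have h1 := hDmin c hc h0
        have h2 := h4 c hc h0
        have h3 := Z4P.sd_even hD hc
        omega
      obtain ⟨c, hc, h0, hw⟩ := hDup
      exact Or.inr (Z4P.minHam_eq _ _ c hc h0 (le_antisymm hw (h6 c hc h0)) h6)
  have hshadow : minHam (shadow (D : Set (ι → ZMod 2))) = 4 * k + 7 := by
    obtain ⟨d, hd, hw⟩ := hSup
    refine Z4P.minHam_eq _ _ (s + d) ?_ (hsd_ne d hd) hw ?_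
    · rw [hsh, hss]; exact hd
    · intro y hy _
      rw [hsh] at hy
      have := hSmin _ hy
      rwa [hss] at this
  refine ⟨⟨hD, hS, ?_, ?_⟩, hham⟩
  · intro hcond
    rw [hcard] at hcond ⊢
    rw [hshadow]
    rcases hham with h | h
    · rw [h]; omega
    · exact absurd ⟨by omega, by rw [h]; omega⟩ hcond
  · rintro ⟨_, h⟩
    rw [hcard] at h ⊢
    rw [hshadow, h]
    omega

open Z4Note in
/-- length `24k+22`, minimum Lee weight `8k+8`: any binary self-dual code
containing the residue code is s-extremal with minimum weight `4k+4` or `4k+6`. -/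
theorem sextremal_of_residue_subset_length24k22
    (k : ℕ) (hk : 0 < k)
    (C : Submodule (ZMod 4) (Fin (24 * k + 22) → ZMod 4))
    (hsd : SelfDualZ4 C)
    (hlee : minLee (C : Set (Fin (24 * k + 22) → ZMod 4)) = 8 * k + 8) :
    ∀ D : Submodule (ZMod 2) (Fin (24 * k + 22) → ZMod 2),
      SelfDual2 D →
      residue (C : Set (Fin (24 * k + 22) → ZMod 4)) ⊆
        (D : Set (Fin (24 * k + 22) → ZMod 2)) →
      SExtremal D ∧
        (minHam (D : Set (Fin (24 * k + 22) → ZMod 2)) = 4 * k + 4 ∨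
         minHam (D : Set (Fin (24 * k + 22) → ZMod 2)) = 4 * k + 6) := by
  intro D hD hres
  exact Z4P.general k (Fintype.card_fin _) C hsd hlee D hD hres
end

section
/- Let k be a positive integer and let D be a binary singly even self-dual code of length 24k+8 with minimum Hamming weight 4k+4. Then the shadow of D contains a vector of Hamming weight at most 4k. -/
open Finset

namespace Z4Proof
open Z4Note Polynomial

variable {ι : Type*} [Fintype ι]

/-- Sign character of `ZMod 2`. -/
def sgn (a : ZMod 2) : ℚ := if a = 0 then 1 else -1

lemma sgn_add (a b : ZMod 2) : sgn (a + b) = sgn a * sgn b := by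
  have h : ∀ a : ZMod 2, a = 0 ∨ a = 1 := by decide
  have h2 : (1 : ZMod 2) + 1 = 0 := by decide
  rcases h a with rfl | rfl <;> rcases h b with rfl | rfl <;> simp [sgn, h2]

lemma sgn_sum (s : Finset ι) (f : ι → ZMod 2) : sgn (∑ i ∈ s, f i) = ∏ i ∈ s, sgn (f i) := by
  classical
  induction s using Finset.induction_on with
  | empty => simp [sgn]
  | insert a s ha ih => rw [Finset.sum_insert ha, Finset.prod_insert ha, sgn_add, ih]

lemma pow_hWt (y : ℚ) (v : ι → ZMod 2) : y ^ hWt v = ∏ i, (if v i = 0 then 1 else y) := by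
  unfold hWt
  rw [Finset.prod_ite]
  simp

lemma hWt_le (v : ι → ZMod 2) : hWt v ≤ Fintype.card ι := by
  unfold hWt; exact Finset.card_le_univ _

open Classical in
lemma fourier (y : ℚ) (c : ι → ZMod 2) :
    ∑ v : ι → ZMod 2, y ^ hWt v * sgn (∑ i, v i * c i)
      = (1 - y) ^ hWt c * (1 + y) ^ (Fintype.card ι - hWt c) := by
  classical
  have h1 : ∀ v : ι → ZMod 2, y ^ hWt v * sgn (∑ i, v i * c i)
      = ∏ i, ((if v i = 0 then 1 else y) * sgn (v i * c i)) := by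
    intro v
    rw [pow_hWt, sgn_sum, Finset.prod_mul_distrib]
  simp_rw [h1]
  have h2 := Finset.prod_univ_sum (fun _ : ι => (Finset.univ : Finset (ZMod 2)))
    (fun i a => (if a = 0 then 1 else y) * sgn (a * c i))
  rw [Fintype.piFinset_univ] at h2
  rw [← h2]
  have h3 : ∀ i, ∑ a : ZMod 2, (if a = 0 then 1 else y) * sgn (a * c i)
      = if c i ≠ 0 then 1 - y else 1 + y := by
    intro i
    have : (Finset.univ : Finset (ZMod 2)) = {0, 1} := by decide
    rw [this, Finset.sum_pair (by decide)]
    by_cases h : c i = 0 <;> simp [sgn, h]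
    ring
  simp_rw [h3]
  rw [Finset.prod_ite, Finset.prod_const, Finset.prod_const]
  have h4 : (Finset.univ.filter fun i => ¬ (c i ≠ 0)).card = Fintype.card ι - hWt c := by
    unfold hWt
    rw [← Finset.compl_filter, Finset.card_compl]
  rw [h4]; rfl

open Classical in
lemma charsum (D : Submodule (ZMod 2) (ι → ZMod 2)) (χ : (ι → ZMod 2) → ℚ)
    (hχ : ∀ a ∈ D, ∀ b ∈ D, χ (a + b) = χ a * χ b) :
    ∑ c : D, χ c = if (∀ c ∈ D, χ c = 1) then (Fintype.card D : ℚ) else 0 := by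
  split_ifs with h
  · calc ∑ c : D, χ c = ∑ c : D, (1 : ℚ) := Finset.sum_congr rfl fun c _ => h _ c.2
      _ = _ := by simp
  · push Not at h
    obtain ⟨c0, hc0, hne⟩ := h
    have h1 : ∑ c : D, χ c = χ c0 * ∑ c : D, χ c := by
      rw [Finset.mul_sum]
      rw [← Equiv.sum_comp (Equiv.addLeft (⟨c0, hc0⟩ : D))]
      refine Finset.sum_congr rfl fun c _ => ?_
      simpa using hχ c0 hc0 c c.2
    have h2 : (χ c0 - 1) * ∑ c : D, χ c = 0 := by linarith
    rcases mul_eq_zero.1 h2 with h | h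
    · exact absurd (by linarith) hne
    · exact h

open Classical in
/-- Twisted MacWilliams identity. -/
lemma macw (D : Submodule (ZMod 2) (ι → ZMod 2)) (ε : (ι → ZMod 2) → ℚ)
    (hε : ∀ a ∈ D, ∀ b ∈ D, ε (a + b) = ε a * ε b) (y : ℚ) :
    ∑ c : D, ε c * ((1 - y) ^ hWt (c : ι → ZMod 2) *
        (1 + y) ^ (Fintype.card ι - hWt (c : ι → ZMod 2)))
      = (Fintype.card D : ℚ) * ∑ v ∈ Finset.univ.filter
          (fun v : ι → ZMod 2 => ∀ c ∈ D, ε c * sgn (∑ i, v i * c i) = 1), y ^ hWt v := by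
  simp_rw [← fourier, Finset.mul_sum]
  rw [Finset.sum_comm, Finset.sum_filter]
  refine Finset.sum_congr rfl fun v _ => ?_
  have := charsum D (fun c => ε c * sgn (∑ i, v i * c i)) (by
    intro a ha b hb
    simp only [Pi.add_apply, mul_add, Finset.sum_add_distrib]
    rw [sgn_add, hε a ha b hb]; ring)
  calc _ = y ^ hWt v * ∑ c : D, ε c * sgn (∑ i, v i * (c : ι → ZMod 2) i) := by
        rw [Finset.mul_sum]; refine Finset.sum_congr rfl fun c _ => by ring
    _ = _ := by
        rw [this]; split_ifs <;> ring

lemma inner_eq (a b : ι → ZMod 2) :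
    ∑ i, a i * b i = ((Finset.univ.filter fun i => a i ≠ 0 ∧ b i ≠ 0).card : ZMod 2) := by
  rw [← Finset.sum_boole]
  refine Finset.sum_congr rfl fun i _ => ?_
  generalize a i = x; generalize b i = y
  revert x y; decide

lemma hWt_add (a b : ι → ZMod 2) :
    hWt (a + b) + 2 * (Finset.univ.filter fun i => a i ≠ 0 ∧ b i ≠ 0).card = hWt a + hWt b := by
  unfold hWt
  simp only [Finset.card_filter, Finset.mul_sum, ← Finset.sum_add_distrib, Pi.add_apply]
  refine Finset.sum_congr rfl fun i _ => ?_
  generalize a i = x; generalize b i = y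
  revert x y; decide

lemma mem_iff {D : Submodule (ZMod 2) (ι → ZMod 2)} (hsd : SelfDual2 D) (v : ι → ZMod 2) :
    v ∈ D ↔ ∀ c ∈ D, ∑ i, v i * c i = 0 := by
  have : v ∈ (D : Set (ι → ZMod 2)) ↔ v ∈ dual2 (D : Set (ι → ZMod 2)) := by
    rw [← hsd]
  simpa [dual2] using this

lemma even_inter {D : Submodule (ZMod 2) (ι → ZMod 2)} (hsd : SelfDual2 D) {a b : ι → ZMod 2}
    (ha : a ∈ D) (hb : b ∈ D) :
    2 ∣ (Finset.univ.filter fun i => a i ≠ 0 ∧ b i ≠ 0).card := by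
  have := (mem_iff hsd a).1 ha b hb
  rw [inner_eq] at this
  exact (ZMod.natCast_eq_zero_iff _ _).1 this

lemma even_hWt {D : Submodule (ZMod 2) (ι → ZMod 2)} (hsd : SelfDual2 D) {a : ι → ZMod 2}
    (ha : a ∈ D) : 2 ∣ hWt a := by
  have := even_inter hsd ha ha
  simpa [hWt] using this

lemma one_mem {D : Submodule (ZMod 2) (ι → ZMod 2)} (hsd : SelfDual2 D) :
    (fun _ => 1 : ι → ZMod 2) ∈ D := by
  rw [mem_iff hsd]
  intro c hc
  rw [inner_eq]
  have := even_hWt hsd hc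
  rw [ZMod.natCast_eq_zero_iff]
  simpa [hWt] using this

lemma hWt_compl (c : ι → ZMod 2) :
    hWt ((fun _ => 1 : ι → ZMod 2) + c) = Fintype.card ι - hWt c := by
  have h := hWt_add (fun _ => 1 : ι → ZMod 2) c
  have h1 : (Finset.univ.filter fun i => (1 : ZMod 2) ≠ 0 ∧ c i ≠ 0).card = hWt c := by
    simp [hWt]
  have h2 : hWt (fun _ => 1 : ι → ZMod 2) = Fintype.card ι := by
    simp [hWt]
  have := hWt_le c
  omega

/-- Sign given by half of the weight. -/
def eps (c : ι → ZMod 2) : ℚ := (-1) ^ (hWt c / 2)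

lemma eps_add {D : Submodule (ZMod 2) (ι → ZMod 2)} (hsd : SelfDual2 D) :
    ∀ a ∈ D, ∀ b ∈ D, eps (a + b) = eps a * eps b := by
  intro a ha b hb
  obtain ⟨s, hs⟩ := even_hWt hsd ha
  obtain ⟨t, ht⟩ := even_hWt hsd hb
  obtain ⟨u, hu⟩ := even_inter hsd ha hb
  have := hWt_add a b
  unfold eps
  have h1 : hWt (a + b) / 2 + 2 * u = hWt a / 2 + hWt b / 2 := by omega
  rw [← pow_add, ← h1, pow_add, pow_mul (-1 : ℚ) 2 u]
  simp

lemma sgn_eq_one {a : ZMod 2} : sgn a = 1 ↔ a = 0 := by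
  unfold sgn
  split_ifs with h <;> simp [h]
  norm_num

lemma shadow_mem {D : Submodule (ZMod 2) (ι → ZMod 2)} (hsd : SelfDual2 D)
    (hse : SinglyEven (D : Set (ι → ZMod 2))) (v : ι → ZMod 2)
    (hv : ∀ c ∈ D, eps c * sgn (∑ i, v i * c i) = 1) :
    v ∈ shadow (D : Set (ι → ZMod 2)) := by
  refine ⟨?_, ?_⟩
  · rintro c ⟨hc, h4⟩
    obtain ⟨t, ht⟩ := h4
    have := hv c hc
    rw [eps, show hWt c / 2 = 2 * t by omega, pow_mul] at this
    rw [← sgn_eq_one]; simpa using this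
  · intro hvD
    obtain ⟨c, hc, h4⟩ := hse
    have h1 := hv c hc
    rw [(mem_iff hsd v).1 hvD c hc] at h1
    obtain ⟨t, ht⟩ := even_hWt hsd hc
    have h2 : Odd (hWt c / 2) := by
      rw [Nat.odd_iff]; omega
    rw [eps, h2.neg_one_pow] at h1
    norm_num [sgn] at h1

open Classical in
/-- Weight enumerator in `X = y ^ 2`. -/
noncomputable def P (D : Submodule (ZMod 2) (ι → ZMod 2)) : ℚ[X] :=
  ∑ c : D, X ^ (hWt (c : ι → ZMod 2) / 2)

open Classical in
lemma P_pal {D : Submodule (ZMod 2) (ι → ZMod 2)} (hsd : SelfDual2 D) (m : ℕ)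
    (hm : Fintype.card ι = 2 * m) (i : ℕ) (hi : i ≤ m) :
    (P D).coeff i = (P D).coeff (m - i) := by
  unfold P
  rw [Polynomial.finsetSum_coeff, Polynomial.finsetSum_coeff]
  rw [← Equiv.sum_comp (Equiv.addLeft (⟨_, one_mem hsd⟩ : D))]
  refine Finset.sum_congr rfl fun c _ => ?_
  simp only [Equiv.coe_addLeft, Submodule.coe_add, hWt_compl, Polynomial.coeff_X_pow]
  have h1 := hWt_le (c : ι → ZMod 2)
  obtain ⟨t, ht⟩ := even_hWt hsd c.2
  congr 1
  simp only [eq_iff_iff]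
  omega

open Classical in
lemma P_deg {D : Submodule (ZMod 2) (ι → ZMod 2)} (m : ℕ)
    (hm : Fintype.card ι = 2 * m) : (P D).natDegree ≤ m := by
  unfold P
  refine Polynomial.natDegree_sum_le_of_forall_le _ _ fun c _ => ?_
  rw [Polynomial.natDegree_X_pow]
  have h1 := hWt_le (c : ι → ZMod 2)
  omega

open Classical in
lemma P_eval {D : Submodule (ZMod 2) (ι → ZMod 2)} (hsd : SelfDual2 D) (m : ℕ)
    (hm : Fintype.card ι = 2 * m) (s y : ℚ) (hy : 1 + y ≠ 0) :
    (1 + y) ^ (2 * m) * (P D).eval (s * ((1 - y) / (1 + y)) ^ 2) =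
    ∑ c : D, s ^ (hWt (c : ι → ZMod 2) / 2) * ((1 - y) ^ hWt (c : ι → ZMod 2) *
        (1 + y) ^ (Fintype.card ι - hWt (c : ι → ZMod 2))) := by
  classical
  unfold P
  rw [Polynomial.eval_finsetSum, Finset.mul_sum]
  refine Finset.sum_congr rfl fun c _ => ?_
  have h1 := hWt_le (c : ι → ZMod 2)
  obtain ⟨t, ht⟩ := even_hWt hsd c.2
  rw [hm, ht]
  have h2 : 2 * m = 2 * t + (2 * m - 2 * t) := by omega
  rw [Nat.mul_div_cancel_left _ (by norm_num : 0 < 2), h2, pow_add]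
  simp only [Polynomial.eval_pow, Polynomial.eval_X]
  rw [show 2 * t + (2 * m - 2 * t) - 2 * t = 2 * m - 2 * t by omega, mul_pow, ← pow_mul, div_pow]
  field_simp

open Classical in
lemma card_D {D : Submodule (ZMod 2) (ι → ZMod 2)} (hsd : SelfDual2 D) (m : ℕ)
    (hm : Fintype.card ι = 2 * m) : (Fintype.card D : ℚ) = 2 ^ m := by
  have h := macw D (fun _ => 1) (by simp) 1
  have h1 : ∀ v : ι → ZMod 2, (∀ c ∈ D, (1 : ℚ) * sgn (∑ i, v i * c i) = 1) ↔ v ∈ D := by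
    intro v
    rw [mem_iff hsd]
    simp [sgn_eq_one]
  simp_rw [h1] at h
  rw [Finset.sum_eq_single (0 : D)] at h
  · have h0 : hWt (0 : ι → ZMod 2) = 0 := by simp [hWt]
    simp only [Submodule.coe_zero, h0, hm] at h
    have h2 : (Finset.univ.filter (fun v : ι → ZMod 2 => v ∈ D)).card = Fintype.card D := by
      rw [Fintype.card_subtype]
    simp only [one_pow, Finset.sum_const, nsmul_eq_mul, mul_one, h2] at h
    have h3 : ((2 : ℚ) ^ m) ^ 2 = (Fintype.card D : ℚ) ^ 2 := by
      rw [← pow_mul]; norm_num at h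
      rw [mul_comm m 2]; rw [h]; ring
    have h4 := (pow_left_inj₀ (by positivity) (by positivity) (by norm_num)).1 h3
    exact h4.symm
  · intro c _ hc
    have : hWt (c : ι → ZMod 2) ≠ 0 := by
      intro h0
      apply hc
      ext i
      unfold hWt at h0
      rw [Finset.card_eq_zero, Finset.filter_eq_empty_iff] at h0
      simpa using h0 (Finset.mem_univ i)
    simp [this]
  · simp

lemma P_macw {D : Submodule (ZMod 2) (ι → ZMod 2)} (hsd : SelfDual2 D) (m : ℕ)
    (hm : Fintype.card ι = 2 * m) (y : ℚ) (hy : 1 + y ≠ 0) :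
    (1 + y) ^ (2 * m) * (P D).eval (((1 - y) / (1 + y)) ^ 2) = 2 ^ m * (P D).eval (y ^ 2) := by
  classical
  have h0 := P_eval hsd m hm 1 y hy
  rw [one_mul] at h0
  rw [h0, ← card_D hsd m hm]
  have h := macw D (fun _ => 1) (by simp) y
  have h1 : ∀ v : ι → ZMod 2, (∀ c ∈ D, (1 : ℚ) * sgn (∑ i, v i * c i) = 1) ↔ v ∈ D := by
    intro v
    rw [mem_iff hsd]
    simp [sgn_eq_one]
  simp_rw [h1] at h
  simp only [one_pow]
  convert h using 2
  unfold P
  rw [Polynomial.eval_finsetSum]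
  rw [← Finset.sum_subtype_eq_sum_filter]
  have : (Finset.subtype (fun v => v ∈ D) Finset.univ) = (Finset.univ : Finset D) := by
    ext; simp
  rw [this]
  refine Finset.sum_congr rfl fun c _ => ?_
  obtain ⟨t, ht⟩ := even_hWt hsd c.2
  rw [ht]
  simp [← pow_mul]

/-- Shadow enumerator: a polynomial with vanishing low coefficients. -/
lemma P_shadow {D : Submodule (ZMod 2) (ι → ZMod 2)} (hsd : SelfDual2 D)
    (hse : SinglyEven (D : Set (ι → ZMod 2))) (m : ℕ) (hm : Fintype.card ι = 2 * m) (w : ℕ)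
    (hw : ∀ v ∈ shadow (D : Set (ι → ZMod 2)), w < hWt v) :
    ∃ S : ℚ[X], (∀ i ≤ w, S.coeff i = 0) ∧ ∀ y : ℚ, 1 + y ≠ 0 →
      (1 + y) ^ (2 * m) * (P D).eval (-((1 - y) / (1 + y)) ^ 2) = S.eval y := by
  classical
  refine ⟨C (Fintype.card D : ℚ) * ∑ v ∈ Finset.univ.filter
          (fun v : ι → ZMod 2 => ∀ c ∈ D, eps c * sgn (∑ i, v i * c i) = 1), X ^ hWt v, ?_, ?_⟩
  · intro i hi
    rw [Polynomial.coeff_C_mul, Polynomial.finsetSum_coeff, Finset.sum_eq_zero, mul_zero]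
    intro v hv
    rw [Polynomial.coeff_X_pow, if_neg]
    have := hw v (shadow_mem hsd hse v (Finset.mem_filter.1 hv).2)
    omega
  · intro y hy
    have h0 := P_eval hsd m hm (-1) y hy
    rw [neg_one_mul] at h0
    rw [h0]
    have h := macw D eps (eps_add hsd) y
    unfold eps at h ⊢
    rw [Polynomial.eval_mul, Polynomial.eval_C, Polynomial.eval_finsetSum]
    simp only [Polynomial.eval_pow, Polynomial.eval_X]
    rw [← h]

lemma P_coeff {D : Submodule (ZMod 2) (ι → ZMod 2)} (d : ℕ)
    (hd : ∀ x ∈ D, x ≠ 0 → 2 * d ≤ hWt x) (i : ℕ) (hi : i < d) :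
    (P D).coeff i = if i = 0 then 1 else 0 := by
  classical
  unfold P
  rw [Polynomial.finsetSum_coeff, Finset.sum_eq_single (0 : D)]
  · simp [hWt, Polynomial.coeff_one]
  · intro c _ hc
    have := hd c c.2 (by simpa using hc)
    rw [Polynomial.coeff_X_pow, if_neg]
    omega
  · simp

lemma pal_decomp : ∀ (l : ℕ) (Q : ℚ[X]), Q.natDegree ≤ 2 * l →
    (∀ i ≤ 2 * l, Q.coeff i = Q.coeff (2 * l - i)) →
    ∃ R : ℚ[X], R.natDegree ≤ l ∧ ∀ z : ℚ, 1 + z ≠ 0 →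
      Q.eval z = (1 + z) ^ (2 * l) * R.eval (z / (1 + z) ^ 2) := by
  intro l
  induction l with
  | zero =>
    intro Q hQ _
    refine ⟨Q, hQ, fun z _ => ?_⟩
    rw [Polynomial.eq_C_of_natDegree_le_zero hQ]; simp
  | succ l ih =>
    intro Q hQ hpal
    set T : ℚ[X] := Q - C (Q.coeff 0) * (1 + X) ^ (2 * (l + 1)) with hT
    have hTc : ∀ i, T.coeff i = Q.coeff i - Q.coeff 0 * ((2 * (l + 1)).choose i : ℚ) := by
      intro i
      rw [hT, Polynomial.coeff_sub, Polynomial.coeff_C_mul, Polynomial.coeff_one_add_X_pow]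
    have hT0 : T.coeff 0 = 0 := by rw [hTc]; simp
    have hXT : T = X * T.divX := by
      conv_lhs => rw [← Polynomial.X_mul_divX_add T, hT0]
      simp
    have hTp : ∀ i ≤ 2 * (l + 1), T.coeff i = T.coeff (2 * (l + 1) - i) := by
      intro i hi
      rw [hTc, hTc, hpal i hi, Nat.choose_symm hi]
    have hTbig : ∀ i, 2 * (l + 1) ≤ i → T.coeff i = 0 := by
      intro i hi
      rcases hi.eq_or_lt with h | h
      · rw [← h, hTp _ le_rfl]; simpa using hT0
      · rw [hTc, Polynomial.coeff_eq_zero_of_natDegree_lt (by omega), Nat.choose_eq_zero_of_lt h]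
        simp
    obtain ⟨R, hR, hRe⟩ := ih T.divX (by
      rw [Polynomial.natDegree_le_iff_coeff_eq_zero]
      intro i hi
      rw [Polynomial.coeff_divX]
      exact hTbig _ (by omega)) (by
      intro i hi
      rw [Polynomial.coeff_divX, Polynomial.coeff_divX, hTp _ (by omega)]
      congr 1; omega)
    refine ⟨C (Q.coeff 0) + X * R, ?_, ?_⟩
    · refine (Polynomial.natDegree_add_le _ _).trans (max_le (by simp) ?_)
      refine Polynomial.natDegree_mul_le.trans ?_
      have := Polynomial.natDegree_X_le (R := ℚ)
      omega
    · intro z hz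
      have h1 : Q = C (Q.coeff 0) * (1 + X) ^ (2 * (l + 1)) + X * T.divX := by
        rw [← hXT, hT]; ring
      rw [h1]
      simp only [Polynomial.eval_add, Polynomial.eval_mul, Polynomial.eval_C, Polynomial.eval_pow,
        Polynomial.eval_one, Polynomial.eval_X, hRe z hz]
      have h2 : (C (Q.coeff 0) * (1 + X) ^ (2 * (l + 1)) + X * T.divX).coeff 0 = Q.coeff 0 := by
        rw [← h1]
      rw [h2]
      rw [show 2 * (l + 1) = 2 * l + 2 by ring, pow_add]
      field_simp

lemma sym_decomp : ∀ (e : ℕ) (R : ℚ[X]), R.degree < (2 * e : ℕ) →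
    (∀ t, R.eval (1 / 4 - t) = R.eval t) →
    ∃ F : ℚ[X], F.degree < e ∧ ∀ t, R.eval t = F.eval (t * (1 - 4 * t)) := by
  intro e
  induction e with
  | zero =>
    intro R hR _
    refine ⟨0, by simp, ?_⟩
    have : R = 0 := by
      rw [← Polynomial.degree_eq_bot]
      simpa [Polynomial.degree_eq_bot] using hR
    simp [this]
  | succ e ih =>
    intro R hR hs
    set T : ℚ[X] := R - C (R.eval 0) with hT
    have hTdeg : T.degree < (2 * (e + 1) : ℕ) := by
      refine (Polynomial.degree_sub_le _ _).trans_lt (max_lt hR ?_)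
      refine Polynomial.degree_C_le.trans_lt ?_
      exact_mod_cast (by omega : 0 < 2 * (e + 1))
    have hT0 : T.IsRoot 0 := by simp [hT]
    obtain ⟨U, hU⟩ := Polynomial.dvd_iff_isRoot.2 hT0
    have hT1 : T.eval (1 / 4) = 0 := by
      have := hs 0
      simp only [sub_zero] at this
      simp [hT, ← this]
    have hU1 : U.IsRoot (1 / 4) := by
      rw [hU] at hT1
      simpa using hT1
    obtain ⟨V, hV⟩ := Polynomial.dvd_iff_isRoot.2 hU1
    have hTV : T = (X - C 0) * ((X - C (1 / 4)) * V) := by rw [hU, hV]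
    have hTe : ∀ t, R.eval t = R.eval 0 + t * ((t - 1 / 4) * V.eval t) := by
      intro t
      have : R = C (R.eval 0) + T := by rw [hT]; ring
      conv_lhs => rw [this, hTV]
      simp
    have hVs : ∀ t, V.eval (1 / 4 - t) = V.eval t := by
      have : (X * (X - C (1 / 4))) * V.comp (C (1 / 4) - X) = (X * (X - C (1 / 4))) * V := by
        refine Polynomial.funext fun t => ?_
        have h1 := hs t
        rw [hTe (1 / 4 - t), hTe t] at h1
        simp only [Polynomial.eval_mul, Polynomial.eval_comp, Polynomial.eval_sub,
          Polynomial.eval_X, Polynomial.eval_C]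
        linarith
      have h2 := mul_left_cancel₀ (mul_ne_zero Polynomial.X_ne_zero
        (Polynomial.X_sub_C_ne_zero _)) this
      intro t
      conv_rhs => rw [← h2]
      simp [Polynomial.eval_comp]
    obtain ⟨F, hF, hFe⟩ := ih V (by
      rw [hTV, Polynomial.degree_mul, Polynomial.degree_mul, Polynomial.degree_X_sub_C,
        Polynomial.degree_X_sub_C] at hTdeg
      by_cases hV0 : V = 0
      · rw [hV0, Polynomial.degree_zero]; exact WithBot.bot_lt_coe _
      · rw [Polynomial.degree_eq_natDegree hV0] at hTdeg ⊢
        norm_cast at hTdeg ⊢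
        omega) hVs
    refine ⟨C (R.eval 0) + C (-1 / 4) * (X * F), ?_, ?_⟩
    · refine (Polynomial.degree_add_le _ _).trans_lt (max_lt ?_ ?_)
      · refine Polynomial.degree_C_le.trans_lt ?_
        exact_mod_cast (by omega : 0 < e + 1)
      · rw [Polynomial.degree_C_mul (by norm_num), Polynomial.degree_mul, Polynomial.degree_X]
        by_cases hF0 : F = 0
        · simp [hF0]
        · rw [Polynomial.degree_eq_natDegree hF0] at hF ⊢
          norm_cast at hF ⊢
          omega
    · intro t
      rw [hTe t]
      simp only [Polynomial.eval_add, Polynomial.eval_mul, Polynomial.eval_C, Polynomial.eval_X,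
        hFe t]
      ring

/-- Gleason-type structure theorem. -/
lemma gleason (k : ℕ) (Q : ℚ[X]) (hdeg : Q.natDegree ≤ 12 * k + 4)
    (hpal : ∀ i ≤ 12 * k + 4, Q.coeff i = Q.coeff (12 * k + 4 - i))
    (hmac : ∀ y : ℚ, 1 + y ≠ 0 → (1 + y) ^ (2 * (12 * k + 4)) *
      Q.eval (((1 - y) / (1 + y)) ^ 2) = 2 ^ (12 * k + 4) * Q.eval (y ^ 2)) :
    ∃ F : ℚ[X], F.natDegree ≤ 3 * k + 1 ∧
      Q = ∑ j ∈ Finset.range (F.natDegree + 1),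
        C (F.coeff j) * (X ^ j * (1 - X) ^ (2 * j) * (1 + X) ^ (12 * k + 4 - 4 * j)) := by
  obtain ⟨R, hR, hRe⟩ := pal_decomp (6 * k + 2) Q (by omega) (by
    intro i hi
    rw [hpal i (by omega)]
    congr 1; omega)
  have hm : 2 * (6 * k + 2) = 12 * k + 4 := by ring
  rw [hm] at hRe
  have hsym : R.comp (C (1 / 4) - X) = R := by
    refine Polynomial.eq_of_infinite_eval_eq _ _ ?_
    refine Set.infinite_of_injective_forall_mem
      (f := fun n : ℕ => (((n : ℚ) + 2) / (1 + ((n : ℚ) + 2) ^ 2)) ^ 2) ?_ ?_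
    · intro a b hab
      simp only at hab
      have h1 := (pow_left_inj₀ (by positivity) (by positivity) (by norm_num)).1 hab
      rw [div_eq_div_iff (by positivity) (by positivity)] at h1
      have h2 : ((a : ℚ) - b) * (((a : ℚ) + 2) * ((b : ℚ) + 2) - 1) = 0 := by
        linarith
      rcases mul_eq_zero.1 h2 with h | h
      · have : (a : ℚ) = b := by linarith
        exact_mod_cast this
      · exfalso
        have ha : (0 : ℚ) ≤ a := by positivity
        have hb : (0 : ℚ) ≤ b := by positivity
        nlinarith [mul_nonneg ha hb]
    · intro n
      set y : ℚ := (n : ℚ) + 2 with hy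
      have hy0 : 0 < y := by positivity
      have h1 := hmac y (by positivity)
      rw [hRe (y ^ 2) (by positivity), hRe _ (by positivity)] at h1
      have h2 : 1 + ((1 - y) / (1 + y)) ^ 2 = 2 * (1 + y ^ 2) / (1 + y) ^ 2 := by
        field_simp; ring
      have h3 : ((1 - y) / (1 + y)) ^ 2 / (2 * (1 + y ^ 2) / (1 + y) ^ 2) ^ 2
          = 1 / 4 - (y / (1 + y ^ 2)) ^ 2 := by
        field_simp; ring
      rw [h2, h3, div_pow, ← pow_mul, mul_pow] at h1
      have h4 : y ^ 2 / (1 + y ^ 2) ^ 2 = (y / (1 + y ^ 2)) ^ 2 := by rw [div_pow]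
      rw [h4] at h1
      simp only [Set.mem_ofPred_eq, Polynomial.eval_comp, Polynomial.eval_sub, Polynomial.eval_X,
        Polynomial.eval_C]
      have h5 : (1 + y) ^ (2 * (12 * k + 4)) ≠ 0 := by positivity
      have h6 : (2 : ℚ) ^ (12 * k + 4) * (1 + y ^ 2) ^ (12 * k + 4) ≠ 0 := by positivity
      refine mul_left_cancel₀ h6 ?_
      rw [← mul_assoc] at h1
      rw [mul_div_cancel₀ _ h5] at h1
      rw [h1]; ring
  obtain ⟨F, hF, hFe⟩ := sym_decomp (3 * k + 2) R (by
    refine Polynomial.degree_le_natDegree.trans_lt ?_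
    exact_mod_cast (by omega : R.natDegree < 2 * (3 * k + 2))) (by
    intro t
    conv_rhs => rw [← hsym]
    simp [Polynomial.eval_comp])
  have hFn : F.natDegree ≤ 3 * k + 1 := by
    by_cases hF0 : F = 0
    · simp [hF0]
    · rw [Polynomial.degree_eq_natDegree hF0] at hF
      norm_cast at hF
      omega
  refine ⟨F, hFn, ?_⟩
  refine Polynomial.eq_of_infinite_eval_eq _ _ ?_
  refine Set.infinite_of_injective_forall_mem (f := fun n : ℕ => (n : ℚ)) Nat.cast_injective ?_
  intro n
  have hz : (0 : ℚ) < 1 + n := by positivity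
  generalize (n : ℚ) = z at hz
  simp only [Set.mem_ofPred_eq]
  rw [hRe z hz.ne', hFe, Polynomial.eval_eq_sum_range, Polynomial.eval_finsetSum, Finset.mul_sum]
  refine Finset.sum_congr rfl fun j hj => ?_
  have hj' : 4 * j ≤ 12 * k + 4 := by
    have := Finset.mem_range.1 hj
    omega
  simp only [Polynomial.eval_mul, Polynomial.eval_C, Polynomial.eval_X, Polynomial.eval_pow,
    Polynomial.eval_sub, Polynomial.eval_add, Polynomial.eval_one]
  have h1 : z / (1 + z) ^ 2 * (1 - 4 * (z / (1 + z) ^ 2)) = z * (1 - z) ^ 2 / (1 + z) ^ 4 := by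
    field_simp; ring
  rw [h1, div_pow, mul_pow, ← pow_mul, ← pow_mul]
  obtain ⟨r, hr⟩ := Nat.exists_eq_add_of_le hj'
  rw [hr, Nat.add_sub_cancel_left, pow_add]
  field_simp

/-- The shadow condition bounds the degree. -/
lemma deg_bound (k : ℕ) (Q F S : ℚ[X]) (hF : F.natDegree ≤ 3 * k + 1)
    (hQ : Q = ∑ j ∈ Finset.range (F.natDegree + 1),
        C (F.coeff j) * (X ^ j * (1 - X) ^ (2 * j) * (1 + X) ^ (12 * k + 4 - 4 * j)))
    (hS0 : ∀ i ≤ 4 * k, S.coeff i = 0)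
    (hS : ∀ y : ℚ, 1 + y ≠ 0 →
      (1 + y) ^ (2 * (12 * k + 4)) * Q.eval (-((1 - y) / (1 + y)) ^ 2) = S.eval y) :
    F.natDegree ≤ 2 * k := by
  have hSe : S = ∑ j ∈ Finset.range (F.natDegree + 1),
      C (F.coeff j * (-4) ^ j * 4 ^ (12 * k + 4 - 4 * j)) *
        ((1 - X ^ 4) ^ (2 * j) * X ^ (12 * k + 4 - 4 * j)) := by
    refine Polynomial.eq_of_infinite_eval_eq _ _ ?_
    refine Set.infinite_of_injective_forall_mem (f := fun n : ℕ => (n : ℚ)) Nat.cast_injective ?_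
    intro n
    have hz : (0 : ℚ) < 1 + n := by positivity
    generalize (n : ℚ) = y at hz
    simp only [Set.mem_ofPred_eq]
    rw [← hS y hz.ne', hQ, Polynomial.eval_finsetSum, Polynomial.eval_finsetSum, Finset.mul_sum]
    refine Finset.sum_congr rfl fun j hj => ?_
    have hj' : 4 * j ≤ 12 * k + 4 := by
      have := Finset.mem_range.1 hj
      omega
    simp only [Polynomial.eval_mul, Polynomial.eval_C, Polynomial.eval_X, Polynomial.eval_pow,
      Polynomial.eval_sub, Polynomial.eval_add, Polynomial.eval_one]
    have h1 : 1 - -((1 - y) / (1 + y)) ^ 2 = 2 * (1 + y ^ 2) / (1 + y) ^ 2 := by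
      field_simp; ring
    have h2 : 1 + -((1 - y) / (1 + y)) ^ 2 = 4 * y / (1 + y) ^ 2 := by
      field_simp; ring
    obtain ⟨r, hr⟩ := Nat.exists_eq_add_of_le hj'
    rw [h1, h2, hr, Nat.add_sub_cancel_left]
    have h3 : (1 + y) ^ (2 * (4 * j + r)) = ((1 + y) ^ 8) ^ j * ((1 + y) ^ 2) ^ r := by
      rw [← pow_mul, ← pow_mul, ← pow_add]; congr 1; ring
    rw [h3, pow_mul (2 * (1 + y ^ 2) / (1 + y) ^ 2) 2 j, pow_mul (1 - y ^ 4) 2 j]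
    have h4 : (1 + y) ^ 8 * (-((1 - y) / (1 + y)) ^ 2) * (2 * (1 + y ^ 2) / (1 + y) ^ 2) ^ 2
        = (-4) * (1 - y ^ 4) ^ 2 := by
      field_simp; ring
    have h5 : (1 + y) ^ 2 * (4 * y / (1 + y) ^ 2) = 4 * y := by
      field_simp
    calc _ = F.coeff j * ((1 + y) ^ 8 * (-((1 - y) / (1 + y)) ^ 2) *
            (2 * (1 + y ^ 2) / (1 + y) ^ 2) ^ 2) ^ j *
            ((1 + y) ^ 2 * (4 * y / (1 + y) ^ 2)) ^ r := by
          rw [mul_pow _ _ j, mul_pow _ _ j, mul_pow _ _ r]; ring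
      _ = _ := by
          rw [h4, h5, mul_pow, mul_pow]; ring
  by_contra hcon
  push Not at hcon
  have hF0 : F ≠ 0 := by rintro rfl; simp at hcon
  have hc := hS0 (12 * k + 4 - 4 * F.natDegree) (by omega)
  rw [hSe, Polynomial.finsetSum_coeff, Finset.sum_eq_single F.natDegree] at hc
  · rw [Polynomial.coeff_C_mul, Polynomial.coeff_mul_X_pow', if_pos le_rfl, Nat.sub_self,
      Polynomial.coeff_zero_eq_eval_zero] at hc
    simp [hF0] at hc
  · intro j hj hne
    have := Finset.mem_range.1 hj
    rw [Polynomial.coeff_C_mul, Polynomial.coeff_mul_X_pow', if_neg (by omega), mul_zero]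
  · simp

open PowerSeries in
lemma deriv_pow_mul (f : ℚ⟦X⟧) (n : ℕ) :
    derivative ℚ (f ^ n) * f = (n : ℚ⟦X⟧) * f ^ n * derivative ℚ f := by
  rw [Derivation.leibniz_pow]
  cases n with
  | zero => simp
  | succ n => simp only [Nat.add_sub_cancel, nsmul_eq_mul, smul_eq_mul]; ring

/-- Power series of `1 / (1 - X ^ 2)`. -/
noncomputable def E : PowerSeries ℚ := PowerSeries.mk fun n => if Even n then 1 else 0

open PowerSeries in
lemma E_mul : E * (1 - PowerSeries.X ^ 2) = 1 := by
  ext n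
  rw [mul_sub, mul_one, map_sub, PowerSeries.coeff_mul_X_pow', PowerSeries.coeff_one]
  simp only [E, PowerSeries.coeff_mk]
  rcases n with _ | _ | n
  · simp
  · simp
  · simp [Nat.even_add]

lemma E_pow_nonneg (r n : ℕ) : 0 ≤ PowerSeries.coeff n (E ^ r) := by
  induction r generalizing n with
  | zero => rw [pow_zero, PowerSeries.coeff_one]; split_ifs <;> norm_num
  | succ r ih =>
    rw [pow_succ, PowerSeries.coeff_mul]
    refine Finset.sum_nonneg fun p _ => mul_nonneg (ih _) ?_
    simp only [E, PowerSeries.coeff_mk]; split_ifs <;> norm_num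

lemma E_pow_pos (r n : ℕ) (hr : 0 < r) : 0 < PowerSeries.coeff (2 * n) (E ^ r) := by
  induction r with
  | zero => omega
  | succ r ih =>
    rcases Nat.eq_zero_or_pos r with h | h
    · subst h; simp [E]
    · rw [pow_succ, PowerSeries.coeff_mul]
      refine Finset.sum_pos' (fun p _ => mul_nonneg (E_pow_nonneg _ _) ?_)
        ⟨(2 * n, 0), by simp, mul_pos (ih h) (by simp [E])⟩
      simp only [E, PowerSeries.coeff_mk]; split_ifs <;> norm_num

/-- The residue functional. -/
noncomputable def Lf (k : ℕ) (f : PowerSeries ℚ) : PowerSeries ℚ :=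
  (PowerSeries.derivative ℚ f * (1 + PowerSeries.X) - ((12 * k + 4 : ℕ) : PowerSeries ℚ) * f)
    * (1 + PowerSeries.X) * E ^ (4 * k + 2)

lemma Lf_term (k j : ℕ) (hj : j ≤ 2 * k) :
    PowerSeries.coeff (2 * k) (Lf k (PowerSeries.X ^ j * (1 - PowerSeries.X) ^ (2 * j) *
      (1 + PowerSeries.X) ^ (12 * k + 4 - 4 * j))) = 0 := by
  set x : PowerSeries ℚ := PowerSeries.X with hx
  have hdx : PowerSeries.derivative ℚ x = 1 := by rw [hx]; simp
  obtain ⟨s, hs⟩ := Nat.exists_eq_add_of_le (show 4 * j ≤ 12 * k + 4 by omega)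
  rw [hs, Nat.add_sub_cancel_left]
  set Q : PowerSeries ℚ := (1 - x) ^ (2 * j) * (1 + x) ^ s with hQ
  set Ψ : PowerSeries ℚ := (1 + x) ^ 2 * E ^ (4 * k + 2) * Q with hΨ
  obtain ⟨r, hr⟩ := Nat.exists_eq_add_of_le (show j ≤ 2 * k + 1 by omega)
  have hunit : (1 - x ^ 2) ≠ 0 := by
    intro h
    have := E_mul
    rw [← hx, h, mul_zero] at this
    exact zero_ne_one this
  have hsr : s = 2 * j + 6 * r - 2 := by omega
  have hsq : (s : PowerSeries ℚ) = 2 * j + 6 * r - 2 := by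
    have : s + 2 = 2 * j + 6 * r := by omega
    have : (s : PowerSeries ℚ) + 2 = 2 * j + 6 * r := by
      have h := congrArg (Nat.cast : ℕ → PowerSeries ℚ) this
      push_cast at h; exact h
    linear_combination this
  have hkq : (2 : PowerSeries ℚ) * k + 1 = j + r := by
    have h := congrArg (Nat.cast : ℕ → PowerSeries ℚ) hr
    push_cast at h; exact h
  have hd1 : PowerSeries.derivative ℚ (1 - x) = -1 := by simp [hdx]
  have hd2 : PowerSeries.derivative ℚ (1 + x) = 1 := by simp [hdx]
  have e1 := deriv_pow_mul (1 - x) (2 * j)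
  have e2 := deriv_pow_mul (1 + x) s
  rw [hd1] at e1
  rw [hd2] at e2
  have hQd : PowerSeries.derivative ℚ Q * (1 - x ^ 2)
      = Q * (-2 * j * (1 + x) + s * (1 - x)) := by
    rw [hQ, Derivation.leibniz]
    simp only [smul_eq_mul]
    push_cast at e1 e2
    linear_combination (1 - x) * (1 - x) ^ (2 * j) * e2 + (1 + x) * (1 + x) ^ s * e1
  have e3 := deriv_pow_mul E (4 * k + 2)
  have hEd : PowerSeries.derivative ℚ E * (1 - x ^ 2) = 2 * x * E := by
    have := congrArg (PowerSeries.derivative ℚ) E_mul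
    rw [Derivation.leibniz, ← hx] at this
    simp only [smul_eq_mul, map_sub, Derivation.leibniz_pow, hdx] at this
    simp at this
    linear_combination this
  have hE0 : E ≠ 0 := by
    intro h
    have := E_mul
    rw [h, zero_mul] at this
    exact zero_ne_one this
  have hENd : PowerSeries.derivative ℚ (E ^ (4 * k + 2)) * (1 - x ^ 2)
      = ((4 * k + 2 : ℕ) : PowerSeries ℚ) * 2 * x * E ^ (4 * k + 2) := by
    refine mul_left_cancel₀ hE0 ?_
    linear_combination (1 - x ^ 2) * e3 + ((4 * k + 2 : ℕ) : PowerSeries ℚ) * E ^ (4 * k + 2) * hEd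
  have e4 := deriv_pow_mul (1 + x) 2
  have hΨd : PowerSeries.derivative ℚ Ψ * (1 - x ^ 2) = Ψ * (6 * r - 2 * r * x) := by
    have h2 : PowerSeries.derivative ℚ ((1 + x) ^ 2) = 2 * (1 + x) := by
      rw [Derivation.leibniz_pow, hd2]; simp; ring
    rw [hΨ, Derivation.leibniz _ ((1 + x) ^ 2 * E ^ (4 * k + 2)) Q,
      Derivation.leibniz _ ((1 + x) ^ 2) (E ^ (4 * k + 2)), h2]
    simp only [smul_eq_mul]
    push_cast at hENd
    linear_combination ((1 + x) ^ 2 * E ^ (4 * k + 2)) * hQd + Q * (1 + x) ^ 2 * hENd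
      + Q * (1 + x) ^ 2 * E ^ (4 * k + 2) * (1 - x) * hsq
      + 4 * x * Q * (1 + x) ^ 2 * E ^ (4 * k + 2) * hkq
  rcases Nat.eq_zero_or_pos j with h0 | h0
  · subst h0
    have hs' : s = 12 * k + 4 := by omega
    have : Lf k (x ^ 0 * (1 - x) ^ (2 * 0) * (1 + x) ^ s) = 0 := by
      unfold Lf
      rw [← hx, ← hs']
      simp only [pow_zero, mul_zero, one_mul]
      rw [e2]; ring
    rw [this]; simp
  · obtain ⟨i, rfl⟩ : ∃ i, j = i + 1 := ⟨j - 1, by omega⟩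
    have hr0 : r ≠ 0 := by omega
    have key : (r : PowerSeries ℚ) * Lf k (x ^ (i + 1) * (1 - x) ^ (2 * (i + 1)) * (1 + x) ^ s)
        = x ^ i * (((i + 1 : ℕ) : PowerSeries ℚ) *
            ((r : PowerSeries ℚ) * Ψ - x * PowerSeries.derivative ℚ Ψ)) := by
      refine mul_left_cancel₀ hunit ?_
      unfold Lf
      rw [← hx, mul_assoc (x ^ (i + 1)), ← hQ, Derivation.leibniz, Derivation.leibniz_pow, hdx]
      simp only [smul_eq_mul, nsmul_eq_mul, Nat.add_sub_cancel, mul_one]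
      have hmq : ((12 * k + 4 : ℕ) : PowerSeries ℚ) = 6 * (i + 1 + r) - 2 := by
        push_cast at hkq ⊢
        linear_combination 6 * hkq
      rw [hmq]
      push_cast at hQd hΨd hsq ⊢
      rw [hsq] at hQd
      linear_combination (r * x ^ (i + 1) * (1 + x) ^ 2 * E ^ (4 * k + 2)) * hQd
        + (x ^ (i + 1) * (i + 1)) * hΨd
        + 0 * hΨ
    have hc := congrArg (PowerSeries.coeff (2 * k)) key
    have hC : ∀ (a n : ℕ) (f : PowerSeries ℚ),
        PowerSeries.coeff n ((a : PowerSeries ℚ) * f) = a * PowerSeries.coeff n f := by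
      intro a n f
      rw [← nsmul_eq_mul, map_nsmul, nsmul_eq_mul]
    rw [show 2 * k = r + i by omega, hC, hx, PowerSeries.coeff_X_pow_mul, hC, map_sub, hC] at hc
    obtain ⟨q, rfl⟩ : ∃ q, r = q + 1 := ⟨r - 1, by omega⟩
    rw [PowerSeries.coeff_succ_X_mul, PowerSeries.coeff_derivative] at hc
    have h1 : ((q + 1 : ℕ) : ℚ) ≠ 0 := by positivity
    have h2 : ((q + 1 : ℕ) : ℚ) * PowerSeries.coeff (q + 1) Ψ
        - PowerSeries.coeff (q + 1) Ψ * ((q : ℚ) + 1) = 0 := by push_cast; ring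
    rw [h2, mul_zero] at hc
    rw [show 2 * k = q + 1 + i by omega]
    exact (mul_eq_zero.1 hc).resolve_left h1

lemma final (k : ℕ) (Q F : ℚ[X]) (hF : F.natDegree ≤ 2 * k)
    (hQ : Q = ∑ j ∈ Finset.range (F.natDegree + 1),
        C (F.coeff j) * (X ^ j * (1 - X) ^ (2 * j) * (1 + X) ^ (12 * k + 4 - 4 * j)))
    (hc : ∀ i < 2 * k + 2, Q.coeff i = if i = 0 then 1 else 0) : False := by
  have hadd : ∀ f g : PowerSeries ℚ, Lf k (f + g) = Lf k f + Lf k g := by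
    intro f g; unfold Lf; rw [map_add]; ring
  have hCm : ∀ (a : ℚ) (f : PowerSeries ℚ), Lf k (PowerSeries.C a * f) = PowerSeries.C a * Lf k f := by
    intro a f; unfold Lf
    rw [← PowerSeries.smul_eq_C_mul, Derivation.map_smul, PowerSeries.smul_eq_C_mul,
      PowerSeries.smul_eq_C_mul]
    ring
  have h1 : PowerSeries.coeff (2 * k) (Lf k (Q : PowerSeries ℚ)) = 0 := by
    rw [hQ]
    have hl : ∀ s : Finset ℕ, s ⊆ Finset.range (F.natDegree + 1) →
        PowerSeries.coeff (2 * k) (Lf k ((∑ j ∈ s, C (F.coeff j) *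
          (X ^ j * (1 - X) ^ (2 * j) * (1 + X) ^ (12 * k + 4 - 4 * j)) : ℚ[X]) :
            PowerSeries ℚ)) = 0 := by
      intro s
      induction s using Finset.induction_on with
      | empty => intro _; simp [Lf]
      | insert a s ha ih =>
        intro hsub
        rw [Finset.sum_insert ha, Polynomial.coe_add, hadd, map_add,
          ih ((Finset.subset_insert _ _).trans hsub), add_zero, Polynomial.coe_mul,
          Polynomial.coe_C, hCm, PowerSeries.coeff_C_mul]
        have hat := Finset.mem_range.1 (hsub (Finset.mem_insert_self a s))
        have := Lf_term k a (by omega)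
        push_cast
        rw [this, mul_zero]
    exact hl _ (Finset.Subset.refl _)
  obtain ⟨T, hT⟩ : ∃ T : PowerSeries ℚ, (Q : PowerSeries ℚ) = 1 + PowerSeries.X ^ (2 * k + 2) * T := by
    have : (PowerSeries.X : PowerSeries ℚ) ^ (2 * k + 2) ∣ (Q : PowerSeries ℚ) - 1 := by
      rw [PowerSeries.X_pow_dvd_iff]
      intro i hi
      rw [map_sub, Polynomial.coeff_coe, hc i hi, PowerSeries.coeff_one, sub_self]
    obtain ⟨T, hT⟩ := this
    exact ⟨T, by rw [← hT]; ring⟩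
  rw [hT, hadd, map_add] at h1
  have h2 : PowerSeries.coeff (2 * k) (Lf k (PowerSeries.X ^ (2 * k + 2) * T)) = 0 := by
    have : PowerSeries.X ^ (2 * k + 1) ∣ Lf k (PowerSeries.X ^ (2 * k + 2) * T) := by
      unfold Lf
      rw [Derivation.leibniz, Derivation.leibniz_pow]
      simp only [smul_eq_mul, nsmul_eq_mul, PowerSeries.derivative_X, mul_one]
      rw [show 2 * k + 2 - 1 = 2 * k + 1 by omega]
      refine Dvd.intro ((PowerSeries.X * PowerSeries.derivative ℚ T * (1 + PowerSeries.X)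
        + T * ((2 * k + 2 : ℕ) : PowerSeries ℚ) * (1 + PowerSeries.X)
        - ((12 * k + 4 : ℕ) : PowerSeries ℚ) * PowerSeries.X * T) * (1 + PowerSeries.X)
          * E ^ (4 * k + 2)) ?_
      ring
    exact PowerSeries.X_pow_dvd_iff.1 this _ (by omega)
  rw [h2, add_zero] at h1
  have h3 : Lf k 1 = PowerSeries.C (-(12 * k + 4 : ℚ)) *
      (E ^ (4 * k + 2) + PowerSeries.X * E ^ (4 * k + 2)) := by
    unfold Lf
    rw [show PowerSeries.C (-(12 * k + 4 : ℚ)) = -((12 * k + 4 : ℕ) : PowerSeries ℚ) by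
      rw [← map_natCast PowerSeries.C, ← map_neg]; push_cast; rfl]
    rw [Derivation.map_one_eq_zero]
    ring
  rw [h3, PowerSeries.coeff_C_mul, map_add] at h1
  have h4 := E_pow_pos (4 * k + 2) k (by omega)
  have h5 : 0 ≤ PowerSeries.coeff (2 * k) (PowerSeries.X * E ^ (4 * k + 2)) := by
    cases h : 2 * k with
    | zero => simp
    | succ n => rw [PowerSeries.coeff_succ_X_mul]; exact E_pow_nonneg _ _
  have h6 : (0 : ℚ) < 12 * k + 4 := by positivity
  nlinarith [mul_pos h6 (add_pos_of_pos_of_nonneg h4 h5)]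

end Z4Proof

open Z4Note in
/-- the shadow of a binary singly even self-dual code of length `24k+8`
with minimum weight `4k+4` contains a vector of weight at most `4k`. -/
theorem shadow_small_weight_length24k8
    (k : ℕ) (hk : 0 < k)
    (D : Submodule (ZMod 2) (Fin (24 * k + 8) → ZMod 2))
    (hsd : SelfDual2 D)
    (hse : SinglyEven (D : Set (Fin (24 * k + 8) → ZMod 2)))
    (hmin : minHam (D : Set (Fin (24 * k + 8) → ZMod 2)) = 4 * k + 4) :
    ∃ v ∈ shadow (D : Set (Fin (24 * k + 8) → ZMod 2)), hWt v ≤ 4 * k := by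
  by_contra hcon
  push Not at hcon
  have hm : Fintype.card (Fin (24 * k + 8)) = 2 * (12 * k + 4) := by
    rw [Fintype.card_fin]; ring
  obtain ⟨F, hF, hQ⟩ := Z4Proof.gleason k (Z4Proof.P D) (Z4Proof.P_deg _ hm)
    (Z4Proof.P_pal hsd _ hm) (Z4Proof.P_macw hsd _ hm)
  obtain ⟨S, hS0, hS⟩ := Z4Proof.P_shadow hsd hse _ hm (4 * k) hcon
  have hF2 := Z4Proof.deg_bound k _ F S hF hQ hS0 hS
  refine Z4Proof.final k _ F hF2 hQ (Z4Proof.P_coeff (2 * k + 2) ?_)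
  intro x hx hx0
  have : minHam (D : Set (Fin (24 * k + 8) → ZMod 2)) ≤ hWt x := Nat.sInf_le ⟨x, hx, hx0, rfl⟩
  omega
end
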